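/- arXiv:1411.4796 — 3 statements merged into one kernel-verified Lean document; each statement's English description precedes it below -/
import Mathlib

section
/- It is undecidable whether Attacker has a winning strategy in the weighted Word Game with words over a binary free group alphabet: the predicate on encoded instances (Attacker's finite list of pairs (u_i, x_{u_i}) ∈ F₂ × ℤ, Defender's finite list of pairs (v_j, x_{v_j}) ∈ F₂ × ℤ, and an initial word w ∈ F₂, with free group elements encoded as reduced words over the generators and their inverses) asserting that Attacker has a winning strategy is not a computable predicate. -/
/-- The free group on two generators, identified with reduced words over the binary group
alphabet `{c, d, c̄, d̄}`. -/
abbrev F2 : Type := FreeGroup Bool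

/-- A word over the binary group alphabet: a letter is a generator (`Bool`) together with a
sign (`true` for the generator, `false` for its inverse). -/
abbrev BWord : Type := List (Bool × Bool)

/-- An encoded instance of the weighted Word Game: Attacker's finite list of words with
integer weights, Defender's finite list of words with integer weights, and the initial
word. -/
abbrev WWGInstance : Type := List (BWord × ℤ) × List (BWord × ℤ) × BWord

/-- The configuration (word, counter) after `k` rounds of the weighted Word Game, starting
from `(w0, 0)`, when Defender plays the sequence of moves `δ` and Attacker follows the
strategy `st` (a function of the finite history of Defender's choices so far). -/
def wwgPos (w0 : F2) (δ : ℕ → F2 × ℤ) (st : List (F2 × ℤ) → F2 × ℤ) : ℕ → F2 × ℤ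
  | 0 => (w0, 0)
  | k + 1 =>
    let p := wwgPos w0 δ st k
    let dm := δ k
    let am := st ((List.range (k + 1)).map δ)
    (p.1 * dm.1 * am.1, p.2 + dm.2 + am.2)

/-- Attacker has a winning strategy in the weighted Word Game with Attacker's weighted word
list `A`, Defender's weighted word list `D` and initial word `w0`: there is a strategy,
choosing a move from `A` for every finite history of Defender's moves, such that every
infinite play consistent with it reaches the configuration `(1, 0)` (empty word, zero
counter) after some Attacker move. -/
def WWGAttackerWins (A D : List (F2 × ℤ)) (w0 : F2) : Prop :=
  ∃ st : List (F2 × ℤ) → F2 × ℤ,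
    (∀ hist, (∀ x ∈ hist, x ∈ D) → st hist ∈ A) ∧
    ∀ δ : ℕ → F2 × ℤ, (∀ i, δ i ∈ D) → ∃ n, wwgPos w0 δ st (n + 1) = (1, 0)

/-!
The proof reduces the halting problem to the game through the chain Turing machine, cellular
automaton, pushdown machine with a counter, word game.

A Turing machine runs as a one-dimensional cellular automaton. To verify a claim about three
adjacent cells, Attacker moves back through time: Defender selects one of the three, Attacker
justifies its content by a claim about the three cells around it one step earlier, and the counter
follows the selected position. The stack is a clock that is popped at every step. Before the
verification Attacker chooses how long the machine runs, by growing the stack, and where it has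
halted, by moving the counter.

Such a play becomes a game in a free group, in which Defender picks one of three sets of moves.
A wrong move leaves a letter that can never be cancelled. This is where cancellation in free groups
matters: every later product of moves has nonpositive weight, and one that is trivial is empty.
Finally, Defender's pick is turned into a word by means of a fresh letter `z`: he plays `1`, `z` or
`z⁻¹`, and an answer that does not remove it can be punished in the next round. The resulting free
group of finite rank embeds into the free group on two generators.
-/

namespace WordGame

section ChoiceGame

variable {ι G H : Type*} [Group G] [Group H]

/-- Attacker wins the *choice game* of `M` from the configuration `(w, k)`: in every round Defender
picks an index `i` and Attacker answers with a weighted element of `M i`, until `(1, 0)` is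
reached. -/
inductive Winning (M : ι → Set (G × ℤ)) : G → ℤ → Prop
  | one : Winning M 1 0
  | round {w : G} {k : ℤ} (m : ι → G × ℤ) (mem : ∀ i, m i ∈ M i)
      (winning : ∀ i, Winning M (w * (m i).1) (k + (m i).2)) : Winning M w k

theorem Winning.of_forall_exists {M : ι → Set (G × ℤ)} {w : G} {k : ℤ}
    (h : ∀ i, ∃ m ∈ M i, Winning M (w * m.1) (k + m.2)) : Winning M w k := by
  choose m mem winning using h
  exact .round m mem winning

theorem Winning.map {M : ι → Set (G × ℤ)} {w : G} {k : ℤ} (φ : G →* H) (h : Winning M w k) :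
    Winning (fun i => Prod.map φ id '' M i) (φ w) k := by
  induction h with
  | one => exact φ.map_one ▸ .one
  | round m mem _ ih =>
    refine .of_forall_exists fun i => ⟨_, ⟨m i, mem i, rfl⟩, ?_⟩
    simpa only [Prod.map_fst, Prod.map_snd, id_eq, map_mul] using ih i

theorem Winning.of_map {M : ι → Set (G × ℤ)} {φ : G →* H} (hφ : Function.Injective φ) {w : G}
    {k : ℤ} (h : Winning (fun i => Prod.map φ id '' M i) (φ w) k) : Winning M w k := by
  generalize hv : φ w = v at h
  induction h generalizing w with
  | one => exact (map_eq_one_iff φ hφ).1 hv ▸ .one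
  | round m mem _ ih =>
    refine .of_forall_exists fun i => ?_
    obtain ⟨m', hm', hm⟩ := mem i
    refine ⟨m', hm', ?_⟩
    rw [show m'.2 = (m i).2 from congrArg Prod.snd hm]
    exact ih i (by rw [map_mul, hv, ← hm]; rfl)

theorem winning_map_iff {M : ι → Set (G × ℤ)} {φ : G →* H} (hφ : Function.Injective φ) {w : G}
    {k : ℤ} : Winning (fun i => Prod.map φ id '' M i) (φ w) k ↔ Winning M w k :=
  ⟨.of_map hφ, .map φ⟩

/-- The rounds of the weighted Word Game as moves of a choice game: Defender's word `d i` followed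
by one of Attacker's words. -/
def wordMoves (A : Set (G × ℤ)) (d : ι → G × ℤ) (i : ι) : Set (G × ℤ) :=
  (fun a => ((d i).1 * a.1, (d i).2 + a.2)) '' A

theorem wordMoves_image (φ : G →* H) (A : Set (G × ℤ)) (d : ι → G × ℤ) :
    wordMoves (Prod.map φ id '' A) (Prod.map φ id ∘ d) =
      fun i => Prod.map φ id '' wordMoves A d i := by
  funext i
  simp only [wordMoves, Set.image_image, Function.comp_apply, Prod.map_fst, Prod.map_snd, id_eq,
    Prod.map_apply, map_mul]

end ChoiceGame

section Strategy

/-- The configuration after one round. -/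
def step (p d a : F2 × ℤ) : F2 × ℤ := (p.1 * d.1 * a.1, p.2 + d.2 + a.2)

/-- The configuration after a number of rounds started at `p`. In contrast to `wwgPos` the first
round is split off, so that the rest is a play for the residual strategy. -/
def play : F2 × ℤ → (List (F2 × ℤ) → F2 × ℤ) → (ℕ → F2 × ℤ) → ℕ → F2 × ℤ
  | p, _, _, 0 => p
  | p, st, δ, n + 1 =>
    play (step p (δ 0) (st [δ 0])) (fun hist => st (δ 0 :: hist)) (fun i => δ (i + 1)) n

theorem play_succ (p : F2 × ℤ) (st : List (F2 × ℤ) → F2 × ℤ) (δ : ℕ → F2 × ℤ) (n : ℕ) :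
    play p st δ (n + 1) = step (play p st δ n) (δ n) (st ((List.range (n + 1)).map δ)) := by
  induction n generalizing p st δ with
  | zero => rfl
  | succ n ih =>
    rw [play, ih, List.range_succ_eq_map (n := n + 1), List.map_cons, List.map_map]
    rfl

theorem wwgPos_eq_play (w : F2) (δ : ℕ → F2 × ℤ) (st : List (F2 × ℤ) → F2 × ℤ) (n : ℕ) :
    wwgPos w δ st n = play (w, 0) st δ n := by
  induction n with
  | zero => rfl
  | succ n ih => rw [wwgPos, play_succ, ih]; rfl

variable {ι : Type*} {A D : List (F2 × ℤ)} {d : ι → F2 × ℤ}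

/-- The strategy `st` takes its moves from `A` and reaches `(1, 0)` from `p` after finitely many
rounds, possibly none, whatever Defender plays. -/
structure IsWinningStrategy (A D : List (F2 × ℤ)) (p : F2 × ℤ)
    (st : List (F2 × ℤ) → F2 × ℤ) : Prop where
  mem : ∀ hist, (∀ x ∈ hist, x ∈ D) → st hist ∈ A
  reaches : ∀ δ : ℕ → F2 × ℤ, (∀ i, δ i ∈ D) → ∃ n, play p st δ n = (1, 0)

theorem wwgAttackerWins_iff {w : F2} (hw : w ≠ 1) :
    WWGAttackerWins A D w ↔ ∃ st, IsWinningStrategy A D (w, 0) st := by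
  have hw' : (w, (0 : ℤ)) ≠ (1, 0) := fun h => hw (congrArg Prod.fst h)
  refine exists_congr fun st => ⟨fun h => ⟨h.1, fun δ hδ => ?_⟩, fun h => ⟨h.1, fun δ hδ => ?_⟩⟩
  · obtain ⟨n, hn⟩ := h.2 δ hδ
    exact ⟨n + 1, wwgPos_eq_play w δ st _ ▸ hn⟩
  · obtain ⟨_ | n, hn⟩ := h.2 δ hδ
    · exact absurd hn hw'
    · exact ⟨n, (wwgPos_eq_play w δ st _).trans hn⟩

theorem Winning.exists_isWinningStrategy (hD : ∀ x, x ∈ D ↔ x ∈ Set.range d) (hA : A ≠ [])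
    {w : F2} {k : ℤ} (h : Winning (wordMoves {a | a ∈ A} d) w k) :
    ∃ st, IsWinningStrategy A D (w, k) st := by
  obtain ⟨a₀, ha₀⟩ := List.exists_mem_of_ne_nil A hA
  induction h with
  | one => exact ⟨fun _ => a₀, fun _ _ => ha₀, fun _ _ => ⟨0, rfl⟩⟩
  | @round w k m mem _ ih =>
    have answer (x : F2 × ℤ) : ∃ a ∈ A, ∃ st, (∀ hist, (∀ y ∈ hist, y ∈ D) → st hist ∈ A) ∧
        (x ∈ D → IsWinningStrategy A D (step (w, k) x a) st) := by
      by_cases hx : x ∈ D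
      · obtain ⟨i, rfl⟩ := (hD x).1 hx
        obtain ⟨a, ha, hma⟩ := mem i
        obtain ⟨st, hst⟩ := ih i
        refine ⟨a, ha, st, hst.mem, fun _ => ?_⟩
        rwa [← hma, ← mul_assoc, ← add_assoc] at hst
      · exact ⟨a₀, ha₀, fun _ => a₀, fun _ _ => ha₀, fun h => absurd h hx⟩
    choose a ha st hst_mem hst using answer
    let st' : List (F2 × ℤ) → F2 × ℤ
      | [] => a₀
      | [x] => a x
      | x :: y :: hist => st x (y :: hist)
    refine ⟨st', ?_, fun δ hδ => ?_⟩
    · rintro (_ | ⟨x, _ | ⟨y, hist⟩⟩) h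
      exacts [ha₀, ha x, hst_mem x _ fun z hz => h z (List.mem_cons_of_mem _ hz)]
    · obtain ⟨n, hn⟩ := (hst (δ 0) (hδ 0)).reaches (fun i => δ (i + 1)) fun i => hδ _
      refine ⟨n + 1, ?_⟩
      have residual (δ' : ℕ → F2 × ℤ) (p : F2 × ℤ) (n : ℕ) :
          play p (fun hist => st' (δ 0 :: hist)) δ' n = play p (st (δ 0)) δ' n := by
        cases n <;> rfl
      rw [play, residual]
      exact hn

theorem exists_forall_not_winning {p : F2 × ℤ}
    (hp : ¬ Winning (wordMoves {a | a ∈ A} d) p.1 p.2) : ∃ i, ∀ a ∈ A,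
      ¬ Winning (wordMoves {a | a ∈ A} d) (step p (d i) a).1 (step p (d i) a).2 := by
  contrapose! hp
  refine .of_forall_exists fun i => ?_
  obtain ⟨a, ha, hwin⟩ := hp i
  exact ⟨_, ⟨a, ha, rfl⟩, by simpa only [step, mul_assoc, add_assoc] using hwin⟩

theorem IsWinningStrategy.winning (hd : ∀ i, d i ∈ D) {p : F2 × ℤ}
    {st : List (F2 × ℤ) → F2 × ℤ} (h : IsWinningStrategy A D p st) :
    Winning (wordMoves {a | a ∈ A} d) p.1 p.2 := by
  by_contra hp
  have : Nonempty ι := ⟨(exists_forall_not_winning hp).choose⟩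
  choose! pick hpick using fun p => exists_forall_not_winning (A := A) (d := d) (p := p)
  -- The configuration and Attacker's residual strategy while Defender follows `pick`.
  let next (x : (F2 × ℤ) × (List (F2 × ℤ) → F2 × ℤ)) : (F2 × ℤ) × (List (F2 × ℤ) → F2 × ℤ) :=
    (step x.1 (d (pick x.1)) (x.2 [d (pick x.1)]), fun hist => x.2 (d (pick x.1) :: hist))
  have evade : ∀ (n : ℕ) p st, ¬ Winning (wordMoves {a | a ∈ A} d) p.1 p.2 →
      (∀ hist, (∀ x ∈ hist, x ∈ D) → st hist ∈ A) →
      play p st (fun i => d (pick (next^[i] (p, st)).1)) n ≠ (1, 0) := by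
    intro n
    induction n with
    | zero => rintro p st hp - rfl; exact hp .one
    | succ _ ih =>
      refine fun p st hp hst => ih _ _ (hpick p hp _ (hst _ ?_)) fun hist hhist => hst _ ?_
      · simpa only [List.forall_mem_singleton] using hd _
      · exact List.forall_mem_cons.2 ⟨hd _, hhist⟩
  obtain ⟨n, hn⟩ := h.reaches _ fun i => hd (pick (next^[i] (p, st)).1)
  exact evade n p st hp h.mem hn

theorem wwgAttackerWins_iff_winning (hD : ∀ x, x ∈ D ↔ x ∈ Set.range d) (hA : A ≠ [])
    {w : F2} (hw : w ≠ 1) : WWGAttackerWins A D w ↔ Winning (wordMoves {a | a ∈ A} d) w 0 := by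
  rw [wwgAttackerWins_iff hw]
  exact ⟨fun ⟨_, h⟩ => h.winning fun i => (hD _).2 ⟨i, rfl⟩,
    fun h => h.exists_isWinningStrategy hD hA⟩

theorem exists_wordGame [Finite ι] {A : Set (F2 × ℤ)} (hA : A.Finite) (hA₀ : A.Nonempty)
    (d : ι → F2 × ℤ) : ∃ A' D : List (F2 × ℤ),
      ∀ w ≠ 1, WWGAttackerWins A' D w ↔ Winning (wordMoves A d) w 0 := by
  have setOf_mem : {x | x ∈ hA.toFinset.toList} = A := Set.ext fun x => by
    rw [Set.mem_ofPred_eq, Finset.mem_toList, hA.mem_toFinset]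
  refine ⟨hA.toFinset.toList, (Set.finite_range d).toFinset.toList, fun w hw => ?_⟩
  rw [wwgAttackerWins_iff_winning (d := d) (fun x => ?_) ?_ hw, setOf_mem]
  · exact List.ne_nil_of_mem (setOf_mem.symm.subset hA₀.some_mem)
  · rw [Finset.mem_toList, Set.Finite.mem_toFinset]

end Strategy

section Embedding

/-- The action of `ℤ` on the free group with basis `ℤ` by translation of the basis. -/
def translationAut : Multiplicative ℤ →* MulAut (FreeGroup ℤ) where
  toFun n := FreeGroup.freeGroupCongr (Equiv.addRight n.toAdd)
  map_one' := by ext; simp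
  map_mul' m n := by
    rw [MulAut.mul_def, FreeGroup.freeGroupCongr_trans]
    congr 1
    ext i
    simp only [toAdd_mul, Equiv.coe_addRight, Equiv.trans_apply, add_left_comm, add_comm]

theorem translationAut_of (n : Multiplicative ℤ) (i : ℤ) :
    translationAut n (FreeGroup.of i) = FreeGroup.of (i + n.toAdd) :=
  FreeGroup.map.of

/-- The homomorphism `i ↦ cⁱ d c⁻ⁱ`, which exhibits a free group of countable rank in `F2`. -/
def conjEmbedding : FreeGroup ℤ →* F2 :=
  FreeGroup.lift fun i => .of true ^ i * .of false * (.of true ^ i)⁻¹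

theorem conjEmbedding_injective : Function.Injective conjEmbedding := by
  let retract : F2 →* FreeGroup ℤ ⋊[translationAut] Multiplicative ℤ :=
    FreeGroup.lift fun b => if b then SemidirectProduct.inr (.ofAdd 1)
      else SemidirectProduct.inl (.of 0)
  have retract_comp : retract.comp conjEmbedding = SemidirectProduct.inl := by
    ext1 i
    simp only [retract, conjEmbedding, MonoidHom.comp_apply, FreeGroup.lift_apply_of, map_mul,
      map_inv, map_zpow, if_true, Bool.false_eq_true, if_false]
    rw [← map_zpow, ← ofAdd_zsmul, smul_eq_mul, mul_one, ← map_inv, ← SemidirectProduct.inl_aut,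
      translationAut_of, toAdd_ofAdd, zero_add]
  refine .of_comp (f := retract) ?_
  rw [← MonoidHom.coe_comp, retract_comp]
  exact SemidirectProduct.inl_injective

theorem exists_injective_hom_F2 (α : Type*) [Countable α] :
    ∃ φ : FreeGroup α →* F2, Function.Injective φ := by
  obtain ⟨f, hf⟩ := exists_injective_nat α
  exact ⟨conjEmbedding.comp (FreeGroup.map ((↑) ∘ f)),
    conjEmbedding_injective.comp (FreeGroup.map_injective (Nat.cast_injective.comp hf))⟩

end Embedding

section UniversalChoice

variable {α : Type*} (M : SignType → Set (FreeGroup α × ℤ))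

/-- Defender announces the choice `ℓ` by writing the power `zˡ` of the fresh letter `z = none`. -/
def announcement (ℓ : SignType) : FreeGroup (Option α) × ℤ := (.of none ^ (ℓ : ℤ), 0)

/-- Attacker's weighted words: an announcement `ℓ` is cancelled in front of a move of `M ℓ`. -/
def answers : Set (FreeGroup (Option α) × ℤ) :=
  ⋃ ℓ : SignType, (fun m => (.of none ^ (-ℓ : ℤ) * FreeGroup.map some m.1, m.2)) '' M ℓ

/-- The exponent of the letter `z` used for announcements. -/
def announced : FreeGroup (Option α) →* Multiplicative ℤ :=
  FreeGroup.lift fun o => o.elim (.ofAdd 1) 1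

/-- Erases the letter `z` used for announcements. -/
def eraseAnnounced : FreeGroup (Option α) →* FreeGroup α :=
  FreeGroup.lift fun o => o.elim 1 .of

theorem announced_z : announced (.of none : FreeGroup (Option α)) = .ofAdd 1 :=
  FreeGroup.lift_apply_of

theorem eraseAnnounced_z : eraseAnnounced (.of none : FreeGroup (Option α)) = 1 :=
  FreeGroup.lift_apply_of

theorem announced_map_some (w : FreeGroup α) : announced (FreeGroup.map some w) = 1 := by
  suffices announced.comp (FreeGroup.map some) = (1 : FreeGroup α →* _) from
    DFunLike.congr_fun this w
  ext a
  simp [announced]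

theorem eraseAnnounced_map_some (w : FreeGroup α) :
    eraseAnnounced (FreeGroup.map some w) = w := by
  suffices eraseAnnounced.comp (FreeGroup.map some) = .id (FreeGroup α) from
    DFunLike.congr_fun this w
  ext a
  simp [eraseAnnounced]

theorem Winning.of_map_some {w : FreeGroup α} {k : ℤ} (h : Winning M w k) :
    Winning (wordMoves (answers M) announcement) (FreeGroup.map some w) k := by
  induction h with
  | one => exact (FreeGroup.map some).map_one ▸ .one
  | round m mem _ ih =>
    refine .of_forall_exists fun ℓ => ⟨_, ⟨_, Set.mem_iUnion.2 ⟨ℓ, m ℓ, mem ℓ, rfl⟩, rfl⟩, ?_⟩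
    simpa [announcement] using ih ℓ

theorem coe_signType_injective : Function.Injective ((↑) : SignType → ℤ) := by decide

theorem abs_coe_signType_le_one (ℓ : SignType) : |(ℓ : ℤ)| ≤ 1 := by decide +revert

/-- Defender's announcements `1` and `-1` show that the exponent of `z` vanishes between rounds, so
Attacker has to answer the announced choice. -/
theorem Winning.eraseAnnounced {v : FreeGroup (Option α)} {k : ℤ}
    (h : Winning (wordMoves (answers M) announcement) v k) :
    announced v = 1 ∧ Winning M (eraseAnnounced v) k := by
  induction h with
  | one => simpa only [map_one, true_and] using .one
  | @round v k m mem _ ih =>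
    have answer (ℓ : SignType) : ∃ ℓ' : SignType, (announced v).toAdd + ℓ = ℓ' ∧
        ∃ a ∈ M ℓ', Winning M (WordGame.eraseAnnounced v * a.1) (k + a.2) := by
      obtain ⟨_, ha, hm⟩ := mem ℓ
      obtain ⟨ℓ', m', hm', rfl⟩ := Set.mem_iUnion.1 ha
      obtain ⟨hz, hwin⟩ := ih ℓ
      simp only [← hm, announcement, map_mul, map_zpow, zero_add, eraseAnnounced_map_some,
        eraseAnnounced_z, one_zpow, one_mul] at hwin
      refine ⟨ℓ', ?_, m', hm', hwin⟩
      rw [← sub_eq_zero]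
      simpa only [← hm, announcement, map_mul, map_zpow, announced_map_some, announced_z, mul_one,
        toAdd_mul, toAdd_zpow, toAdd_ofAdd, smul_eq_mul, toAdd_one, sub_eq_add_neg, add_assoc]
        using congrArg Multiplicative.toAdd hz
    have balanced : (announced v).toAdd = 0 := by
      obtain ⟨ℓ₁, h₁, -⟩ := answer 1
      obtain ⟨ℓ₂, h₂, -⟩ := answer (-1)
      have h₁' := h₁ ▸ abs_coe_signType_le_one ℓ₁
      have h₂' := h₂ ▸ abs_coe_signType_le_one ℓ₂
      rw [SignType.coe_one, abs_le] at h₁'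
      rw [SignType.coe_neg_one, abs_le] at h₂'
      omega
    refine ⟨toAdd_eq_zero.1 balanced, .of_forall_exists fun ℓ => ?_⟩
    obtain ⟨ℓ', hℓ, ha⟩ := answer ℓ
    rw [balanced, zero_add] at hℓ
    rwa [coe_signType_injective hℓ]

theorem winning_map_some_iff {w : FreeGroup α} {k : ℤ} :
    Winning (wordMoves (answers M) announcement) (FreeGroup.map some w) k ↔ Winning M w k :=
  ⟨fun h => eraseAnnounced_map_some w ▸ (h.eraseAnnounced M).2, .of_map_some M⟩

theorem exists_wordGame_of_choiceGame [Countable α] (hM : ∀ ℓ, (M ℓ).Finite)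
    (hM₀ : (M 0).Nonempty) : ∃ (A D : List (F2 × ℤ)) (φ : FreeGroup α →* F2),
      ∀ w ≠ 1, WWGAttackerWins A D (φ w) ↔ Winning M w 0 := by
  obtain ⟨φ, hφ⟩ := exists_injective_hom_F2 (Option α)
  obtain ⟨A, D, hAD⟩ := exists_wordGame (A := Prod.map φ id '' answers M)
    ((Set.finite_iUnion fun ℓ => (hM ℓ).image _).image (Prod.map φ id))
    (((hM₀.image _).mono (Set.subset_iUnion_of_subset 0 subset_rfl)).image _)
    (Prod.map φ id ∘ announcement)
  refine ⟨A, D, φ.comp (FreeGroup.map some), fun w hw => ?_⟩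
  have hinj : Function.Injective (φ.comp (FreeGroup.map some)) :=
    hφ.comp (FreeGroup.map_injective (Option.some_injective α))
  rw [hAD _ ((map_ne_one_iff _ hinj).2 hw), wordMoves_image]
  exact (winning_map_iff hφ).trans (winning_map_some_iff M)

end UniversalChoice

section Cancellation

variable {α β : Type*}

open Classical in
theorem exists_append_cons_of_reduce_eq {L p v : List (α × Bool)} {z : α × Bool}
    (h : FreeGroup.reduce L = p ++ z :: v) :
    ∃ L₁ L₂, L = L₁ ++ z :: L₂ ∧ FreeGroup.mk L₁ = FreeGroup.mk p := by
  induction L generalizing p with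
  | nil => simp at h
  | cons b L ih =>
    have mk_cons {L L' : List (α × Bool)} (h : FreeGroup.mk L = FreeGroup.mk L') :
        FreeGroup.mk (b :: L) = FreeGroup.mk (b :: L') := by
      simpa only [FreeGroup.mul_mk, List.singleton_append] using congrArg (FreeGroup.mk [b] * ·) h
    by_cases hb : FreeGroup.reduce L = (b.1, !b.2) :: (p ++ z :: v)
    · obtain ⟨L₁, L₂, rfl, hL₁⟩ := ih (p := (b.1, !b.2) :: p) hb
      refine ⟨b :: L₁, L₂, rfl, (mk_cons hL₁).trans ?_⟩
      exact Quot.sound (FreeGroup.Red.Step.cons_not (b := b.2))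
    · have hcons : b :: FreeGroup.reduce L = p ++ z :: v := by
        rw [FreeGroup.reduce.cons] at h
        rcases hL : FreeGroup.reduce L with _ | ⟨c, M⟩
        · rwa [hL] at h
        · rw [hL] at h hb
          dsimp only at h
          split_ifs at h with hc
          · refine absurd ?_ hb
            rw [← h, hc.1, hc.2, Bool.not_not]
          · exact h
      rcases p with _ | ⟨c, p⟩
      · exact ⟨[], L, by rw [(List.cons.inj hcons).1]; rfl, rfl⟩
      · obtain ⟨rfl, hL⟩ := List.cons.inj hcons
        obtain ⟨L₁, L₂, rfl, hL₁⟩ := ih hL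
        exact ⟨b :: L₁, L₂, rfl, mk_cons hL₁⟩

theorem exists_append_inv_cons_of_mk_eq_one {u L : List (α × Bool)} {x : α × Bool}
    (hux : FreeGroup.IsReduced (u ++ [x])) (h : FreeGroup.mk (u ++ x :: L) = 1) :
    ∃ L₁ L₂, L = L₁ ++ (x.1, !x.2) :: L₂ ∧ FreeGroup.mk L₁ = 1 := by
  classical
  have hL : FreeGroup.mk L = FreeGroup.mk (FreeGroup.invRev (u ++ [x])) := by
    rw [← FreeGroup.inv_mk, eq_inv_iff_mul_eq_one, mul_eq_one_comm, FreeGroup.mul_mk,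
      List.append_assoc]
    exact h
  refine exists_append_cons_of_reduce_eq (p := []) (v := FreeGroup.invRev u) ?_
  rw [FreeGroup.reduce.sound hL, FreeGroup.reduce_invRev, hux.reduce_eq,
    FreeGroup.invRev_append]
  rfl

theorem isReduced_of_forall_snd {L : List (α × Bool)} (h : ∀ x ∈ L, x.2 = true) :
    FreeGroup.IsReduced L := by
  have : L.Pairwise fun x y => x.1 = y.1 → x.2 = y.2 :=
    List.pairwise_of_forall_mem_list fun x hx y hy _ => (h x hx).trans (h y hy).symm
  exact this.isChain

theorem flatMap_eq_append_cons {f : β → List α} {l : List β} {L₁ L₂ : List α} {a : α}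
    (h : l.flatMap f = L₁ ++ a :: L₂) : ∃ l₁ b l₂ r₁ r₂, l = l₁ ++ b :: l₂ ∧
      f b = r₁ ++ a :: r₂ ∧ L₁ = l₁.flatMap f ++ r₁ := by
  induction l generalizing L₁ with
  | nil => simp at h
  | cons b l ih =>
    rw [List.flatMap_cons, List.append_eq_append_iff] at h
    obtain ⟨M, rfl, hM⟩ | ⟨_ | ⟨c, M⟩, hb, hM⟩ := h
    · obtain ⟨l₁, b', l₂, r₁, r₂, rfl, hb', rfl⟩ := ih hM
      exact ⟨b :: l₁, b', l₂, r₁, r₂, rfl, hb', by simp⟩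
    · obtain ⟨l₁, b', l₂, r₁, r₂, rfl, hb', hr⟩ := ih (L₁ := []) hM.symm
      exact ⟨b :: l₁, b', l₂, r₁, r₂, rfl, hb', by simp_all⟩
    · obtain ⟨rfl, -⟩ := List.cons.inj hM
      exact ⟨[], b, l, L₁, M, rfl, hb, rfl⟩

end Cancellation

section Moves

/-- Letters of the words of a pushdown game: stack symbols, control states, and the marker `grow`
of the initial phase in which Attacker extends the stack. -/
inductive Letter (Q Y : Type*)
  | grow
  | state (q : Q)
  | sym (y : Y)

/-- Attacker's moves in a pushdown game. A configuration is written as the stack, with its top on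
the right, followed by `grow` or by a control state. -/
inductive Move (Q Y : Type*)
  | push (y : Y)
  | start (q : Q)
  | pop (q : Q) (y : Y) (q' : Q)
  | accept (q : Q)

variable {Q Y : Type*}

instance [Finite Q] [Finite Y] : Finite (Move Q Y) :=
  Finite.of_equiv _ (proxy_equiv% (Move Q Y))

instance [Countable Q] [Countable Y] : Countable (Letter Q Y) :=
  (proxy_equiv% (Letter Q Y)).symm.injective.countable

/-- The word by which Attacker multiplies to make a move. -/
def Move.word : Move Q Y → List (Letter Q Y × Bool)
  | push y => [(.grow, false), (.sym y, true), (.grow, true)]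
  | start q => [(.grow, false), (.state q, true)]
  | pop q y q' => [(.state q, false), (.sym y, false), (.state q', true)]
  | accept q => [(.state q, false)]

/-- The word of a stack given by the list of its symbols from the top. -/
def stackWord (σ : List Y) : List (Letter Q Y × Bool) := σ.reverse.map fun y => (.sym y, true)

/-- A count of the states in a word, with `grow` counted twice, under which no move increases the
count. -/
def weight (L : List (Letter Q Y × Bool)) : ℤ :=
  (FreeGroup.lift (fun | .grow => .ofAdd 2 | .state _ => .ofAdd 1 | .sym _ => 1 :
    Letter Q Y → Multiplicative ℤ) (FreeGroup.mk L)).toAdd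

theorem weight_append (L₁ L₂ : List (Letter Q Y × Bool)) :
    weight (L₁ ++ L₂) = weight L₁ + weight L₂ := by
  rw [weight, ← FreeGroup.mul_mk, map_mul, toAdd_mul]
  rfl

theorem weight_eq_zero {L : List (Letter Q Y × Bool)} (h : FreeGroup.mk L = 1) :
    weight L = 0 := by
  rw [weight, h, map_one, toAdd_one]

theorem Move.weight_word_nonpos (m : Move Q Y) : weight m.word ≤ 0 := by
  cases m <;> simp [weight, Move.word]

theorem weight_flatMap_word_nonpos (ms : List (Move Q Y)) : weight (ms.flatMap Move.word) ≤ 0 := by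
  induction ms with
  | nil => exact (weight_eq_zero FreeGroup.one_eq_mk.symm).le
  | cons m ms ih =>
    rw [List.flatMap_cons, weight_append]
    exact add_nonpos m.weight_word_nonpos ih

/-- Sends states to reflections and stack symbols to a translation, so that every move of weight
zero becomes the same translation. -/
def toDihedral : FreeGroup (Letter Q Y) →* DihedralGroup 0 :=
  FreeGroup.lift fun | .grow => 1 | .state _ => .sr 0 | .sym _ => .r 1

theorem Move.toDihedral_word {m : Move Q Y} (hm : weight m.word = 0) :
    toDihedral (.mk m.word) = .r 1 := by
  cases m <;> simp_all [weight, Move.word, toDihedral]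

theorem toDihedral_flatMap_word {ms : List (Move Q Y)} (h : weight (ms.flatMap Move.word) = 0) :
    toDihedral (.mk (ms.flatMap Move.word)) = .r 1 ^ ms.length := by
  induction ms with
  | nil => exact map_one _
  | cons m ms ih =>
    rw [List.flatMap_cons, weight_append] at h
    have hm := m.weight_word_nonpos
    have hms := weight_flatMap_word_nonpos ms
    rw [List.flatMap_cons, ← FreeGroup.mul_mk, map_mul, m.toDihedral_word (by lia), ih (by lia),
      List.length_cons, pow_succ']

theorem eq_nil_of_mk_flatMap_word_eq_one {ms : List (Move Q Y)}
    (h : FreeGroup.mk (ms.flatMap Move.word) = 1) : ms = [] := by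
  have hpow : (DihedralGroup.r 1 : DihedralGroup 0) ^ ms.length = 1 := by
    rw [← toDihedral_flatMap_word (weight_eq_zero h), h, map_one]
  have := orderOf_dvd_of_pow_eq_one hpow
  rwa [DihedralGroup.orderOf_r_one, zero_dvd_iff, List.length_eq_zero_iff] at this

theorem Move.eq_nil_of_word_eq {m : Move Q Y} {r₁ r₂ : List (Letter Q Y × Bool)} {x : Letter Q Y}
    (h : m.word = r₁ ++ (x, false) :: r₂) (hx : ∀ y, x ≠ .sym y) : r₁ = [] := by
  cases m <;> rcases r₁ with _ | ⟨_, _ | ⟨_, _ | ⟨_, _⟩⟩⟩ <;>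
    grind [Move.word, List.append_eq_nil_iff]

theorem Move.weight_of_word_eq {m : Move Q Y} {r₁ r₂ : List (Letter Q Y × Bool)} {y : Y}
    {b : Bool} (h : m.word = r₁ ++ (.sym y, b) :: r₂) : weight r₁ = if b then -2 else -1 := by
  have : r₁ = [(Letter.grow, false)] ∧ b = true ∨
      (∃ q, r₁ = [(Letter.state q, false)]) ∧ b = false := by
    cases m <;> rcases r₁ with _ | ⟨_, _ | ⟨_, _ | ⟨_, _⟩⟩⟩ <;>
      grind [Move.word, List.append_eq_nil_iff]
  obtain ⟨rfl, rfl⟩ | ⟨⟨q, rfl⟩, rfl⟩ := this <;> rfl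

theorem exists_move_cancelling {u t : List (Letter Q Y × Bool)} {x : Letter Q Y × Bool}
    {ms : List (Move Q Y)} (hux : FreeGroup.IsReduced (u ++ [x]))
    (h : FreeGroup.mk (u ++ x :: (t ++ ms.flatMap Move.word)) = 1) (ht : (x.1, !x.2) ∉ t) :
    ∃ ms₁ m ms₂ r₁ r₂, ms = ms₁ ++ m :: ms₂ ∧ m.word = r₁ ++ (x.1, !x.2) :: r₂ ∧
      FreeGroup.mk (t ++ ms₁.flatMap Move.word ++ r₁) = 1 := by
  obtain ⟨L₁, L₂, hL, hL₁⟩ := exists_append_inv_cons_of_mk_eq_one hux h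
  obtain ⟨M, rfl, hM⟩ | ⟨_ | ⟨c, M⟩, rfl, hM⟩ := List.append_eq_append_iff.1 hL
  · obtain ⟨ms₁, m, ms₂, r₁, r₂, rfl, hm, rfl⟩ := flatMap_eq_append_cons hM
    exact ⟨ms₁, m, ms₂, r₁, r₂, rfl, hm, by rwa [List.append_assoc]⟩
  · obtain ⟨ms₁, m, ms₂, r₁, r₂, rfl, hm, hr⟩ := flatMap_eq_append_cons (L₁ := []) hM.symm
    exact ⟨ms₁, m, ms₂, r₁, r₂, rfl, hm, by rwa [List.append_nil, List.append_assoc, ← hr,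
      List.append_nil]⟩
  · exact absurd (by simp [(List.cons.inj hM).1]) ht

theorem forall_mem_stackWord (σ : List Y) : ∀ x ∈ (stackWord σ : List (Letter Q Y × Bool)),
    x.2 = true := by
  simp [stackWord]

theorem stackWord_cons (y : Y) (σ : List Y) :
    (stackWord (y :: σ) : List (Letter Q Y × Bool)) = stackWord σ ++ [(.sym y, true)] := by
  simp [stackWord]

theorem eq_cons_of_mk_stackWord_append_eq_one {σ : List Y} {x : Letter Q Y} (hx : ∀ y, x ≠ .sym y)
    {m : Move Q Y} {ms : List (Move Q Y)}
    (h : FreeGroup.mk (stackWord σ ++ (x, true) :: (m :: ms).flatMap Move.word) = 1) :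
    ∃ r, m.word = (x, false) :: r := by
  obtain ⟨ms₁, m', ms₂, r₁, r₂, hms, hm', h₁⟩ := exists_move_cancelling (t := [])
    (ms := m :: ms) (isReduced_of_forall_snd (L := stackWord σ ++ [(x, true)])
      (by simp [stackWord])) h List.not_mem_nil
  rw [m'.eq_nil_of_word_eq hm' hx, List.append_nil, List.nil_append] at h₁
  rw [eq_nil_of_mk_flatMap_word_eq_one h₁, List.nil_append, List.cons.injEq] at hms
  exact ⟨r₂, by rw [hms.1, hm', m'.eq_nil_of_word_eq hm' hx]; rfl⟩

theorem exists_eq_cons_of_pop {σ : List Y} {q' : Q} {y : Y} {ms : List (Move Q Y)}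
    (h : FreeGroup.mk (stackWord σ ++ (.sym y, false) :: ([(.state q', true)] ++
      ms.flatMap Move.word)) = 1) : ∃ σ', σ = y :: σ' := by
  by_contra! hσ
  have reduced : FreeGroup.IsReduced (stackWord σ ++ [(Letter.sym (Q := Q) y, false)]) := by
    rcases σ with _ | ⟨z, σ⟩
    · exact FreeGroup.IsReduced.singleton
    · rw [stackWord_cons]
      refine FreeGroup.IsReduced.append_overlap (isReduced_of_forall_snd ?_) ?_ (by simp)
      · exact stackWord_cons (Q := Q) z σ ▸ forall_mem_stackWord (z :: σ)
      · have : z ≠ y := by rintro rfl; exact hσ σ rfl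
        simp [this]
  obtain ⟨ms₁, m, ms₂, r₁, r₂, -, hm, h₁⟩ := exists_move_cancelling reduced h (by simp)
  have := weight_eq_zero h₁
  rw [weight_append, weight_append, m.weight_of_word_eq hm] at this
  have := weight_flatMap_word_nonpos ms₁
  have : weight [(Letter.state (Y := Y) q', true)] = 1 := rfl
  simp only [Bool.not_false, if_true] at *
  lia

theorem mk_stackWord_cons_append_ne_one (y : Y) (σ : List Y) (ms : List (Move Q Y)) :
    FreeGroup.mk (stackWord (y :: σ) ++ ms.flatMap Move.word) ≠ 1 := fun h => by
  rw [stackWord_cons, List.append_assoc] at h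
  obtain ⟨ms₁, m, ms₂, r₁, r₂, -, hm, h₁⟩ := exists_move_cancelling (t := [])
    (stackWord_cons y σ ▸ isReduced_of_forall_snd (forall_mem_stackWord _)) h List.not_mem_nil
  have := weight_eq_zero h₁
  rw [List.nil_append, weight_append, m.weight_of_word_eq hm] at this
  have := weight_flatMap_word_nonpos ms₁
  simp only [Bool.not_true, Bool.false_eq_true, if_false] at *
  lia

end Moves

section Pushdown

/-- A pushdown machine with a counter and universal branching over `SignType`. It starts in a state
of `start` after having put copies of `fresh` on the stack, then pops the whole stack while changing
its state and the counter, and finally needs a weight in `final` that resets the counter. Every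
such step may depend on a choice `ℓ : SignType` of the opponent. -/
structure CounterPDA (Q Y : Type*) where
  fresh : Y
  start : Set Q
  pop : SignType → Q → Y → Set (Q × ℤ)
  final : SignType → Q → Set ℤ
  finite_pop : ∀ ℓ q y, (pop ℓ q y).Finite
  finite_final : ∀ ℓ q, (final ℓ q).Finite

namespace CounterPDA

variable {Q Y : Type*} (P : CounterPDA Q Y)

/-- Acceptance from the state `q`, a stack given from the top, and the counter `k`. -/
def Accepts : Q → List Y → ℤ → Prop
  | q, [], k => ∀ ℓ, -k ∈ P.final ℓ q
  | q, y :: σ, k => ∀ ℓ, ∃ r ∈ P.pop ℓ q y, Accepts r.1 σ (k + r.2)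

/-- The weights with which Attacker may make a move of the pushdown game after the choice `ℓ`. -/
def legalWeights (ℓ : SignType) : Move Q Y → Set ℤ
  | .push y => {e | y = P.fresh ∧ |e| ≤ 1}
  | .start q => {e | q ∈ P.start ∧ e = 0}
  | .pop q y q' => {e | (q', e) ∈ P.pop ℓ q y}
  | .accept q => P.final ℓ q

/-- The choice game that simulates `P`. -/
def moves (ℓ : SignType) : Set (FreeGroup (Letter Q Y) × ℤ) :=
  ⋃ m : Move Q Y, (fun e => (FreeGroup.mk m.word, e)) '' P.legalWeights ℓ m

theorem finite_legalWeights (ℓ : SignType) (m : Move Q Y) : (P.legalWeights ℓ m).Finite := by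
  cases m with
  | push y => exact (Set.finite_Icc (-1) 1).subset fun e he => abs_le.1 he.2
  | start q => exact (Set.finite_singleton 0).subset fun e he => he.2
  | pop q y q' => exact (P.finite_pop ℓ q y).preimage (Prod.mk_right_injective q').injOn
  | accept q => exact P.finite_final ℓ q

theorem finite_moves [Finite Q] [Finite Y] (ℓ : SignType) : (P.moves ℓ).Finite :=
  Set.finite_iUnion fun m => (P.finite_legalWeights ℓ m).image _

theorem nonempty_moves (ℓ : SignType) : (P.moves ℓ).Nonempty :=
  ⟨_, Set.mem_iUnion.2 ⟨.push P.fresh, 0, ⟨rfl, by simp⟩, rfl⟩⟩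

variable {P}

theorem mem_moves {ℓ : SignType} {m : Move Q Y} {e : ℤ} (h : e ∈ P.legalWeights ℓ m) :
    (.mk m.word, e) ∈ P.moves ℓ :=
  Set.mem_iUnion.2 ⟨m, e, h, rfl⟩

theorem exists_of_mem_moves {ℓ : SignType} {p : FreeGroup (Letter Q Y) × ℤ} (h : p ∈ P.moves ℓ) :
    ∃ (m : Move Q Y) (e : ℤ), e ∈ P.legalWeights ℓ m ∧ p = (.mk m.word, e) := by
  obtain ⟨m, e, he, rfl⟩ := Set.mem_iUnion.1 h
  exact ⟨m, e, he, rfl⟩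

theorem exists_moves_of_winning {w : FreeGroup (Letter Q Y)} {k : ℤ} (h : Winning P.moves w k) :
    ∃ ms : List (Move Q Y), w * .mk (ms.flatMap Move.word) = 1 := by
  induction h with
  | one => exact ⟨[], one_mul _⟩
  | round m mem _ ih =>
    obtain ⟨ms, hms⟩ := ih 0
    obtain ⟨m', e, -, hm⟩ := exists_of_mem_moves (mem 0)
    refine ⟨m' :: ms, ?_⟩
    rwa [hm, mul_assoc, FreeGroup.mul_mk] at hms

theorem eq_zero_of_winning_one {k : ℤ} (h : Winning P.moves 1 k) : k = 0 := by
  generalize hw : (1 : FreeGroup (Letter Q Y)) = w at h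
  cases h with
  | one => rfl
  | round m mem winning =>
    obtain ⟨ms, hms⟩ := exists_moves_of_winning (winning 0)
    obtain ⟨m', e, -, hm⟩ := exists_of_mem_moves (mem 0)
    rw [← hw, one_mul, hm, FreeGroup.mul_mk] at hms
    exact absurd (eq_nil_of_mk_flatMap_word_eq_one (ms := m' :: ms) hms) (List.cons_ne_nil _ _)

/-- The group element of the configuration with the stack `σ`, given from the top, and the control
letter `x`. -/
def config (σ : List Y) (x : Letter Q Y) : FreeGroup (Letter Q Y) :=
  .mk (stackWord σ ++ [(x, true)])

theorem config_ne_one (σ : List Y) (x : Letter Q Y) : config σ x ≠ 1 := fun h => by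
  obtain ⟨L₁, L₂, hL, -⟩ := exists_append_inv_cons_of_mk_eq_one (isReduced_of_forall_snd
    (L := stackWord σ ++ [(x, true)]) (by simp [stackWord])) h
  simp at hL

theorem mk_append_cancel (L : List (Letter Q Y × Bool)) (x : Letter Q Y)
    (r : List (Letter Q Y × Bool)) :
    FreeGroup.mk (L ++ [(x, true)] ++ (x, false) :: r) = .mk (L ++ r) := by
  rw [List.append_assoc]
  exact Quot.sound (.not (b := true))

theorem config_mul_mk (σ : List Y) (x : Letter Q Y) (r : List (Letter Q Y × Bool)) :
    config σ x * .mk ((x, false) :: r) = .mk (stackWord σ ++ r) := by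
  rw [config, FreeGroup.mul_mk, mk_append_cancel]

theorem config_cons_mul_pop (y : Y) (σ : List Y) (q q' : Q) :
    config (y :: σ) (.state q) * .mk (Move.pop q y q').word = config σ (.state q') := by
  rw [Move.word, config_mul_mk, stackWord_cons, mk_append_cancel, config]

theorem exists_word_eq_of_winning {σ : List Y} {x : Letter Q Y} (hx : ∀ y, x ≠ .sym y)
    {m : Move Q Y} {k : ℤ} (h : Winning P.moves (config σ x * .mk m.word) k) :
    ∃ r, m.word = (x, false) :: r := by
  obtain ⟨ms, hms⟩ := exists_moves_of_winning h
  rw [config, FreeGroup.mul_mk, FreeGroup.mul_mk, List.append_assoc, List.append_assoc] at hms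
  exact eq_cons_of_mk_stackWord_append_eq_one hx hms

theorem eq_push_or_eq_start_of_winning {σ : List Y} {m : Move Q Y} {k : ℤ}
    (h : Winning P.moves (config σ .grow * .mk m.word) k) :
    (∃ y, m = .push y) ∨ ∃ q, m = .start q := by
  obtain ⟨r, hr⟩ := exists_word_eq_of_winning (by simp) h
  cases m <;> simp_all [Move.word]

theorem eq_pop_or_eq_accept_of_winning {σ : List Y} {q : Q} {m : Move Q Y} {k : ℤ}
    (h : Winning P.moves (config σ (.state q) * .mk m.word) k) :
    (∃ y σ' q', σ = y :: σ' ∧ m = .pop q y q') ∨ σ = [] ∧ m = .accept q ∧ k = 0 := by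
  obtain ⟨r, hr⟩ := exists_word_eq_of_winning (by simp) h
  have head : (∃ y q', m = .pop q y q') ∨ m = .accept q := by
    cases m <;> simp_all [Move.word]
  obtain ⟨y, q', rfl⟩ | rfl := head
  · rw [Move.word, config_mul_mk] at h
    obtain ⟨ms, hms⟩ := exists_moves_of_winning h
    rw [FreeGroup.mul_mk, List.append_assoc] at hms
    obtain ⟨σ', rfl⟩ := exists_eq_cons_of_pop hms
    exact .inl ⟨y, σ', q', rfl, rfl⟩
  · rw [Move.word, config_mul_mk, List.append_nil] at h
    rcases σ with _ | ⟨y, σ⟩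
    · exact .inr ⟨rfl, rfl, eq_zero_of_winning_one h⟩
    · obtain ⟨ms, hms⟩ := exists_moves_of_winning h
      exact absurd hms (mk_stackWord_cons_append_ne_one y σ ms)

theorem accepts_of_winning {σ : List Y} {q : Q} {k : ℤ}
    (h : Winning P.moves (config σ (.state q)) k) : P.Accepts q σ k := by
  generalize hw : config σ (.state q) = w at h
  induction h generalizing σ q with
  | one => exact absurd hw (config_ne_one _ _)
  | @round w k m mem winning ih =>
    have answer (ℓ : SignType) : (∃ y σ', σ = y :: σ' ∧ ∃ r ∈ P.pop ℓ q y,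
        P.Accepts r.1 σ' (k + r.2)) ∨ σ = [] ∧ -k ∈ P.final ℓ q := by
      obtain ⟨m', e, he, hm⟩ := exists_of_mem_moves (mem ℓ)
      have hwin := winning ℓ
      have hacc (σ' q') := ih ℓ (σ := σ') (q := q')
      rw [hm, ← hw] at hwin hacc
      obtain ⟨y, σ', q', rfl, rfl⟩ | ⟨rfl, rfl, hk⟩ := eq_pop_or_eq_accept_of_winning hwin
      · exact .inl ⟨y, σ', rfl, _, he, hacc σ' q' (config_cons_mul_pop y σ' q q').symm⟩
      · exact .inr ⟨rfl, neg_eq_of_add_eq_zero_right hk ▸ he⟩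
    rcases σ with _ | ⟨y, σ⟩
    · exact fun ℓ => by simpa using answer ℓ
    · intro ℓ
      obtain ⟨_, _, hσ, h⟩ | ⟨hσ, -⟩ := answer ℓ
      · obtain ⟨rfl, rfl⟩ := List.cons.inj hσ
        exact h
      · cases hσ

theorem winning_of_accepts {σ : List Y} {q : Q} {k : ℤ} (h : P.Accepts q σ k) :
    Winning P.moves (config σ (.state q)) k := by
  induction σ generalizing q k with
  | nil =>
    refine .of_forall_exists fun ℓ => ⟨_, mem_moves (m := .accept q) (h ℓ), ?_⟩
    rw [Move.word, config_mul_mk, add_neg_cancel]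
    exact .one
  | cons y σ ih =>
    refine .of_forall_exists fun ℓ => ?_
    obtain ⟨r, hr, h⟩ := h ℓ
    exact ⟨_, mem_moves (m := .pop q y r.1) hr, config_cons_mul_pop y σ q r.1 ▸ ih h⟩

theorem config_mul_push (σ : List Y) (y : Y) :
    config σ .grow * .mk (Move.push (Q := Q) y).word = config (y :: σ) .grow := by
  rw [Move.word, config_mul_mk, config, stackWord_cons, List.append_assoc]
  rfl

theorem config_mul_start (σ : List Y) (q : Q) :
    config σ .grow * .mk (Move.start q).word = config σ (.state q) :=
  config_mul_mk σ .grow _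

theorem exists_accepts_of_winning_grow {σ : List Y} {k : ℤ}
    (h : Winning P.moves (config σ .grow) k) : ∃ (i : ℕ) (q : Q) (k' : ℤ),
      |k' - k| ≤ i ∧ q ∈ P.start ∧ P.Accepts q (List.replicate i P.fresh ++ σ) k' := by
  generalize hw : config σ .grow = w at h
  induction h generalizing σ with
  | one => exact absurd hw (config_ne_one _ _)
  | round m mem winning ih =>
    obtain ⟨m', e, he, hm⟩ := exists_of_mem_moves (mem 0)
    have hwin := winning 0
    have hgrow (σ') := ih 0 (σ := σ')
    rw [hm, ← hw] at hwin hgrow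
    obtain ⟨y, rfl⟩ | ⟨q, rfl⟩ := eq_push_or_eq_start_of_winning hwin
    · obtain ⟨rfl, he⟩ := he
      obtain ⟨i, q, k', hk, hq, hacc⟩ := hgrow _ (config_mul_push σ _).symm
      refine ⟨i + 1, q, k', ?_, hq, ?_⟩
      · rw [abs_le] at hk he ⊢
        push_cast
        constructor <;> linarith
      · rwa [List.replicate_succ', List.append_assoc]
    · obtain ⟨hq, rfl⟩ := he
      rw [config_mul_start, add_zero] at hwin
      exact ⟨0, q, _, by simp, hq, accepts_of_winning hwin⟩

theorem winning_grow_of_accepts {σ : List Y} {k k' : ℤ} {i : ℕ} {q : Q} (hk : |k' - k| ≤ i)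
    (hq : q ∈ P.start) (h : P.Accepts q (List.replicate i P.fresh ++ σ) k') :
    Winning P.moves (config σ .grow) k := by
  induction i generalizing σ k with
  | zero =>
    obtain rfl : k' = k := by simpa [sub_eq_zero] using hk
    refine .of_forall_exists fun ℓ => ⟨_, mem_moves (m := .start q) ⟨hq, rfl⟩, ?_⟩
    rw [config_mul_start, add_zero]
    exact winning_of_accepts h
  | succ i ih =>
    obtain ⟨e, he, hk⟩ : ∃ e : ℤ, |e| ≤ 1 ∧ |k' - (k + e)| ≤ i := by
      rw [abs_le] at hk
      push_cast at hk
      simp only [abs_le]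
      obtain h | rfl | h := lt_trichotomy k' k
      exacts [⟨-1, by lia, by lia⟩, ⟨0, by lia, by lia⟩, ⟨1, by lia, by lia⟩]
    refine .of_forall_exists fun ℓ => ⟨_, mem_moves (m := .push P.fresh) ⟨rfl, he⟩, ?_⟩
    rw [config_mul_push]
    refine ih hk ?_
    rwa [List.replicate_succ', List.append_assoc] at h

theorem winning_grow_iff {σ : List Y} {k : ℤ} : Winning P.moves (config σ .grow) k ↔
    ∃ (i : ℕ) (q : Q) (k' : ℤ),
      |k' - k| ≤ i ∧ q ∈ P.start ∧ P.Accepts q (List.replicate i P.fresh ++ σ) k' :=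
  ⟨exists_accepts_of_winning_grow, fun ⟨_, _, _, hk, hq, h⟩ => winning_grow_of_accepts hk hq h⟩

theorem mk_stackWord (σ : List Y) : FreeGroup.mk (stackWord σ) =
    ((σ.map fun y => FreeGroup.of (Letter.sym (Q := Q) y)).reverse).prod := by
  induction σ with
  | nil => rfl
  | cons y σ ih =>
    rw [stackWord_cons, ← FreeGroup.mul_mk, ih, List.map_cons, List.reverse_cons,
      List.prod_append, List.prod_singleton]
    rfl

theorem config_eq_prod (σ : List Y) (x : Letter Q Y) :
    config σ x = ((σ.map fun y => FreeGroup.of (.sym y)).reverse).prod * .of x := by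
  rw [← mk_stackWord, config, ← FreeGroup.mul_mk]
  rfl

theorem exists_wordGame (P : CounterPDA Q Y) [Finite Q] [Finite Y] :
    ∃ (A D : List (F2 × ℤ)) (s : Y → F2) (g : F2), ∀ σ : List Y,
      WWGAttackerWins A D ((σ.map s).reverse.prod * g) ↔ ∃ (i : ℕ) (q : Q) (k : ℤ),
        |k| ≤ i ∧ q ∈ P.start ∧ P.Accepts q (List.replicate i P.fresh ++ σ) k := by
  obtain ⟨A, D, φ, h⟩ := exists_wordGame_of_choiceGame P.moves P.finite_moves (P.nonempty_moves 0)
  refine ⟨A, D, fun y => φ (.of (.sym y)), φ (.of .grow), fun σ => ?_⟩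
  have := h _ (config_ne_one σ .grow)
  rw [winning_grow_iff, config_eq_prod, map_mul, map_list_prod, List.map_reverse, List.map_map]
    at this
  simpa only [sub_zero, Function.comp_def] using this

end CounterPDA

end Pushdown

section CellularAutomaton

/-- A one-dimensional cellular automaton of radius one whose local rule depends on an input letter
in `Y`, started from a single cell `seed` on a quiescent background. -/
structure Automaton (X Y : Type*) where
  rule : Y → (SignType → X) → X
  seed : X
  blank : X
  rule_blank : ∀ y, rule y (fun _ => blank) = blank

namespace Automaton

variable {X Y : Type*} (M : Automaton X Y)

/-- The content of the cell `j` after reading a list of inputs, the most recent of which is the head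
of the list. -/
def cell : List Y → ℤ → X
  | [], j => if j = 0 then M.seed else M.blank
  | y :: σ, j => M.rule y fun ℓ => cell σ (j + ℓ)

theorem cell_eq_blank {σ : List Y} {j : ℤ} (hj : σ.length < |j|) : M.cell σ j = M.blank := by
  induction σ generalizing j with
  | nil => exact if_neg (abs_pos.1 hj)
  | cons y σ ih =>
    rw [cell, ← M.rule_blank y]
    congr 1
    funext ℓ
    refine ih ?_
    have := abs_sub_abs_le_abs_add j ℓ
    have := abs_coe_signType_le_one ℓ
    rw [List.length_cons] at hj
    push_cast at hj
    linarith

/-- The pushdown machine that verifies a claim `τ` about the cells `j - 1`, `j`, `j + 1`, where `j`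
is the counter. The opponent selects the cell `j + ℓ`. Either its content is justified by a claim
about the previous time step, or it is claimed to be blank because `j + ℓ` lies to the side `ε` of
the light cone. The latter is checked in state `ε` by comparing the counter with the number of
remaining time steps. -/
def checker [Finite X] (fresh : Y) (S : Set X) : CounterPDA ((SignType → X) ⊕ ℤˣ) Y where
  fresh := fresh
  start := Sum.inl '' {τ | τ 0 ∈ S}
  pop ℓ q y := q.elim
    (fun τ => {r | (∃ τ', M.rule y τ' = τ ℓ ∧ r = (.inl τ', (ℓ : ℤ))) ∨
      ∃ (ε : ℤˣ) (e : ℤ), τ ℓ = M.blank ∧ |e| ≤ 2 ∧ 1 < ε * ((ℓ : ℤ) - e) ∧ r = (.inr ε, e)})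
    (fun ε : ℤˣ => {(.inr ε, -(ε : ℤ))})
  final ℓ q := q.elim (fun τ => {e | |e| ≤ 1 ∧ τ ℓ = M.cell [] ((ℓ : ℤ) - e)}) (fun _ => {0})
  finite_pop := by
    rintro ℓ (τ | _) y
    · refine (Set.finite_univ.prod (Set.finite_Icc (-2 : ℤ) 2)).subset ?_
      rintro _ (⟨τ', -, rfl⟩ | ⟨_, e, -, he, -, rfl⟩)
      · have := abs_le.1 (abs_coe_signType_le_one ℓ)
        exact ⟨trivial, by grind⟩
      · exact ⟨trivial, abs_le.1 he⟩
    · exact Set.finite_singleton _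
  finite_final := by
    rintro ℓ (τ | _)
    · exact (Set.finite_Icc (-1 : ℤ) 1).subset fun e he => abs_le.1 he.1
    · exact Set.finite_singleton _

variable [Finite X] {fresh : Y} {S : Set X}

theorem checker_accepts_inr_iff {ε : ℤˣ} {σ : List Y} {k : ℤ} :
    (M.checker fresh S).Accepts (.inr ε) σ k ↔ k = ε * σ.length := by
  induction σ generalizing k with
  | nil => simp [CounterPDA.Accepts, checker]
  | cons y σ ih =>
    simp only [CounterPDA.Accepts, checker, Sum.elim_inr, Set.mem_singleton_iff, exists_eq_left,
      forall_const]
    exact ih.trans (by rw [List.length_cons]; push_cast; constructor <;> intro h <;> linarith)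

theorem cell_eq_of_checker_accepts {τ : SignType → X} {σ : List Y} {j : ℤ}
    (h : (M.checker fresh S).Accepts (.inl τ) σ j) (ℓ : SignType) : M.cell σ (j + ℓ) = τ ℓ := by
  induction σ generalizing τ j ℓ with
  | nil =>
    rw [(h ℓ).2, sub_neg_eq_add, add_comm]
  | cons y σ ih =>
    obtain ⟨r, ⟨τ', hτ, rfl⟩ | ⟨ε, e, hblank, -, he, rfl⟩, hacc⟩ := h ℓ
    · rw [← hτ, cell]
      exact congrArg _ (funext fun ℓ' => ih hacc ℓ')
    · rw [hblank]
      refine M.cell_eq_blank ?_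
      rw [M.checker_accepts_inr_iff] at hacc
      rw [List.length_cons, lt_abs]
      obtain rfl | rfl := Int.units_eq_one_or ε <;> push_cast at hacc he ⊢ <;> lia

theorem checker_accepts_of_abs_le {σ : List Y} {j : ℤ} (hj : |j| ≤ σ.length + 1) :
    (M.checker fresh S).Accepts (.inl fun ℓ => M.cell σ (j + ℓ)) σ j := by
  induction σ generalizing j with
  | nil =>
    refine fun ℓ => ⟨by simpa using hj, ?_⟩
    rw [sub_neg_eq_add, add_comm]
  | cons y σ ih =>
    intro ℓ
    by_cases inside : |j + (ℓ : ℤ)| ≤ σ.length + 1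
    · exact ⟨_, .inl ⟨_, rfl, rfl⟩, ih inside⟩
    · have hℓ := abs_le.1 (abs_coe_signType_le_one ℓ)
      rw [List.length_cons, abs_le] at hj
      rw [not_le] at inside
      have blank : M.cell (y :: σ) (j + ℓ) = M.blank :=
        M.cell_eq_blank (by rw [List.length_cons]; exact_mod_cast inside)
      obtain ⟨ε, hε⟩ : ∃ ε : ℤˣ, σ.length + 1 < (ε : ℤ) * (j + ℓ) := by
        rcases lt_abs.1 inside with h | h
        · exact ⟨1, by simpa using h⟩
        · exact ⟨-1, by simpa using h⟩
      have weight : |(ε : ℤ) * σ.length - j| ≤ 2 ∧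
          1 < (ε : ℤ) * ((ℓ : ℤ) - ((ε : ℤ) * σ.length - j)) := by
        push_cast at hj
        rw [abs_le]
        obtain rfl | rfl := Int.units_eq_one_or ε <;> push_cast at hε ⊢ <;>
          exact ⟨by lia, by lia⟩
      exact ⟨(.inr ε, ε * σ.length - j), .inr ⟨ε, _, blank, weight.1, weight.2, rfl⟩,
        M.checker_accepts_inr_iff.2 (add_sub_cancel _ _)⟩

theorem exists_wordGame [Finite Y] (fresh : Y) (S : Set X) :
    ∃ (A D : List (F2 × ℤ)) (s : Y → F2) (g : F2), ∀ σ : List Y,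
      WWGAttackerWins A D ((σ.map s).reverse.prod * g) ↔
        ∃ (i : ℕ) (k : ℤ), |k| ≤ i ∧ M.cell (List.replicate i fresh ++ σ) k ∈ S := by
  obtain ⟨A, D, s, g, h⟩ := (M.checker fresh S).exists_wordGame
  refine ⟨A, D, s, g, fun σ => (h σ).trans (exists_congr fun i => ⟨?_, ?_⟩)⟩
  · rintro ⟨_, k, hk, ⟨τ, hτ, rfl⟩, hacc⟩
    refine ⟨k, hk, ?_⟩
    have := M.cell_eq_of_checker_accepts hacc 0
    rw [SignType.coe_zero, add_zero] at this
    exact this ▸ hτ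
  · rintro ⟨k, hk, hS⟩
    refine ⟨_, k, hk, ⟨_, ?_, rfl⟩, M.checker_accepts_of_abs_le ?_⟩
    · exact (by simpa using hS : M.cell (List.replicate i fresh ++ σ) (k + (0 : SignType)) ∈ S)
    · rw [List.length_append, List.length_replicate]
      push_cast
      linarith

end Automaton

end CellularAutomaton

section TuringMachine

open Turing

theorem orElse_signType_ite {α : Type*} (s : SignType) (v : Option α) :
    ((if (-1 : SignType) = s then v else none) <|> (if 0 = s then v else none) <|>
      if 1 = s then v else none) = v := by
  cases s <;> simp

/-- The translation of a tape by `s` cells. -/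
def moveBy {Γ : Type*} [Inhabited Γ] : SignType → Tape Γ → Tape Γ
  | .neg, T => T.move .left
  | .zero, T => T
  | .pos, T => T.move .right

theorem moveBy_nth {Γ : Type*} [Inhabited Γ] (s : SignType) (T : Tape Γ) (j : ℤ) :
    (moveBy s T).nth j = T.nth (j + s) := by
  cases s
  · exact congrArg T.nth (add_zero j).symm
  · exact T.move_left_nth j
  · exact T.move_right_nth j

theorem tape_mk₁_nil_nth {Γ : Type*} [Inhabited Γ] (j : ℤ) :
    (Tape.mk₁ ([] : List Γ)).nth j = default := by
  rcases j with (_ | _) | _ <;>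
    simp [Tape.nth, Tape.mk₁, Tape.mk₂, ListBlank.nth_mk, ListBlank.tail_mk]

theorem stateTransition_eval_dom_iff {σ : Type*} (f : σ → Option σ) (a : σ) :
    (StateTransition.eval f a).Dom ↔ ∃ i : ℕ, f ((fun c => (f c).getD c)^[i] a) = none := by
  have reaches (i : ℕ) : StateTransition.Reaches f a ((fun c => (f c).getD c)^[i] a) := by
    induction i with
    | zero => exact .refl
    | succ i ih =>
      rw [Function.iterate_succ_apply']
      cases h : f ((fun c => (f c).getD c)^[i] a) with
      | none => exact ih
      | some b => exact ih.tail h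
  rw [Part.dom_iff_mem]
  refine ⟨?_, fun ⟨i, hi⟩ => ⟨_, StateTransition.mem_eval.2 ⟨reaches i, hi⟩⟩⟩
  rintro ⟨b, hb⟩
  obtain ⟨hreach, hhalt⟩ := StateTransition.mem_eval.1 hb
  suffices ∃ i, (fun c => (f c).getD c)^[i] a = b by
    obtain ⟨i, rfl⟩ := this
    exact ⟨i, hhalt⟩
  clear hb hhalt
  induction hreach with
  | refl => exact ⟨0, rfl⟩
  | tail _ h ih =>
    obtain ⟨i, rfl⟩ := ih
    exact ⟨i + 1, by rw [Function.iterate_succ_apply', Option.mem_def.1 h, Option.getD_some]⟩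

namespace TuringMachine

variable {Γ Λ : Type*} [Inhabited Γ] [Inhabited Λ] (M : TM0.Machine Γ Λ)

/-- The action of a machine on the head, as a translation, a new state and possibly a symbol to be
written after the translation. The input `none` runs one step of the machine, where a halted machine
stays put; the input `some x` instead prepends `x` to the tape. -/
def action : Option Γ → Λ → Γ → SignType × Λ × Option Γ
  | some x, q, _ => (-1, q, some x)
  | none, q, a => match M q a with
    | none => (0, q, none)
    | some (q', .move .left) => (-1, q', none)
    | some (q', .move .right) => (1, q', none)
    | some (q', .write b) => (0, q', some b)

/-- The effect of an input on the absolute position of the head and the configuration. -/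
def advance (y : Option Γ) (G : ℤ × TM0.Cfg Γ Λ) : ℤ × TM0.Cfg Γ Λ :=
  let r := action M y G.2.q G.2.Tape.head
  (G.1 + r.1, ⟨r.2.1, r.2.2.elim (moveBy r.1 G.2.Tape) (moveBy r.1 G.2.Tape).write⟩)

/-- The position and configuration after reading a list of inputs, the most recent of which is the
head of the list. -/
def run : List (Option Γ) → ℤ × TM0.Cfg Γ Λ
  | [] => (0, TM0.init [])
  | y :: σ => advance M y (run σ)

theorem run_map_some (l : List Γ) : (run M (l.map some)).2 = TM0.init l := by
  induction l with
  | nil => rfl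
  | cons x l ih =>
    rw [List.map_cons, run, advance, ih]
    simp [action, moveBy, TM0.init, Tape.mk₁, Tape.mk₂]

theorem advance_none_snd (G : ℤ × TM0.Cfg Γ Λ) :
    (advance M none G).2 = (TM0.step M G.2).getD G.2 := by
  obtain ⟨p, q, T⟩ := G
  rcases h : M q T.head with _ | ⟨q', (_ | _) | a⟩ <;> simp [advance, action, TM0.step, h, moveBy]

theorem advance_none_of_step_eq_none {G : ℤ × TM0.Cfg Γ Λ} (h : TM0.step M G.2 = none) :
    advance M none G = G := by
  obtain ⟨p, q, T⟩ := G
  have h : M q T.head = none := Option.map_eq_none_iff.1 h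
  simp [advance, action, h, moveBy]

theorem run_replicate_none_append_snd (σ : List (Option Γ)) (i : ℕ) :
    (run M (List.replicate i none ++ σ)).2 =
      (fun c => (TM0.step M c).getD c)^[i] (run M σ).2 := by
  induction i with
  | zero => rfl
  | succ i ih =>
    rw [List.replicate_succ, List.cons_append, run, advance_none_snd, ih,
      Function.iterate_succ_apply']

theorem run_replicate_none_append_of_step_eq_none {σ : List (Option Γ)}
    (h : TM0.step M (run M σ).2 = none) (i : ℕ) : run M (List.replicate i none ++ σ) = run M σ := by
  induction i with
  | zero => rfl
  | succ i ih =>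
    rw [List.replicate_succ, List.cons_append, run, ih, advance_none_of_step_eq_none M h]

/-- The content of the cell `j`: its tape symbol and, if the head is there, the state. -/
def content (G : ℤ × TM0.Cfg Γ Λ) (j : ℤ) : Γ × Option Λ :=
  (G.2.Tape.nth (j - G.1), if j = G.1 then some G.2.q else none)

/-- The state and written symbol with which the head, if it is at the neighbour in direction `ℓ`,
arrives at the current cell. -/
def arrival (y : Option Γ) (τ : SignType → Γ × Option Λ) (ℓ : SignType) : Option (Λ × Option Γ) :=
  (τ ℓ).2.bind fun q =>
    let r := action M y q (τ ℓ).1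
    if ℓ = -r.1 then some r.2 else none

/-- The cellular automaton that simulates a machine. -/
def automaton : Automaton (Γ × Option Λ) (Option Γ) where
  rule y τ := match arrival M y τ (-1) <|> arrival M y τ 0 <|> arrival M y τ 1 with
    | none => ((τ 0).1, none)
    | some (q, b) => (b.getD (τ 0).1, some q)
  seed := (default, some default)
  blank := (default, none)
  rule_blank _ := rfl

theorem arrival_content (y : Option Γ) (G : ℤ × TM0.Cfg Γ Λ) (j : ℤ) (ℓ : SignType) :
    arrival M y (fun ℓ => content G (j + ℓ)) ℓ =
      if ℓ = -(action M y G.2.q G.2.Tape.head).1 then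
        if j = (advance M y G).1 then some (action M y G.2.q G.2.Tape.head).2 else none
      else none := by
  by_cases head : j + (ℓ : ℤ) = G.1
  · have : j = (advance M y G).1 ↔ ℓ = -(action M y G.2.q G.2.Tape.head).1 := by
      rw [advance, ← coe_signType_injective.eq_iff, SignType.coe_neg]
      constructor <;> intro h <;> lia
    simp only [arrival, content, head, if_true, Option.bind_some, sub_self, Tape.nth_zero, this]
    grind
  · have : ¬(ℓ = -(action M y G.2.q G.2.Tape.head).1 ∧ j = (advance M y G).1) := by
      rintro ⟨rfl, rfl⟩
      exact head (by rw [advance, SignType.coe_neg, add_neg_cancel_right])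
    simp only [arrival, content, head, if_false, Option.bind_none]
    grind

theorem advance_tape_nth (y : Option Γ) (G : ℤ × TM0.Cfg Γ Λ) (j : ℤ) :
    (advance M y G).2.Tape.nth (j - (advance M y G).1) =
      if j = (advance M y G).1 then
        (action M y G.2.q G.2.Tape.head).2.2.getD (G.2.Tape.nth (j - G.1))
      else G.2.Tape.nth (j - G.1) := by
  have shift : (moveBy (action M y G.2.q G.2.Tape.head).1 G.2.Tape).nth
      (j - (advance M y G).1) = G.2.Tape.nth (j - G.1) := by
    rw [moveBy_nth, advance]
    congr 1
    ring
  have tape : (advance M y G).2.Tape = (action M y G.2.q G.2.Tape.head).2.2.elim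
      (moveBy (action M y G.2.q G.2.Tape.head).1 G.2.Tape)
      (moveBy (action M y G.2.q G.2.Tape.head).1 G.2.Tape).write := rfl
  rw [← shift, tape]
  cases (action M y G.2.q G.2.Tape.head).2.2 with
  | none => rw [Option.getD_none, ite_self, Option.elim_none]
  | some b => exact (Tape.write_nth b _).trans (if_congr sub_eq_zero rfl rfl)

theorem rule_content (y : Option Γ) (G : ℤ × TM0.Cfg Γ Λ) (j : ℤ) :
    (automaton M).rule y (fun ℓ => content G (j + ℓ)) = content (advance M y G) j := by
  have center : j + ((0 : SignType) : ℤ) - G.1 = j - G.1 := by rw [SignType.coe_zero, add_zero]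
  rw [content, advance_tape_nth]
  simp only [automaton, arrival_content, orElse_signType_ite]
  by_cases head : j = (advance M y G).1
  · simp only [if_pos head, content, center]
    rfl
  · simp only [if_neg head, content, center]

theorem cell_automaton (σ : List (Option Γ)) (j : ℤ) :
    (automaton M).cell σ j = content (run M σ) j := by
  induction σ generalizing j with
  | nil =>
    simp only [Automaton.cell, automaton, content, run, TM0.init, tape_mk₁_nil_nth]
    split_ifs with h <;> simp only [h, if_true, if_false]
  | cons y σ ih =>
    simp only [Automaton.cell, run, ih, rule_content]

theorem exists_wordGame [Finite Γ] [Finite Λ] :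
    ∃ (A D : List (F2 × ℤ)) (x : Γ → F2) (g : F2), ∀ l : List Γ,
      WWGAttackerWins A D ((l.map x).reverse.prod * g) ↔ (TM0.eval M l).Dom := by
  obtain ⟨A, D, s, g, h⟩ := (automaton M).exists_wordGame none {z | ∃ q ∈ z.2, M q z.1 = none}
  refine ⟨A, D, s ∘ some, g, fun l => ?_⟩
  have halted (σ : List (Option Γ)) (k : ℤ) :
      (automaton M).cell σ k ∈ {z | ∃ q ∈ z.2, M q z.1 = none} ↔
        k = (run M σ).1 ∧ TM0.step M (run M σ).2 = none := by
    by_cases hk : k = (run M σ).1 <;> simp [cell_automaton, content, hk, TM0.step]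
  have eval_dom : (TM0.eval M l).Dom ↔
      ∃ i, TM0.step M (run M (List.replicate i none ++ l.map some)).2 = none := by
    simp only [run_replicate_none_append_snd, run_map_some]
    exact stateTransition_eval_dom_iff _ _
  rw [← List.map_map, h, eval_dom]
  simp only [halted]
  constructor
  · rintro ⟨i, k, -, -, hi⟩
    exact ⟨i, hi⟩
  · rintro ⟨i, hi⟩
    -- A halted machine can be left running until its position lies in the range of the counter.
    have stable := run_replicate_none_append_of_step_eq_none M hi
      (run M (List.replicate i none ++ l.map some)).1.natAbs
    rw [← List.append_assoc, List.replicate_append_replicate] at stable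
    refine ⟨_, _, ?_, rfl, stable ▸ hi⟩
    rw [stable]
    push_cast
    lia

end TuringMachine

end TuringMachine

section UniversalMachine

open Turing

theorem exists_finite_tm0_eval_dom_iff {Γ Λ : Type} [Inhabited Γ] [Inhabited Λ]
    (M : TM0.Machine Γ Λ) {S : Finset Λ} (hS : TM0.Supports M S) :
    ∃ (Λ' : Type) (_ : Inhabited Λ') (_ : Finite Λ') (M' : TM0.Machine Γ Λ'),
      ∀ l, (TM0.eval M' l).Dom ↔ (TM0.eval M l).Dom := by
  classical
  let _ : Inhabited S := ⟨⟨default, hS.1⟩⟩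
  let id' : PointedMap Γ Γ := ⟨id, rfl⟩
  let restrict : PointedMap Λ S := ⟨fun q => if h : q ∈ S then ⟨q, h⟩ else default, dif_pos hS.1⟩
  refine ⟨S, inferInstance, inferInstance, M.map id' id' restrict Subtype.val, fun l => ?_⟩
  have restrict_val (q) (hq : q ∈ (S : Set Λ)) : (restrict q).val = q :=
    congrArg Subtype.val (dif_pos hq)
  have init : TM0.init l = (TM0.init l : TM0.Cfg Γ Λ).map id' restrict := by
    rw [TM0.map_init]
    exact congrArg _ l.map_id.symm
  exact StateTransition.tr_eval_dom
    (TM0.Machine.map_respects M id' id' restrict _ hS (fun _ => rfl) restrict_val) ⟨hS.1, init.symm⟩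

theorem exists_tm0_eval_dom_iff_tm2_eval_dom {K : Type} [DecidableEq K] {Γ : K → Type}
    {Λ σ : Type} [Inhabited Λ] [Inhabited σ] [Finite K] [∀ k, Finite (Γ k)] [Finite σ]
    (M : Λ → TM2.Stmt Γ Λ σ) {S : Finset Λ} (hS : TM2.Supports M S) (k : K) :
    ∃ (Λ' : Type) (_ : Inhabited Λ') (_ : Finite Λ') (M' : TM0.Machine (TM2to1.Γ' K Γ) Λ'),
      ∀ L, (TM0.eval M' (TM2to1.trInit k L)).Dom ↔ (TM2.eval M k L).Dom := by
  have := Fintype.ofFinite K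
  have := fun k => Fintype.ofFinite (Γ k)
  have := Fintype.ofFinite σ
  obtain ⟨Λ', _, _, M', h⟩ :=
    exists_finite_tm0_eval_dom_iff _ (TM1to0.tr_supports _ (TM2to1.tr_supports M hS))
  exact ⟨Λ', _, ‹_›, M', fun L => by rw [h, TM1to0.tr_eval, TM2to1.tr_eval_dom]⟩

/- The input with code `mersenne k = 2 ^ k - 1` is written in binary as `k` equal symbols, so that
the initial word of the game is a power of a fixed word times a fixed word. -/
theorem trNat_mersenne (k : ℕ) :
    PartrecToTM2.trNat (mersenne k) = List.replicate k PartrecToTM2.Γ'.bit1 := by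
  induction k with
  | zero => rfl
  | succ k ih =>
    have bit1 : ((mersenne (k + 1) : ℕ) : Num) = Num.bit1 (mersenne k : Num) := by
      rw [← Num.bit1_of_bit1, mersenne_succ]
      push_cast
      ring
    rw [List.replicate_succ, ← ih, PartrecToTM2.trNat, PartrecToTM2.trNat, bit1]
    cases (mersenne k : Num) <;> rfl

instance : Fintype PartrecToTM2.K' :=
  ⟨{.main, .rev, .aux, .stack}, fun x => by cases x <;> simp⟩

theorem exists_tm2_eval_dom_iff {f : ℕ →. ℕ} (hf : Partrec f) :
    ∃ (_ : Inhabited PartrecToTM2.Λ') (S : Finset PartrecToTM2.Λ'),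
      TM2.Supports PartrecToTM2.tr S ∧ ∀ n,
        (TM2.eval PartrecToTM2.tr .main (PartrecToTM2.trList [n])).Dom ↔ (f n).Dom := by
  obtain ⟨c, hc⟩ := ToPartrec.Code.exists_code (Nat.Partrec'.part_iff₁.2 hf)
  let _ : Inhabited PartrecToTM2.Λ' := ⟨PartrecToTM2.trNormal c .halt⟩
  refine ⟨inferInstance, _, PartrecToTM2.tr_supports c .halt, fun n => ?_⟩
  have init : TM2.init PartrecToTM2.K'.main (PartrecToTM2.trList [n]) =
      PartrecToTM2.init c [n] := by
    rw [TM2.init, PartrecToTM2.init]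
    congr 1
    funext z
    cases z <;> rfl
  have eval : c.eval [n] = pure <$> f n := hc ⟨[n], rfl⟩
  change (StateTransition.eval (TM2.step PartrecToTM2.tr) (TM2.init _ _)).Dom ↔ _
  rw [init, PartrecToTM2.tr_eval, eval]
  exact Iff.rfl

theorem exists_tm0_eval_dom_iff {f : ℕ →. ℕ} (hf : Partrec f) :
    ∃ (Γ Λ : Type) (_ : Inhabited Γ) (_ : Inhabited Λ) (_ : Finite Γ) (_ : Finite Λ)
      (M : TM0.Machine Γ Λ) (a b : Γ), ∀ k : ℕ,
        (TM0.eval M (b :: List.replicate k a)).Dom ↔ (f (mersenne k)).Dom := by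
  obtain ⟨_, S, hS, h⟩ := exists_tm2_eval_dom_iff hf
  obtain ⟨Λ, _, _, M, hM⟩ := exists_tm0_eval_dom_iff_tm2_eval_dom PartrecToTM2.tr hS .main
  let symbol (z : PartrecToTM2.Γ') : PartrecToTM2.K' → Option PartrecToTM2.Γ' :=
    Function.update (fun _ => none) .main (some z)
  refine ⟨TM2to1.Γ' PartrecToTM2.K' fun _ => PartrecToTM2.Γ', Λ, inferInstance, inferInstance,
    inferInstance, inferInstance, M,
    (false, symbol .bit1), (true, symbol .cons), fun k => ?_⟩
  have reverse_trList : (PartrecToTM2.trList [mersenne k]).reverse =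
      .cons :: List.replicate k .bit1 := by
    simp [PartrecToTM2.trList, trNat_mersenne]
  have trInit : TM2to1.trInit .main (PartrecToTM2.trList [mersenne k]) =
      (true, symbol .cons) :: List.replicate k (false, symbol .bit1) := by
    rw [TM2to1.trInit, reverse_trList]
    exact congrArg _ List.map_replicate
  rw [← h, ← hM, trInit]
  exact Iff.rfl

theorem exists_partrec_comp_eq {s : ℕ → ℕ} (hs : Computable s) (inj : Function.Injective s)
    {f : ℕ →. ℕ} (hf : Partrec f) : ∃ g : ℕ →. ℕ, Partrec g ∧ ∀ k, g (s k) = f k := by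
  refine ⟨fun m => (Nat.rfind fun k => Part.some (decide (s k = m))).bind f, ?_, fun k => ?_⟩
  · have decides : Computable₂ fun m k => decide (s k = m) :=
      (Primrec.eq (α := ℕ)).decide.to_comp.comp (hs.comp Computable.snd) Computable.fst
    exact (Partrec.rfind decides.partrec₂).bind (hf.comp Computable.snd)
  · have find : k ∈ Nat.rfind fun j => Part.some (decide (s j = s k)) :=
      Nat.mem_rfind.2 ⟨by simp, fun hm => by simp [inj.ne hm.ne]⟩
    exact (congrArg (·.bind f) (Part.eq_some_iff.2 find)).trans (Part.bind_some k f)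

theorem mersenne_computable : Computable mersenne := by
  have step : Primrec₂ fun _ y : ℕ => 2 * y + 1 :=
    Primrec.succ.comp (Primrec.nat_mul.comp (Primrec.const 2) Primrec.snd)
  refine (Primrec.nat_rec₁ 0 step).to_comp.of_eq fun k => ?_
  induction k with
  | zero => rfl
  | succ k ih => rw [mersenne_succ, ← ih]

theorem exists_universal_tm0 :
    ∃ (Γ Λ : Type) (_ : Inhabited Γ) (_ : Inhabited Λ) (_ : Finite Γ) (_ : Finite Λ)
      (M : TM0.Machine Γ Λ) (a b : Γ), ∀ c : Nat.Partrec.Code,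
        (TM0.eval M (b :: List.replicate (Encodable.encode c) a)).Dom ↔ (c.eval 0).Dom := by
  have halting : Partrec fun k : ℕ =>
      (Denumerable.ofNat Nat.Partrec.Code k).eval 0 :=
    Nat.Partrec.Code.eval_part.comp (Computable.ofNat _) (Computable.const 0)
  obtain ⟨g, hg, hgs⟩ := exists_partrec_comp_eq mersenne_computable
    strictMono_mersenne.injective halting
  obtain ⟨Γ, Λ, _, _, _, _, M, a, b, h⟩ := exists_tm0_eval_dom_iff hg
  refine ⟨Γ, Λ, inferInstance, inferInstance, inferInstance, inferInstance, M, a, b, fun c => ?_⟩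
  rw [h, hgs, Denumerable.ofNat_encode]

end UniversalMachine

section Undecidability

theorem exists_wordGame_halting :
    ∃ (A D : List (F2 × ℤ)) (x y : F2), ∀ c : Nat.Partrec.Code,
      WWGAttackerWins A D (x ^ Encodable.encode c * y) ↔ (c.eval 0).Dom := by
  obtain ⟨Γ, Λ, _, _, _, _, M, a, b, hM⟩ := exists_universal_tm0
  obtain ⟨A, D, x, g, h⟩ := TuringMachine.exists_wordGame M
  refine ⟨A, D, x a, x b * g, fun c => ?_⟩
  rw [← hM, ← h, List.map_cons, List.map_replicate, List.reverse_cons, List.reverse_replicate,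
    List.prod_append, List.prod_replicate, List.prod_singleton, mul_assoc]

theorem exists_computable_mk_eq_pow_mul {α : Type*} [Primcodable α] (x y : FreeGroup α) :
    ∃ w : ℕ → List (α × Bool), Computable w ∧ ∀ k, FreeGroup.mk (w k) = x ^ k * y := by
  classical
  have append : Primrec₂ fun (_ : ℕ) (u : List (α × Bool)) => x.toWord ++ u :=
    Primrec.list_append.comp (Primrec.const _) Primrec.snd
  refine ⟨_, (Primrec.nat_rec₁ y.toWord append).to_comp, fun k => ?_⟩
  induction k with
  | zero => exact FreeGroup.mk_toWord.trans (one_mul y).symm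
  | succ k ih => rw [← FreeGroup.mul_mk, ih, FreeGroup.mk_toWord, pow_succ', mul_assoc]

theorem map_mk_map_toWord {α β : Type*} [DecidableEq α] (A : List (FreeGroup α × β)) :
    (A.map fun p => (p.1.toWord, p.2)).map (fun p => (FreeGroup.mk p.1, p.2)) = A := by
  simp [Function.comp_def, FreeGroup.mk_toWord]

end Undecidability

end WordGame

/-- It is undecidable whether Attacker has a winning strategy in the weighted Word Game
with words over a binary free group alphabet. -/
theorem weighted_word_game_undecidable :
    ¬ ComputablePred (fun inst : WWGInstance =>
      WWGAttackerWins (inst.1.map fun p => (FreeGroup.mk p.1, p.2))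
        (inst.2.1.map fun p => (FreeGroup.mk p.1, p.2))
        (FreeGroup.mk inst.2.2)) := by
  intro decidable
  obtain ⟨A, D, x, y, wins_iff⟩ := WordGame.exists_wordGame_halting
  obtain ⟨w, computable_w, mk_w⟩ := WordGame.exists_computable_mk_eq_pow_mul x y
  let inst (c : Nat.Partrec.Code) : WWGInstance :=
    (A.map fun p => (p.1.toWord, p.2), D.map fun p => (p.1.toWord, p.2), w (Encodable.encode c))
  have computable_inst : Computable inst :=
    (Computable.const _).pair ((Computable.const _).pair (computable_w.comp Computable.encode))
  refine ComputablePred.halting_problem 0 <|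
    ComputablePred.computable_of_manyOneReducible ⟨inst, computable_inst, fun c => ?_⟩ decidable
  dsimp only [inst]
  rw [WordGame.map_mk_map_toWord, WordGame.map_mk_map_toWord, mk_w, wins_iff]
end

section
/- It is undecidable whether Attacker has a winning strategy in the Word Game on pairs of group words when the initial position is the pair of empty words (1, 1): the predicate on encoded instances (Attacker's finite list of pairs in F₂ × F₁ and Defender's finite list of pairs in F₂ × F₁ with identity second components, the initial configuration being fixed as (1, 1)) asserting that Attacker has a winning strategy is not a computable predicate. -/
/-- The free group on one generator `ρ`. -/
abbrev F1 : Type := FreeGroup Unit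

/-- A word over the unary group alphabet `{ρ, ρ̄}`. -/
abbrev UWord : Type := List (Unit × Bool)

/-- An encoded instance of the Word Game on pairs with initial position `(1, 1)`:
Attacker's finite list of pairs of words `(u_i, u_i')` and Defender's finite list of words
`v_j` (their second components being the identity). -/
abbrev WGInstance : Type := List (BWord × UWord) × List BWord

/-- The configuration after `k` rounds of the Word Game on pairs, starting from `w0`, when
Defender plays the sequence of moves `δ` and Attacker follows the strategy `st` (a function
of the finite history of Defender's choices so far); moves act by componentwise right
multiplication. -/
def wgPos (w0 : F2 × F1) (δ : ℕ → F2 × F1) (st : List (F2 × F1) → F2 × F1) : ℕ → F2 × F1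
  | 0 => w0
  | k + 1 => wgPos w0 δ st k * δ k * st ((List.range (k + 1)).map δ)

/-- Attacker has a winning strategy in the Word Game on pairs with Attacker's list `A`,
Defender's list `D` and initial pair `w0`: there is a strategy, choosing a move from `A`
for every finite history of Defender's moves, such that every infinite play consistent with
it reaches the pair `(1, 1)` of empty words after some Attacker move. -/
def WGAttackerWins (A D : List (F2 × F1)) (w0 : F2 × F1) : Prop :=
  ∃ st : List (F2 × F1) → F2 × F1,
    (∀ hist, (∀ x ∈ hist, x ∈ D) → st hist ∈ A) ∧
    ∀ δ : ℕ → F2 × F1, (∀ i, δ i ∈ D) → ∃ n, wgPos w0 δ st (n + 1) = 1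

/-!
A Turing machine is a one-dimensional cellular automaton, and it halts iff some cell of the
space-time diagram is a halting cell. A diagram can be checked by an alternating system with two
integer counters and no zero tests: the counters locate a cell, the system guesses the contents of
the neighbourhood of a cell, a challenge selects one neighbour, and its contents have to be
justified by a neighbourhood one step earlier, until the input row is reached.

In the word game the first counter is the exponent of a counter letter in a free group, the second
counter is the component in `F₁`, and the state is a letter at the end of the word. Defender's moves
append challenge letters. Attacker's moves delete a challenge letter and the state letter, update
the counters and append the next state letter. If Attacker deletes the wrong challenge, a
challenge letter has negative exponent sum, and Defender keeps it negative forever. For a wrong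
state letter, let the counter letter act on the state letters by translation, so that they become
generators indexed by a counter value and a state. The resulting word ends in an inverse generator,
and it never cancels afterwards, because each move of Attacker appends at most one inverse generator
followed by a generator of larger rank.

Starting from `(1, 1)` costs nothing: a special challenge forces Attacker to write the initial state
letter, and any other opening challenge he cancels at once. Finally a free group on finitely many
letters embeds into `F₂` through the elements `c ^ i * d * c ^ (-i)`.
-/

section Game

variable {A D : List (F2 × F1)} {w : F2 × F1}

theorem wgPos_congr (w : F2 × F1) (δ : ℕ → F2 × F1) {st st' : List (F2 × F1) → F2 × F1}
    (h : ∀ d hist, st (d :: hist) = st' (d :: hist)) (n : ℕ) :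
    wgPos w δ st n = wgPos w δ st' n := by
  induction n with
  | zero => rfl
  | succ n ih => rw [wgPos, wgPos, ih, List.range_succ_eq_map, List.map_cons, h]

theorem wgPos_succ_eq_wgPos_residual (w : F2 × F1) (δ : ℕ → F2 × F1)
    (st : List (F2 × F1) → F2 × F1) (n : ℕ) :
    wgPos w δ st (n + 1) =
      wgPos (w * δ 0 * st [δ 0]) (fun i => δ (i + 1)) (fun hist => st (δ 0 :: hist)) n := by
  induction n with
  | zero => simp [wgPos]
  | succ n ih =>
    rw [wgPos, ih, wgPos, List.range_succ_eq_map]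
    simp [Function.comp_def]

theorem WGAttackerWins.of_forall_reply (hA : A ≠ [])
    (h : ∀ d ∈ D, ∃ u ∈ A, w * d * u = 1 ∨ WGAttackerWins A D (w * d * u)) :
    WGAttackerWins A D w := by
  obtain ⟨a, ha⟩ := List.exists_mem_of_ne_nil A hA
  have residual : ∀ d ∈ D, ∃ u ∈ A, ∃ σ : List (F2 × F1) → F2 × F1,
      (∀ hist, (∀ x ∈ hist, x ∈ D) → σ hist ∈ A) ∧ (w * d * u = 1 ∨
        ∀ δ : ℕ → F2 × F1, (∀ i, δ i ∈ D) → ∃ n, wgPos (w * d * u) δ σ (n + 1) = 1) := by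
    intro d hd
    obtain ⟨u, hu, hone | ⟨σ, hσ, hwin⟩⟩ := h d hd
    · exact ⟨u, hu, fun _ => a, fun _ _ => ha, .inl hone⟩
    · exact ⟨u, hu, σ, hσ, .inr hwin⟩
  choose! u hu σ hσ hwin using residual
  let st : List (F2 × F1) → F2 × F1
    | [] => a
    | [d] => u d
    | d :: e :: hist => σ d (e :: hist)
  refine ⟨st, ?_, fun δ hδ => ?_⟩
  · rintro (_ | ⟨d, _ | ⟨e, hist⟩⟩) hmem
    · exact ha
    · exact hu d (hmem d (by simp))
    · exact hσ d (hmem d (by simp)) _ fun x hx => hmem x (List.mem_cons_of_mem _ hx)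
  · rcases hwin (δ 0) (hδ 0) with hone | hwin
    · exact ⟨0, by simpa [wgPos] using hone⟩
    · obtain ⟨n, hn⟩ := hwin (fun i => δ (i + 1)) fun i => hδ (i + 1)
      refine ⟨n + 1, ?_⟩
      rw [wgPos_succ_eq_wgPos_residual, ← hn]
      exact wgPos_congr _ _ (st := fun hist => st (δ 0 :: hist)) (fun _ _ => rfl) _

theorem not_wgAttackerWins_of_invariant {Inv : F2 × F1 → Prop} (hw : Inv w)
    (h : ∀ g, Inv g → ∃ d ∈ D, ∀ u ∈ A, g * d * u ≠ 1 ∧ Inv (g * d * u)) :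
    ¬ WGAttackerWins A D w := by
  rintro ⟨st, hst, hwin⟩
  choose! d hd hInv using h
  let round (s : (F2 × F1) × (List (F2 × F1) → F2 × F1)) :
      (F2 × F1) × (List (F2 × F1) → F2 × F1) :=
    (s.1 * d s.1 * s.2 [d s.1], fun hist => s.2 (d s.1 :: hist))
  have legal : ∀ n, Inv (round^[n] (w, st)).1 ∧
      ∀ hist, (∀ x ∈ hist, x ∈ D) → (round^[n] (w, st)).2 hist ∈ A := by
    intro n
    induction n with
    | zero => exact ⟨hw, hst⟩
    | succ n ih =>
      rw [Function.iterate_succ_apply']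
      exact ⟨(hInv _ ih.1 _ (ih.2 _ (List.forall_mem_singleton.2 (hd _ ih.1)))).2,
        fun hist hhist => ih.2 _ (List.forall_mem_cons.2 ⟨hd _ ih.1, hhist⟩)⟩
  have pos_eq : ∀ n s, wgPos s.1 (fun k => d (round^[k] s).1) s.2 n = (round^[n] s).1 := by
    intro n
    induction n with
    | zero => exact fun _ => rfl
    | succ n ih => exact fun s => (wgPos_succ_eq_wgPos_residual ..).trans (ih (round s))
  obtain ⟨n, hn⟩ := hwin (fun k => d (round^[k] (w, st)).1) fun k => hd _ (legal k).1
  rw [pos_eq _ (w, st), Function.iterate_succ_apply'] at hn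
  exact (hInv _ (legal n).1 _ ((legal n).2 _ (List.forall_mem_singleton.2 (hd _ (legal n).1)))).1 hn

end Game

section ShiftedFreeGroup

/-- The action of `ℤ` on the free group over `ℤ × Y` translating the first coordinate of the
generators. -/
def translationAut (Y : Type*) : Multiplicative ℤ →* MulAut (FreeGroup (ℤ × Y)) where
  toFun k := FreeGroup.freeGroupCongr ((Equiv.addLeft k.toAdd).prodCongr (Equiv.refl Y))
  map_one' := by
    ext x
    simp
  map_mul' a b := by
    apply MulEquiv.toMonoidHom_injective
    ext ⟨i, y⟩
    simp [add_assoc]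

@[simp]
theorem translationAut_of {Y : Type*} (k : Multiplicative ℤ) (i : ℤ) (y : Y) :
    translationAut Y k (FreeGroup.of (i, y)) = FreeGroup.of (k.toAdd + i, y) := by
  simp [translationAut]

/-- The homomorphism `x_i ↦ c ^ i * d * c ^ (-i)` from the free group over `ℤ`. -/
def conjPow : FreeGroup ℤ →* F2 :=
  FreeGroup.lift fun i => FreeGroup.of true ^ i * FreeGroup.of false * FreeGroup.of true ^ (-i)

theorem conjPow_injective : Function.Injective conjPow := by
  let ψ : F2 →* FreeGroup (ℤ × Unit) ⋊[translationAut Unit] Multiplicative ℤ :=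
    FreeGroup.lift fun b => if b then .inr (.ofAdd 1) else .inl (FreeGroup.of (0, ()))
  have hψ : ψ.comp conjPow = SemidirectProduct.inl.comp (FreeGroup.map fun i => (i, ())) := by
    ext1 i
    calc ψ (conjPow (FreeGroup.of i))
        = .inr (.ofAdd 1 ^ i) * .inl (FreeGroup.of (0, ())) * .inr (.ofAdd 1 ^ i)⁻¹ := by
          simp [ψ, conjPow]
      _ = .inl (FreeGroup.map (fun i => (i, ())) (FreeGroup.of i)) := by
          rw [← SemidirectProduct.inl_aut, translationAut_of]
          simp
  have hinj : Function.Injective (ψ ∘ conjPow) := by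
    rw [← MonoidHom.coe_comp, hψ]
    exact SemidirectProduct.inl_injective.comp
      (FreeGroup.map_injective (Prod.mk_left_injective ()))
  exact hinj.of_comp

theorem exists_injective_freeGroup_hom_F2 (X : Type*) [Countable X] :
    ∃ φ : FreeGroup X →* F2, Function.Injective φ := by
  obtain ⟨f, hf⟩ := exists_injective_nat X
  exact ⟨conjPow.comp (FreeGroup.map fun x => (f x : ℤ)),
    conjPow_injective.comp (FreeGroup.map_injective (Nat.cast_injective.comp hf))⟩

theorem of_zpow_eq_one_iff {k : ℤ} : (FreeGroup.of () : F1) ^ k = 1 ↔ k = 0 := by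
  rw [← FreeGroup.freeGroupUnitEquivInt.injective.eq_iff]
  simp

end ShiftedFreeGroup

section LastLetter

open FreeGroup (of mk IsReduced)

variable {V : Type*}

theorem mk_ne_one_of_isReduced {L : List (V × Bool)} (hL : IsReduced L) (h : L ≠ []) :
    mk L ≠ 1 := by
  classical
  rwa [Ne, ← FreeGroup.toWord_eq_nil_iff, FreeGroup.toWord_mk, hL.reduce_eq]

/-- The reduced word of `g` ends in the inverse letter `v⁻¹`. -/
def EndsInInv (g : FreeGroup V) (v : V) : Prop :=
  ∃ L, IsReduced (L ++ [(v, false)]) ∧ g = mk (L ++ [(v, false)])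

theorem endsInInv_inv_of (v : V) : EndsInInv (of v)⁻¹ v :=
  ⟨[], .singleton, rfl⟩

theorem endsInInv_of_mul_inv_of {u v : V} (h : u ≠ v) : EndsInInv (of u * (of v)⁻¹) v :=
  ⟨[(u, true)], by simp [h], rfl⟩

namespace EndsInInv

variable {n : FreeGroup V} {u v s : V}

theorem ne_one (h : EndsInInv n u) : n ≠ 1 := by
  obtain ⟨L, hL, rfl⟩ := h
  exact mk_ne_one_of_isReduced hL (by simp)

theorem mul_of_ne_one (h : EndsInInv n u) (huv : u ≠ v) : n * of v ≠ 1 := by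
  obtain ⟨L, hL, rfl⟩ := h
  refine mk_ne_one_of_isReduced (L := L ++ [(u, false)] ++ [(v, true)]) ?_ (by simp)
  exact hL.append_overlap (L₃ := [(v, true)]) (by simp [huv]) (by simp)

theorem mul_inv_of (h : EndsInInv n u) : EndsInInv (n * (of v)⁻¹) v := by
  obtain ⟨L, hL, rfl⟩ := h
  exact ⟨L ++ [(u, false)],
    hL.append_overlap (L₃ := [(v, false)]) (by simp) (by simp), rfl⟩

theorem mul_of_mul_inv_of (h : EndsInInv n u) (huv : u ≠ v) (hvs : v ≠ s) :
    EndsInInv (n * of v * (of s)⁻¹) s := by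
  obtain ⟨L, hL, rfl⟩ := h
  refine ⟨L ++ [(u, false)] ++ [(v, true)], ?_, rfl⟩
  rw [List.append_assoc]
  exact hL.append_overlap (L₃ := [(v, true), (s, false)]) (by simp [huv, hvs]) (by simp)

end EndsInInv

variable {α : Type*} [Preorder α] {r : V → α} {g : FreeGroup V} {s v : V}

/-- The elements of the free group that right multiplication by words `s⁻¹` and `s⁻¹ * v`, where
`v` has larger rank than `s`, never brings back to `1`. -/
def Stuck (r : V → α) (g : FreeGroup V) : Prop :=
  ∃ n u, EndsInInv n u ∧ (g = n ∨ ∃ v, r u < r v ∧ g = n * of v)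

theorem EndsInInv.stuck (h : EndsInInv g s) : Stuck r g :=
  ⟨g, s, h, .inl rfl⟩

theorem EndsInInv.stuck_mul_of (h : EndsInInv g s) (hsv : r s < r v) : Stuck r (g * of v) :=
  ⟨g, s, h, .inr ⟨v, hsv, rfl⟩⟩

namespace Stuck

theorem ne_one (h : Stuck r g) : g ≠ 1 := by
  obtain ⟨n, u, hn, rfl | ⟨v, huv, rfl⟩⟩ := h
  · exact hn.ne_one
  · exact hn.mul_of_ne_one (ne_of_apply_ne r huv.ne)

theorem exists_endsInInv_mul_inv_of (h : Stuck r g) (s : V) :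
    ∃ u, EndsInInv (g * (of s)⁻¹) u ∧ r u ≤ r s := by
  obtain ⟨n, u, hn, rfl | ⟨v, huv, rfl⟩⟩ := h
  · exact ⟨s, hn.mul_inv_of, le_rfl⟩
  · obtain rfl | hvs := eq_or_ne v s
    · exact ⟨u, by simpa using hn, huv.le⟩
    · exact ⟨s, hn.mul_of_mul_inv_of (ne_of_apply_ne r huv.ne) hvs, le_rfl⟩

theorem mul_inv_of (h : Stuck r g) : Stuck r (g * (of s)⁻¹) :=
  let ⟨_, hu, _⟩ := h.exists_endsInInv_mul_inv_of s
  hu.stuck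

theorem mul_inv_of_mul_of (h : Stuck r g) (hsv : r s < r v) : Stuck r (g * (of s)⁻¹ * of v) :=
  let ⟨_, hu, hus⟩ := h.exists_endsInInv_mul_inv_of s
  hu.stuck_mul_of (hus.trans_lt hsv)

end Stuck

end LastLetter

section CounterSystems

open FreeGroup (of)

/-- An alternating system with two integer counters and no zero tests: in state `q` a challenge
`d` is drawn, and `rule q d η ω q'` permits adding `η` and `ω` to the counters and passing to `q'`;
`final q s` permits stopping in state `q` with counters `s` and `0`. -/
structure CounterSystem (Q L : Type*) where
  start : Q
  rule : Q → L → ℤ → ℤ → Q → Prop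
  final : Q → ℤ → Prop

/-- The generators of the free group in which the runs of a counter system are written: one letter
for the first counter, one for each state and one for each challenge, where the extra challenge
`none` opens the game. -/
abbrev Letter (Q L : Type*) : Type _ := Option (Q ⊕ Option L)

namespace CounterSystem

variable {Q L : Type*}

/-- The configurations from which a counter system can stop whatever the challenges are. -/
inductive Accepts (S : CounterSystem Q L) : Q → ℤ → ℤ → Prop
  | final {q s} (h : S.final q s) : Accepts S q s 0
  | step {q s t} (η ω : L → ℤ) (next : L → Q) (hrule : ∀ d, S.rule q d (η d) (ω d) (next d))
      (hnext : ∀ d, Accepts S (next d) (s + η d) (t + ω d)) : Accepts S q s t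

/-- The generator whose exponent is the first counter. -/
def counter : FreeGroup (Letter Q L) := of none

/-- The generator standing for a state. -/
def state (q : Q) : FreeGroup (Letter Q L) := of (some (.inl q))

/-- The generator standing for a challenge. -/
def challenge (o : Option L) : FreeGroup (Letter Q L) := of (some (.inr o))

/-- `S.Reply o x ω` says that Attacker may answer the challenge `o` by cancelling it, multiplying
the first component by `x` and adding `ω` to the second counter. -/
inductive Reply (S : CounterSystem Q L) [Inhabited L] :
    Option L → FreeGroup (Letter Q L) → ℤ → Prop
  | skip (d : L) : Reply S (some d) 1 0
  | start : Reply S none (state S.start) 0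
  | step {q q' η ω} (o : Option L) (h : S.rule q (o.getD default) η ω q') :
      Reply S o ((state q)⁻¹ * counter ^ η * state q') ω
  | finish {q s} (o : Option L) (h : S.final q s) : Reply S o ((state q)⁻¹ * counter ^ (-s)) 0

section Counting

/-- The exponent sum of the challenge `o`. -/
noncomputable def challengeCount (o : Option L) (g : FreeGroup (Letter Q L)) : ℤ :=
  open Classical in
  (FreeGroup.lift (fun x => .ofAdd (if x = some (.inr o) then 1 else 0)) g : Multiplicative ℤ).toAdd

variable (o : Option L)

@[simp]
theorem challengeCount_mul (g h : FreeGroup (Letter Q L)) :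
    challengeCount o (g * h) = challengeCount o g + challengeCount o h := by
  simp [challengeCount]

@[simp]
theorem challengeCount_inv (g : FreeGroup (Letter Q L)) :
    challengeCount o g⁻¹ = -challengeCount o g := by
  simp [challengeCount]

@[simp]
theorem challengeCount_one : challengeCount o (1 : FreeGroup (Letter Q L)) = 0 := by
  simp [challengeCount]

@[simp]
theorem challengeCount_state (q : Q) : challengeCount o (state q) = 0 := by
  simp [challengeCount, state]

@[simp]
theorem challengeCount_counter_zpow (k : ℤ) :
    challengeCount o (counter ^ k : FreeGroup (Letter Q L)) = 0 := by
  simp [challengeCount, counter]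

@[simp]
theorem challengeCount_challenge_self :
    challengeCount o (challenge o : FreeGroup (Letter Q L)) = 1 := by
  simp [challengeCount, challenge]

theorem challengeCount_challenge_of_ne {o o' : Option L} (h : o' ≠ o) :
    challengeCount o (challenge o' : FreeGroup (Letter Q L)) = 0 := by
  simp [challengeCount, challenge, h]

theorem challengeCount_challenge_nonneg (o' : Option L) :
    0 ≤ challengeCount o (challenge o' : FreeGroup (Letter Q L)) := by
  obtain rfl | h := eq_or_ne o' o
  · simp
  · exact (challengeCount_challenge_of_ne h).ge

theorem Reply.challengeCount_eq_zero {S : CounterSystem Q L} [Inhabited L] {o' : Option L}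
    {x : FreeGroup (Letter Q L)} {ω : ℤ} (h : S.Reply o' x ω) : challengeCount o x = 0 := by
  cases h <;> simp

end Counting

section Unwinding

/-- Letting the counter letter translate the indices of the state letters turns a state letter
read at counter value `s` into the generator `(s, q)`. -/
def unwindHom : FreeGroup (Letter Q L) →* FreeGroup (ℤ × Q) ⋊[translationAut Q] Multiplicative ℤ :=
  FreeGroup.lift fun
    | none => .inr (.ofAdd 1)
    | some (.inl q) => .inl (of (0, q))
    | some (.inr _) => 1

/-- The exponent sum of the counter letter. -/
def height (g : FreeGroup (Letter Q L)) : ℤ := (unwindHom g).right.toAdd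

/-- The product of the state letters of `g`, each indexed by the counter value at which it
occurs. -/
def unwind (g : FreeGroup (Letter Q L)) : FreeGroup (ℤ × Q) := (unwindHom g).left

variable (g : FreeGroup (Letter Q L)) (q : Q) (k : ℤ)

theorem unwindHom_counter_zpow :
    unwindHom (counter ^ k : FreeGroup (Letter Q L)) = .inr (.ofAdd k) := by
  have h : unwindHom (counter : FreeGroup (Letter Q L)) = .inr (.ofAdd 1) :=
    FreeGroup.lift_apply_of
  rw [map_zpow, h, ← map_zpow, ← ofAdd_zsmul, smul_eq_mul, mul_one]

@[simp]
theorem height_one : height (1 : FreeGroup (Letter Q L)) = 0 := by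
  simp [height]

@[simp]
theorem unwind_one : unwind (1 : FreeGroup (Letter Q L)) = 1 := by
  simp [unwind]

@[simp]
theorem height_mul_state : height (g * state q) = height g := by
  simp [height, unwindHom, state]

@[simp]
theorem height_mul_state_inv : height (g * (state q)⁻¹) = height g := by
  simp [height, unwindHom, state]

@[simp]
theorem height_mul_counter_zpow : height (g * counter ^ k) = height g + k := by
  simp [height, unwindHom_counter_zpow]

@[simp]
theorem unwind_mul_state : unwind (g * state q) = unwind g * of (height g, q) := by
  simp [height, unwind, unwindHom, state]

@[simp]
theorem unwind_mul_state_inv : unwind (g * (state q)⁻¹) = unwind g * (of (height g, q))⁻¹ := by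
  simp [height, unwind, unwindHom, state]

@[simp]
theorem unwind_mul_counter_zpow : unwind (g * counter ^ k) = unwind g := by
  simp [unwind, unwindHom_counter_zpow]

end Unwinding

section Safety

variable {S : CounterSystem Q L} {g : FreeGroup (Letter Q L)} {t : ℤ}

theorem height_mul_step (g : FreeGroup (Letter Q L)) (q q' : Q) (η : ℤ) :
    height (g * ((state q)⁻¹ * counter ^ η * state q')) = height g + η := by
  rw [← mul_assoc, ← mul_assoc, height_mul_state, height_mul_counter_zpow, height_mul_state_inv]

theorem unwind_mul_step (g : FreeGroup (Letter Q L)) (q q' : Q) (η : ℤ) :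
    unwind (g * ((state q)⁻¹ * counter ^ η * state q')) =
      unwind g * (of (height g, q))⁻¹ * of (height g + η, q') := by
  simp [← mul_assoc]

theorem height_mul_finish (g : FreeGroup (Letter Q L)) (q : Q) (s : ℤ) :
    height (g * ((state q)⁻¹ * counter ^ (-s))) = height g - s := by
  rw [← mul_assoc, height_mul_counter_zpow, height_mul_state_inv, sub_eq_add_neg]

theorem unwind_mul_finish (g : FreeGroup (Letter Q L)) (q : Q) (s : ℤ) :
    unwind (g * ((state q)⁻¹ * counter ^ (-s))) = unwind g * (of (height g, q))⁻¹ := by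
  rw [← mul_assoc, unwind_mul_counter_zpow, unwind_mul_state_inv]

theorem exists_refuting_challenge {q : Q} {s t : ℤ} (h : ¬ S.Accepts q s t) :
    ∃ d, ∀ η ω q', S.rule q d η ω q' → ¬ S.Accepts q' (s + η) (t + ω) := by
  by_contra! hall
  choose η ω next hrule hnext using hall
  exact h (.step η ω next hrule hnext)

variable {α : Type*} [Preorder α] {r : Q → ℤ → α}

/-- Every rule strictly increases the rank `r` of the state and the first counter. -/
def RankedBy (S : CounterSystem Q L) (r : Q → ℤ → α) : Prop :=
  ∀ ⦃q d η ω q'⦄, S.rule q d η ω q' → ∀ s, r q s < r q' (s + η)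

/-- A configuration from which Defender avoids `(1, 1)` forever: a challenge letter is in deficit,
or the state letters spell a rejecting configuration, or they are stuck, or they have cancelled
while a counter has not. -/
inductive Safe (S : CounterSystem Q L) (r : Q → ℤ → α) (g : FreeGroup (Letter Q L)) (t : ℤ) : Prop
  | deficit (o : Option L) (h : challengeCount o g < 0)
  | rejecting (q : Q) (hg : ∀ o, challengeCount o g = 0) (h : unwind g = of (height g, q))
      (hq : ¬ S.Accepts q (height g) t)
  | stuck (hg : ∀ o, challengeCount o g = 0) (h : Stuck (fun v => r v.2 v.1) (unwind g))
  | mismatch (hg : ∀ o, challengeCount o g = 0) (h : unwind g = 1) (ht : ¬ (height g = 0 ∧ t = 0))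

namespace Safe

theorem not_one_zero : ¬ Safe S r 1 0 := by
  rintro (⟨o, h⟩ | ⟨q, -, h, -⟩ | ⟨-, h⟩ | ⟨-, -, h⟩)
  · simp at h
  · exact FreeGroup.of_ne_one _ (h.symm.trans unwind_one)
  · exact h.ne_one unwind_one
  · simp at h

variable [Inhabited L] {d : L} {x : FreeGroup (Letter Q L)} {ω : ℤ}

theorem mul_reply_of_stuck (hr : S.RankedBy r) (hg : ∀ o, challengeCount o g = 0)
    (h : Stuck (fun v => r v.2 v.1) (unwind g)) (hx : S.Reply (some d) x ω) :
    Safe S r (g * x) (t + ω) := by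
  refine .stuck (fun o => by simp [hg, hx.challengeCount_eq_zero]) ?_
  cases hx with
  | skip => simpa using h
  | step _ hrule =>
    rw [unwind_mul_step]
    exact h.mul_inv_of_mul_of (hr hrule _)
  | finish =>
    rw [unwind_mul_finish]
    exact h.mul_inv_of

theorem mul_reply_of_unwind_eq_one (hr : S.RankedBy r) (hg : ∀ o, challengeCount o g = 0)
    (h : unwind g = 1) (ht : ¬ (height g = 0 ∧ t = 0)) (hx : S.Reply (some d) x ω) :
    Safe S r (g * x) (t + ω) := by
  have hgx : ∀ o, challengeCount o (g * x) = 0 := fun o => by simp [hg, hx.challengeCount_eq_zero]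
  cases hx with
  | skip => exact .mismatch hgx (by simpa using h) (by simpa using ht)
  | step _ hrule =>
    refine .stuck hgx ?_
    rw [unwind_mul_step, h, one_mul]
    exact (endsInInv_inv_of _).stuck_mul_of (hr hrule _)
  | finish =>
    refine .stuck hgx ?_
    rw [unwind_mul_finish, h, one_mul]
    exact (endsInInv_inv_of _).stuck

theorem mul_reply_of_rejecting (hr : S.RankedBy r) (hg : ∀ o, challengeCount o g = 0) {q : Q}
    (h : unwind g = of (height g, q)) (hq : ¬ S.Accepts q (height g) t)
    (hd : ∀ η ω q', S.rule q d η ω q' → ¬ S.Accepts q' (height g + η) (t + ω))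
    (hx : S.Reply (some d) x ω) : Safe S r (g * x) (t + ω) := by
  have hgx : ∀ o, challengeCount o (g * x) = 0 := fun o => by simp [hg, hx.challengeCount_eq_zero]
  cases hx with
  | skip => exact .rejecting q hgx (by simpa using h) (by simpa using hq)
  | @step p q' η _ _ hrule =>
    obtain rfl | hqp := eq_or_ne q p
    · refine .rejecting q' hgx ?_ ?_
      · rw [unwind_mul_step, h, height_mul_step, mul_inv_cancel, one_mul]
      · rw [height_mul_step]
        exact hd _ _ _ hrule
    · refine .stuck hgx ?_
      rw [unwind_mul_step, h]
      exact (endsInInv_of_mul_inv_of (by simp [hqp])).stuck_mul_of (hr hrule _)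
  | @finish p s _ hfinal =>
    obtain rfl | hqp := eq_or_ne q p
    · refine .mismatch hgx (by rw [unwind_mul_finish, h, mul_inv_cancel]) ?_
      rintro ⟨hheight, ht⟩
      rw [height_mul_finish, sub_eq_zero] at hheight
      obtain rfl : t = 0 := by simpa using ht
      exact hq (hheight ▸ .final hfinal)
    · refine .stuck hgx ?_
      rw [unwind_mul_finish, h]
      exact (endsInInv_of_mul_inv_of (by simp [hqp])).stuck

theorem exists_challenge_of_balanced (hg : ∀ o, challengeCount o g = 0)
    (h : ∃ d, ∀ x ω, S.Reply (some d) x ω → Safe S r (g * x) (t + ω)) :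
    ∃ o, ∀ o' x ω, S.Reply o' x ω →
      Safe S r (g * challenge o * ((challenge o')⁻¹ * x)) (t + ω) := by
  obtain ⟨d, hd⟩ := h
  refine ⟨some d, fun o' x ω hx => ?_⟩
  obtain rfl | ho := eq_or_ne (some d) o'
  · rw [mul_assoc, mul_inv_cancel_left]
    exact hd x ω hx
  · exact .deficit o' (by simp [hg, hx.challengeCount_eq_zero, challengeCount_challenge_of_ne ho])

theorem exists_challenge (hr : S.RankedBy r) (h : Safe S r g t) :
    ∃ o, ∀ o' x ω, S.Reply o' x ω →
      Safe S r (g * challenge o * ((challenge o')⁻¹ * x)) (t + ω) := by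
  rcases h with ⟨p, hp⟩ | ⟨q, hg, h, hq⟩ | ⟨hg, h⟩ | ⟨hg, h, ht⟩
  · obtain ⟨o, ho⟩ := exists_ne p
    refine ⟨o, fun o' x ω hx => .deficit p ?_⟩
    have := challengeCount_challenge_nonneg (Q := Q) p o'
    simp only [challengeCount_mul, challengeCount_inv, hx.challengeCount_eq_zero,
      challengeCount_challenge_of_ne ho]
    linarith
  · obtain ⟨d, hd⟩ := exists_refuting_challenge hq
    exact exists_challenge_of_balanced hg ⟨d, fun _ _ => mul_reply_of_rejecting hr hg h hq hd⟩
  · exact exists_challenge_of_balanced hg ⟨default, fun _ _ => mul_reply_of_stuck hr hg h⟩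
  · exact exists_challenge_of_balanced hg
      ⟨default, fun _ _ => mul_reply_of_unwind_eq_one hr hg h ht⟩

theorem reply_none (hr : S.RankedBy r) (hS : ¬ S.Accepts S.start 0 0) {o : Option L}
    (hx : S.Reply o x ω) : Safe S r (challenge none * ((challenge o)⁻¹ * x)) ω := by
  obtain rfl | ho := eq_or_ne none o
  · rw [mul_inv_cancel_left]
    have hbalanced : ∀ o, challengeCount o x = 0 := fun o => hx.challengeCount_eq_zero o
    cases hx with
    | start =>
      have hheight : height (state S.start : FreeGroup (Letter Q L)) = 0 := by
        simpa using height_mul_state 1 S.start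
      refine .rejecting S.start hbalanced ?_ (hheight ▸ hS)
      simpa [hheight] using unwind_mul_state 1 S.start
    | step _ hrule =>
      refine .stuck hbalanced ?_
      rw [← one_mul (_ * _), unwind_mul_step, unwind_one, one_mul]
      exact (endsInInv_inv_of _).stuck_mul_of (hr hrule _)
    | finish =>
      refine .stuck hbalanced ?_
      rw [← one_mul (_ * _), unwind_mul_finish, unwind_one, one_mul]
      exact (endsInInv_inv_of _).stuck
  · exact .deficit o (by simp [hx.challengeCount_eq_zero, challengeCount_challenge_of_ne ho])

end Safe

end Safety

section WordGame

/-- The configuration of the Word Game with first component `g`, embedded in `F2` by `φ`, and second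
counter `t`. -/
def config {X : Type*} (φ : FreeGroup X →* F2) (g : FreeGroup X) (t : ℤ) : F2 × F1 :=
  (φ g, of () ^ t)

section Config

variable {X : Type*} {φ : FreeGroup X →* F2}

theorem config_mul (g h : FreeGroup X) (t t' : ℤ) :
    config φ g t * config φ h t' = config φ (g * h) (t + t') := by
  simp [config, zpow_add]

theorem config_one_zero : config φ 1 0 = 1 := by
  simp [config, Prod.one_eq_mk]

theorem config_eq_one_iff (hφ : Function.Injective φ) {g : FreeGroup X} {t : ℤ} :
    config φ g t = 1 ↔ g = 1 ∧ t = 0 := by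
  rw [config, Prod.mk_eq_one, map_eq_one_iff φ hφ, of_zpow_eq_one_iff]

end Config

/-- Attacker's moves in the Word Game simulating a counter system. -/
def attackerMoves (S : CounterSystem Q L) [Inhabited L] (φ : FreeGroup (Letter Q L) →* F2) :
    Set (F2 × F1) :=
  {u | ∃ o x ω, S.Reply o x ω ∧ config φ ((challenge o)⁻¹ * x) ω = u}

/-- Defender's moves in the Word Game simulating a counter system. -/
def defenderMoves (φ : FreeGroup (Letter Q L) →* F2) : Set (F2 × F1) :=
  Set.range fun o => config φ (challenge o) 0

variable [Inhabited L] {S : CounterSystem Q L} {φ : FreeGroup (Letter Q L) →* F2}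
  {A D : List (F2 × F1)}

theorem exists_reply_config_eq (hA : {u | u ∈ A} = S.attackerMoves φ) {o : Option L}
    {x : FreeGroup (Letter Q L)} {ω : ℤ} (hx : S.Reply o x ω) (g : FreeGroup (Letter Q L)) (t : ℤ) :
    ∃ u ∈ A, config φ g t * config φ (challenge o) 0 * u = config φ (g * x) (t + ω) := by
  refine ⟨config φ ((challenge o)⁻¹ * x) ω, hA.ge ⟨o, x, ω, hx, rfl⟩, ?_⟩
  rw [config_mul, config_mul, add_zero, mul_assoc, mul_inv_cancel_left]

theorem attackerList_ne_nil (hA : {u | u ∈ A} = S.attackerMoves φ) : A ≠ [] :=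
  List.ne_nil_of_mem (hA.ge ⟨none, _, _, .start, rfl⟩)

theorem Accepts.wgAttackerWins (hA : {u | u ∈ A} = S.attackerMoves φ)
    (hD : {d | d ∈ D} = defenderMoves φ) {q : Q} {s t : ℤ} (h : S.Accepts q s t) :
    WGAttackerWins A D (config φ (counter ^ s * state q) t) := by
  induction h with
  | @final q s h =>
    refine .of_forall_reply (attackerList_ne_nil hA) fun d hd => ?_
    obtain ⟨o, rfl⟩ := hD.le hd
    obtain ⟨u, hu, hmul⟩ := exists_reply_config_eq hA (.finish o h) (counter ^ s * state q) 0
    refine ⟨u, hu, .inl ?_⟩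
    simp only [hmul, mul_assoc, mul_inv_cancel_left, zpow_neg, mul_inv_cancel, add_zero,
      config_one_zero]
  | @step q s t η ω next hrule _ ih =>
    refine .of_forall_reply (attackerList_ne_nil hA) fun d hd => ?_
    obtain ⟨o, rfl⟩ := hD.le hd
    obtain ⟨u, hu, hmul⟩ := exists_reply_config_eq hA (.step o (hrule (o.getD default)))
      (counter ^ s * state q) t
    refine ⟨u, hu, .inr ?_⟩
    convert ih (o.getD default) using 1
    simp only [hmul, mul_assoc, mul_inv_cancel_left, zpow_add]

theorem wgAttackerWins_one_of_accepts (hA : {u | u ∈ A} = S.attackerMoves φ)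
    (hD : {d | d ∈ D} = defenderMoves φ) (h : S.Accepts S.start 0 0) : WGAttackerWins A D 1 := by
  refine .of_forall_reply (attackerList_ne_nil hA) fun d hd => ?_
  obtain ⟨o, rfl⟩ := hD.le hd
  rw [← config_one_zero (φ := φ)]
  cases o with
  | none =>
    obtain ⟨u, hu, hmul⟩ := exists_reply_config_eq hA .start 1 0
    refine ⟨u, hu, .inr ?_⟩
    simpa [hmul] using h.wgAttackerWins hA hD
  | some d =>
    obtain ⟨u, hu, hmul⟩ := exists_reply_config_eq hA (.skip d) 1 0
    exact ⟨u, hu, .inl (by simpa [config_one_zero] using hmul)⟩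

theorem accepts_of_wgAttackerWins_one {α : Type*} [Preorder α] {r : Q → ℤ → α} (hr : S.RankedBy r)
    (hφ : Function.Injective φ) (hA : {u | u ∈ A} = S.attackerMoves φ)
    (hD : {d | d ∈ D} = defenderMoves φ) (h : WGAttackerWins A D 1) : S.Accepts S.start 0 0 := by
  contrapose h with hS
  let Inv (c : F2 × F1) : Prop := c = 1 ∨ ∃ g t, c = config φ g t ∧ Safe S r g t
  refine not_wgAttackerWins_of_invariant (Inv := Inv) (.inl rfl) fun c hc => ?_
  suffices ∃ o, ∀ o' x ω, S.Reply o' x ω → ∃ g t, Safe S r g t ∧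
      c * config φ (challenge o) 0 * config φ ((challenge o')⁻¹ * x) ω = config φ g t by
    obtain ⟨o, ho⟩ := this
    refine ⟨_, hD.ge ⟨o, rfl⟩, fun u hu => ?_⟩
    obtain ⟨o', x, ω, hx, rfl⟩ := hA.le hu
    obtain ⟨g, t, hsafe, hmul⟩ := ho o' x ω hx
    refine ⟨fun hone => ?_, .inr ⟨g, t, hmul, hsafe⟩⟩
    obtain ⟨rfl, rfl⟩ := (config_eq_one_iff hφ).1 (hmul.symm.trans hone)
    exact Safe.not_one_zero hsafe
  obtain rfl | ⟨g, t, rfl, hsafe⟩ := hc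
  · refine ⟨none, fun o x ω hx => ⟨_, _, .reply_none hr hS hx, ?_⟩⟩
    rw [one_mul, config_mul, zero_add]
  · obtain ⟨o, ho⟩ := hsafe.exists_challenge hr
    refine ⟨o, fun o' x ω hx => ⟨_, _, ho o' x ω hx, ?_⟩⟩
    rw [config_mul, config_mul, add_zero]

theorem wgAttackerWins_one_iff {α : Type*} [Preorder α] {r : Q → ℤ → α} (hr : S.RankedBy r)
    (hφ : Function.Injective φ) (hA : {u | u ∈ A} = S.attackerMoves φ)
    (hD : {d | d ∈ D} = defenderMoves φ) : WGAttackerWins A D 1 ↔ S.Accepts S.start 0 0 :=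
  ⟨accepts_of_wgAttackerWins_one hr hφ hA hD, wgAttackerWins_one_of_accepts hA hD⟩

end WordGame

section Finiteness

variable {φ : FreeGroup (Letter Q L) →* F2}

/-- Attacker's moves that do not stop the run of the counter system. -/
def stepMoves (S : CounterSystem Q L) [Inhabited L] (φ : FreeGroup (Letter Q L) →* F2) :
    Set (F2 × F1) :=
  (Set.range fun d : L => config φ ((challenge (some d))⁻¹ * 1) 0) ∪
    ({config φ ((challenge none)⁻¹ * state S.start) 0} ∪
      {u | ∃ o q η ω q', S.rule q (o.getD default) η ω q' ∧
        config φ ((challenge o)⁻¹ * ((state q)⁻¹ * counter ^ η * state q')) ω = u})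

/-- Attacker's move stopping the run in state `q` with first counter `s`. -/
def finishMove (φ : FreeGroup (Letter Q L) →* F2) (q : Q) (s : ℤ) (o : Option L) : F2 × F1 :=
  config φ ((challenge o)⁻¹ * ((state q)⁻¹ * counter ^ (-s))) 0

theorem mem_attackerMoves_iff {S : CounterSystem Q L} [Inhabited L] {u : F2 × F1} :
    u ∈ S.attackerMoves φ ↔
      u ∈ S.stepMoves φ ∨ ∃ q s o, S.final q s ∧ finishMove φ q s o = u := by
  constructor
  · rintro ⟨o, x, ω, hx, rfl⟩
    cases hx with
    | skip d => exact .inl (.inl ⟨d, rfl⟩)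
    | start => exact .inl (.inr (.inl rfl))
    | step o h => exact .inl (.inr (.inr ⟨o, _, _, _, _, h, rfl⟩))
    | finish o h => exact .inr ⟨_, _, o, h, rfl⟩
  · rintro ((⟨d, rfl⟩ | rfl | ⟨o, q, η, ω, q', h, rfl⟩) | ⟨q, s, o, h, rfl⟩)
    · exact ⟨_, _, _, .skip d, rfl⟩
    · exact ⟨_, _, _, .start, rfl⟩
    · exact ⟨_, _, _, .step o h, rfl⟩
    · exact ⟨_, _, _, .finish o h, rfl⟩

theorem finishMove_eq_mul (q : Q) (i : ℕ) (o : Option L) :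
    finishMove φ q i o = finishMove φ q 0 o * ((φ counter)⁻¹ ^ i, 1) := by
  simp [finishMove, config, mul_assoc]

variable [Finite Q] [Finite L]

theorem stepMoves_finite {S : CounterSystem Q L} [Inhabited L] {T : Set (ℤ × ℤ)} (hT : T.Finite)
    (hrule : ∀ q d η ω q', S.rule q d η ω q' → (η, ω) ∈ T) : (S.stepMoves φ).Finite := by
  refine (Set.finite_range _).union ((Set.finite_singleton _).union ?_)
  let move (m : Option L × Q × (ℤ × ℤ) × Q) : F2 × F1 :=
    config φ ((challenge m.1)⁻¹ * ((state m.2.1)⁻¹ * counter ^ m.2.2.1.1 * state m.2.2.2)) m.2.2.1.2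
  have hmove := (Set.finite_univ.prod (Set.finite_univ.prod (hT.prod Set.finite_univ))).image move
  refine hmove.subset ?_
  rintro u ⟨o, q, η, ω, q', h, rfl⟩
  exact ⟨(o, q, (η, ω), q'), ⟨trivial, trivial, hrule _ _ _ _ _ h, trivial⟩, rfl⟩

end Finiteness

end CounterSystem

end CounterSystems

section CellularAutomata

variable {C : Type*} [Inhabited C]

/-- The initial row of a cellular automaton: the list `l` on the cells `0, 1, …`, padded by
`default` on both sides. -/
def initialCell (l : List C) (p : ℤ) : C :=
  if 0 ≤ p then l.getI p.toNat else default

/-- The space-time diagram of the one-dimensional cellular automaton with radius `1` and local rule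
`f`; the neighbourhood of a cell is indexed by `SignType`. -/
def cellAt (f : (SignType → C) → C) (l : List C) : ℕ → ℤ → C
  | 0, p => initialCell l p
  | t + 1, p => f fun δ => cellAt f l t (p + δ)

/-- The states of the counter system that verifies a space-time diagram: walking to a halting cell,
holding a guessed neighbourhood, holding a guessed initial cell, and checking that a blank initial
cell lies to the right or to the left of the input. -/
inductive DiagramState (C : Type*)
  | seek
  | window (w : SignType → C)
  | cell (c : C)
  | right
  | left

/-- The rules of the counter system verifying space-time diagrams. Cell `p` at time `t` is
represented by the counters `p + 2 * t` and `t`, so that the first counter increases on every step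
forward in time and decreases on every step back. -/
inductive DiagramRule (f : (SignType → C) → C) (halt : C → Prop) :
    DiagramState C → SignType → ℤ → ℤ → DiagramState C → Prop
  | walk (d e : SignType) : DiagramRule f halt .seek d (2 + e) 1 .seek
  | guess (d : SignType) (w : SignType → C) (h : halt (w 0)) :
      DiagramRule f halt .seek d 0 0 (.window w)
  | back (d : SignType) (w w' : SignType → C) (h : f w' = w d) :
      DiagramRule f halt (.window w) d (d - 2) (-1) (.window w')
  | read (d : SignType) (w : SignType → C) : DiagramRule f halt (.window w) d d 0 (.cell (w d))
  | blankRight (d : SignType) : DiagramRule f halt (.cell default) d 0 0 .right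
  | blankLeft (d : SignType) : DiagramRule f halt (.cell default) d 0 0 .left
  | moveLeft (d : SignType) : DiagramRule f halt .right d (-1) 0 .right
  | moveRight (d : SignType) : DiagramRule f halt .left d 1 0 .left

/-- The stopping conditions comparing a guessed initial cell with the input. -/
inductive DiagramFinal (l : List C) : DiagramState C → ℤ → Prop
  | cell (i : ℕ) (hi : i < l.length) : DiagramFinal l (.cell l[i]) i
  | right : DiagramFinal l .right l.length
  | left : DiagramFinal l .left (-1)

/-- The counter system verifying that the space-time diagram with initial row `l` contains a
halting cell. -/
def diagramSystem (f : (SignType → C) → C) (halt : C → Prop) (l : List C) :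
    CounterSystem (DiagramState C) SignType where
  start := .seek
  rule := DiagramRule f halt
  final := DiagramFinal l

/-- The rank certifying that the counter system verifying space-time diagrams never repeats a
state at the same first counter. -/
def diagramRank : DiagramState C → ℤ → ℕ ×ₗ ℤ
  | .seek, s => toLex (0, s)
  | .window _, s => toLex (1, -s)
  | .cell _, _ => toLex (2, 0)
  | .right, s => toLex (3, -s)
  | .left, s => toLex (3, s)

theorem signType_coe_bounds (d : SignType) : -1 ≤ (d : ℤ) ∧ (d : ℤ) ≤ 1 := by
  cases d <;> decide

theorem diagramSystem_rankedBy (f : (SignType → C) → C) (halt : C → Prop) (l : List C) :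
    (diagramSystem f halt l).RankedBy diagramRank := by
  intro q d η ω q' h s
  have hd := signType_coe_bounds d
  cases h with
  | walk _ e =>
    have he := signType_coe_bounds e
    simp only [diagramRank, Prod.Lex.toLex_lt_toLex, lt_irrefl, false_or, true_and]
    lia
  | _ => simp only [diagramRank, Prod.Lex.toLex_lt_toLex]; lia

variable {f : (SignType → C) → C} {halt : C → Prop} {l : List C}

/-- What it means for a configuration of the counter system to be correct for the space-time
diagram with initial row `l`. -/
def DiagramState.IsCorrect (f : (SignType → C) → C) (halt : C → Prop) (l : List C) :
    DiagramState C → ℤ → ℤ → Prop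
  | .seek, s, t => ∃ (n : ℕ) (p : ℤ), |p - (s - 2 * t)| ≤ n - t ∧ halt (cellAt f l n p)
  | .window w, s, t => 0 ≤ t ∧ ∀ δ : SignType, w δ = cellAt f l t.toNat (s - 2 * t + δ)
  | .cell c, s, t => t = 0 ∧ c = initialCell l s
  | .right, s, t => t = 0 ∧ l.length ≤ s
  | .left, s, t => t = 0 ∧ s < 0

theorem initialCell_of_length_le {p : ℤ} (h : l.length ≤ p) : initialCell l p = default := by
  rw [initialCell, if_pos (by lia), List.getI_eq_default _ (by lia)]

theorem initialCell_of_neg {p : ℤ} (h : p < 0) : initialCell l p = default :=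
  if_neg (by lia)

theorem initialCell_natCast {i : ℕ} (h : i < l.length) : initialCell l i = l[i] := by
  rw [initialCell, if_pos (by lia), Int.toNat_natCast, List.getI_eq_getElem _ h]

theorem DiagramFinal.isCorrect {q : DiagramState C} {s : ℤ} (h : DiagramFinal l q s) :
    q.IsCorrect f halt l s 0 := by
  cases h with
  | cell i hi => exact ⟨rfl, (initialCell_natCast hi).symm⟩
  | right => exact ⟨rfl, le_rfl⟩
  | left => exact ⟨rfl, by decide⟩

theorem DiagramRule.eq_cellAt_of_isCorrect {w : SignType → C} {d : SignType} {s t η ω : ℤ}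
    {q : DiagramState C} (h : DiagramRule f halt (.window w) d η ω q)
    (hq : q.IsCorrect f halt l (s + η) (t + ω)) :
    0 ≤ t ∧ w d = cellAt f l t.toNat (s - 2 * t + d) := by
  cases h with
  | back _ _ w' hw' =>
    obtain ⟨ht, hw⟩ := hq
    obtain ⟨n, rfl⟩ : ∃ n : ℕ, t = n + 1 := ⟨(t - 1).toNat, by lia⟩
    refine ⟨by lia, ?_⟩
    calc w d = f w' := hw'.symm
      _ = f fun δ => cellAt f l n (s - 2 * (n + 1) + d + δ) := by
          congr 1
          ext δ
          rw [hw, show ((n : ℤ) + 1 + -1).toNat = n by lia]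
          congr 1
          ring
  | read =>
    obtain ⟨ht, hw⟩ := hq
    obtain rfl : t = 0 := by simpa using ht
    simpa [cellAt] using hw

theorem DiagramRule.isCorrect_of_forall {q : DiagramState C} {s t : ℤ}
    (h : ∀ d, ∃ η ω q', DiagramRule f halt q d η ω q' ∧ q'.IsCorrect f halt l (s + η) (t + ω)) :
    q.IsCorrect f halt l s t := by
  cases q with
  | window w =>
    have hw : ∀ d, 0 ≤ t ∧ w d = cellAt f l t.toNat (s - 2 * t + d) := fun d =>
      let ⟨_, _, _, hrule, hq⟩ := h d
      hrule.eq_cellAt_of_isCorrect hq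
    exact ⟨(hw 0).1, fun d => (hw d).2⟩
  | seek =>
    obtain ⟨η, ω, q', hrule, hq⟩ := h 0
    cases hrule with
    | walk _ e =>
      obtain ⟨n, p, hp, hhalt⟩ := hq
      have he := signType_coe_bounds e
      refine ⟨n, p, ?_, hhalt⟩
      rw [abs_le] at hp ⊢
      lia
    | guess _ w hhalt =>
      obtain ⟨-, hw⟩ := hq
      exact ⟨t.toNat, s - 2 * t, by simp, by simpa [hw] using hhalt⟩
  | cell =>
    obtain ⟨η, ω, q', hrule, hq⟩ := h 0
    cases hrule with
    | blankRight =>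
      obtain ⟨ht, hs⟩ := hq
      exact ⟨by lia, (initialCell_of_length_le (by lia)).symm⟩
    | blankLeft =>
      obtain ⟨ht, hs⟩ := hq
      exact ⟨by lia, (initialCell_of_neg (by lia)).symm⟩
  | right | left =>
    obtain ⟨η, ω, q', ⟨⟩, ht, hs⟩ := h 0
    exact ⟨by lia, by lia⟩

theorem DiagramState.IsCorrect.of_accepts {q : DiagramState C} {s t : ℤ}
    (h : (diagramSystem f halt l).Accepts q s t) : q.IsCorrect f halt l s t := by
  induction h with
  | final h => exact DiagramFinal.isCorrect h
  | step η ω next hrule _ ih =>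
    exact DiagramRule.isCorrect_of_forall fun d => ⟨η d, ω d, next d, hrule d, ih d⟩

theorem accepts_right (f : (SignType → C) → C) (halt : C → Prop) {s : ℤ} (h : l.length ≤ s) :
    (diagramSystem f halt l).Accepts .right s 0 := by
  induction s, h using Int.leInduction with
  | base => exact .final .right
  | succ s _ ih => exact .step _ _ _ DiagramRule.moveLeft fun _ => by simpa using ih

theorem accepts_left (f : (SignType → C) → C) (halt : C → Prop) {s : ℤ} (h : s ≤ -1) :
    (diagramSystem f halt l).Accepts .left s 0 := by
  induction s, h using Int.leInductionDown with
  | base => exact .final .left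
  | pred s _ ih => exact .step _ _ _ DiagramRule.moveRight fun _ => by simpa using ih

theorem accepts_cell (f : (SignType → C) → C) (halt : C → Prop) (l : List C) (s : ℤ) :
    (diagramSystem f halt l).Accepts (.cell (initialCell l s)) s 0 := by
  obtain hs | hs := lt_or_ge s 0
  · rw [initialCell_of_neg hs]
    exact .step _ _ _ DiagramRule.blankLeft fun _ => accepts_left f halt (by lia)
  · lift s to ℕ using hs
    obtain hs | hs := lt_or_ge s l.length
    · rw [initialCell_natCast hs]
      exact .final (.cell s hs)
    · rw [initialCell_of_length_le (by lia)]
      exact .step _ _ _ DiagramRule.blankRight fun _ => accepts_right f halt (by lia)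

theorem accepts_window (f : (SignType → C) → C) (halt : C → Prop) (l : List C) (n : ℕ) (p : ℤ) :
    (diagramSystem f halt l).Accepts (.window fun δ => cellAt f l n (p + δ)) (p + 2 * n) n := by
  induction n generalizing p with
  | zero =>
    refine .step _ _ _ (fun d => .read d _) fun d => ?_
    simpa [cellAt] using accepts_cell f halt l (p + d)
  | succ n ih =>
    refine .step _ _ _ (fun d => .back d _ (fun δ => cellAt f l n (p + d + δ)) rfl) fun d => ?_
    convert ih (p + d) using 1 <;> push_cast <;> ring

theorem abs_sub_sign_le {m : ℤ} {k : ℕ} (h : |m| ≤ k + 1) : |m - SignType.sign m| ≤ k := by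
  rw [abs_le] at h ⊢
  obtain hm | rfl | hm := lt_trichotomy m 0
  · rw [sign_neg hm, SignType.coe_neg_one]
    lia
  · simp
  · rw [sign_pos hm, SignType.coe_one]
    lia

theorem accepts_seek {n k : ℕ} {p x : ℤ} (hp : halt (cellAt f l n p)) (hk : k ≤ n)
    (hx : |p - x| ≤ k) :
    (diagramSystem f halt l).Accepts .seek (x + 2 * (n - k)) (n - k) := by
  induction k generalizing x with
  | zero =>
    obtain rfl : p = x := by simpa [sub_eq_zero] using hx
    refine .step _ _ _ (fun d => .guess d (fun δ => cellAt f l n (p + δ)) (by simpa using hp))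
      fun _ => ?_
    simpa using accepts_window f halt l n p
  | succ k ih =>
    refine .step _ _ _ (fun d => .walk d (SignType.sign (p - x))) fun _ => ?_
    have hx' : |p - (x + SignType.sign (p - x))| ≤ k := by
      rw [← sub_sub]
      exact abs_sub_sign_le (mod_cast hx)
    convert ih (by lia) hx' using 1 <;> push_cast <;> ring

theorem diagramSystem_accepts_iff :
    (diagramSystem f halt l).Accepts .seek 0 0 ↔
      ∃ (n : ℕ) (p : ℤ), |p| ≤ n ∧ halt (cellAt f l n p) := by
  constructor
  · intro h
    simpa [DiagramState.IsCorrect] using DiagramState.IsCorrect.of_accepts h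
  · rintro ⟨n, p, hp, hhalt⟩
    simpa using accepts_seek hhalt le_rfl (x := 0) (by simpa using hp)

end CellularAutomata

section Encoding

open FreeGroup (mk)

/-- The configuration denoted by a pair of words. -/
def decodeMove (m : BWord × UWord) : F2 × F1 := (mk m.1, mk m.2)

/-- The configuration denoted by a word of Defender. -/
def decodeChallenge (v : BWord) : F2 × F1 := (mk v, 1)

/-- The encoded instances of the Word Game in which Attacker wins from `(1, 1)`. -/
def WordGameWon (inst : WGInstance) : Prop :=
  WGAttackerWins (inst.1.map decodeMove) (inst.2.map decodeChallenge) 1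

theorem exists_list_decodeMove {s : Set (F2 × F1)} (hs : s.Finite) :
    ∃ L : List (BWord × UWord), ∀ u, u ∈ L.map decodeMove ↔ u ∈ s := by
  refine ⟨hs.toFinset.toList.map fun u => (u.1.toWord, u.2.toWord), fun u => ?_⟩
  simp [decodeMove, FreeGroup.mk_toWord]

theorem exists_list_decodeChallenge {s : Set F2} (hs : s.Finite) :
    ∃ L : List BWord, ∀ d, d ∈ L.map decodeChallenge ↔ ∃ g ∈ s, (g, 1) = d := by
  refine ⟨hs.toFinset.toList.map FreeGroup.toWord, fun u => ?_⟩
  simp [decodeChallenge, FreeGroup.mk_toWord]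

/-- The encoded move `m` followed by `i` copies of the word `w` in the first component. -/
def padMove (w : BWord) (i : ℕ) (m : BWord × UWord) : BWord × UWord :=
  (m.1 ++ (List.range i).flatMap fun _ => w, m.2)

theorem decodeMove_padMove (w : BWord) (i : ℕ) (m : BWord × UWord) :
    decodeMove (padMove w i m) = decodeMove m * (mk w ^ i, 1) := by
  have hpow : mk ((List.range i).flatMap fun _ => w) = mk w ^ i := by
    induction i with
    | zero => rfl
    | succ i ih => rw [List.range_succ, List.flatMap_append, ← FreeGroup.mul_mk, ih, pow_succ]; simp
  simp [decodeMove, padMove, ← FreeGroup.mul_mk, hpow]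

variable {C : Type*}

/-- The encoded Word Game instance in which the moves in `finish c`, padded with `i` copies of `w`,
are available to Attacker whenever `c` is the entry of the input list at index `i`, where `none`
marks the end of the list. -/
def inputInstance (moves : List (BWord × UWord)) (finish : Option C → List (BWord × UWord))
    (w : BWord) (challenges : List BWord) (l : List C) : WGInstance :=
  (moves ++ (List.range (l.length + 1)).flatMap fun i => (finish l[i]?).map (padMove w i),
    challenges)

theorem mem_map_decodeMove_inputInstance {moves : List (BWord × UWord)}
    {finish : Option C → List (BWord × UWord)} {w : BWord} {challenges : List BWord} {l : List C}
    {u : F2 × F1} :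
    u ∈ (inputInstance moves finish w challenges l).1.map decodeMove ↔
      u ∈ moves.map decodeMove ∨
        ∃ i ≤ l.length, ∃ m ∈ (finish l[i]?).map decodeMove, m * (mk w ^ i, 1) = u := by
  simp only [inputInstance, List.map_append, List.map_flatMap, List.map_map, List.mem_append,
    List.mem_map, List.mem_flatMap, List.mem_range, Order.lt_add_one_iff, Function.comp_apply,
    decodeMove_padMove, exists_exists_and_eq_and]

theorem primrec_padMove (w : BWord) : Primrec₂ (padMove w) :=
  (Primrec.list_append.comp (Primrec.fst.comp .snd)
    (Primrec.list_flatMap (Primrec.list_range.comp .fst) (.const w))).pair (Primrec.snd.comp .snd)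

theorem primrec_inputInstance [Finite C] [Primcodable C] (moves : List (BWord × UWord))
    (finish : Option C → List (BWord × UWord)) (w : BWord) (challenges : List BWord) :
    Primrec (inputInstance moves finish w challenges) := by
  have hfinish : Primrec₂ fun (l : List C) (i : ℕ) => (finish l[i]?).map (padMove w i) :=
    Primrec.list_map ((Primrec.dom_finite finish).comp Primrec.list_getElem?)
      ((primrec_padMove w).comp (Primrec.snd.comp .fst) .snd)
  exact (Primrec.list_append.comp (.const moves)
    (Primrec.list_flatMap (Primrec.list_range.comp (Primrec.succ.comp .list_length)) hfinish)).pair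
      (.const challenges)

end Encoding

section Reduction

variable {C : Type*}

instance [Finite C] : Finite (DiagramState C) :=
  Finite.of_surjective
    (Sum.elim .window (Sum.elim .cell ![.seek, .right, .left]) :
      (SignType → C) ⊕ C ⊕ Fin 3 → DiagramState C) fun
    | .window w => ⟨.inl w, rfl⟩
    | .cell c => ⟨.inr (.inl c), rfl⟩
    | .seek => ⟨.inr (.inr 0), rfl⟩
    | .right => ⟨.inr (.inr 1), rfl⟩
    | .left => ⟨.inr (.inr 2), rfl⟩

theorem diagramFinal_iff {l : List C} {q : DiagramState C} {s : ℤ} :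
    DiagramFinal l q s ↔
      (q = .left ∧ s = -1) ∨ ∃ i : ℕ, i ≤ l.length ∧ q = l[i]?.elim .right .cell ∧ s = i := by
  constructor
  · rintro (⟨i, hi⟩ | _ | _)
    · exact .inr ⟨i, hi.le, by simp [hi], rfl⟩
    · exact .inr ⟨l.length, le_rfl, by simp, rfl⟩
    · exact .inl ⟨rfl, rfl⟩
  · rintro (⟨rfl, rfl⟩ | ⟨i, hi, rfl, rfl⟩)
    · exact .left
    · obtain hi | rfl := hi.lt_or_eq
      · simpa [hi] using DiagramFinal.cell i hi
      · simpa using DiagramFinal.right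

variable [Inhabited C] {f : (SignType → C) → C} {halt : C → Prop}

theorem DiagramRule.mem_prod_Icc {q q' : DiagramState C} {d : SignType} {η ω : ℤ}
    (h : DiagramRule f halt q d η ω q') : (η, ω) ∈ Set.Icc (-3) 3 ×ˢ Set.Icc (-1) 1 := by
  have hd := signType_coe_bounds d
  cases h with
  | walk _ e =>
    have he := signType_coe_bounds e
    simp only [Set.mem_prod, Set.mem_Icc]
    lia
  | _ => simp only [Set.mem_prod, Set.mem_Icc]; lia

open CounterSystem

/-- Only the last kind of move depends on the input `l`, so the remaining ones form a fixed finite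
list and need not be computed by the reduction. -/
theorem mem_attackerMoves_diagramSystem_iff {l : List C}
    {φ : FreeGroup (Letter (DiagramState C) SignType) →* F2} {u : F2 × F1} :
    u ∈ (diagramSystem f halt l).attackerMoves φ ↔
      u ∈ (diagramSystem f halt []).stepMoves φ ∪ Set.range (finishMove φ .left (-1)) ∨
        ∃ i ≤ l.length, ∃ o, finishMove φ (l[i]?.elim .right .cell) i o = u := by
  have hstep : (diagramSystem f halt l).stepMoves φ = (diagramSystem f halt []).stepMoves φ := rfl
  have hfinal :
      (∃ q s o, (diagramSystem f halt l).final q s ∧ finishMove φ q s o = u) ↔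
        (∃ o, finishMove φ .left (-1) o = u) ∨
          ∃ i ≤ l.length, ∃ o, finishMove φ (l[i]?.elim .right .cell) i o = u := by
    constructor
    · rintro ⟨q, s, o, h, rfl⟩
      obtain ⟨rfl, rfl⟩ | ⟨i, hi, rfl, rfl⟩ := diagramFinal_iff.1 h
      exacts [.inl ⟨o, rfl⟩, .inr ⟨i, hi, o, rfl⟩]
    · rintro (⟨o, rfl⟩ | ⟨i, hi, o, rfl⟩)
      exacts [⟨_, _, o, .left, rfl⟩, ⟨_, _, o, diagramFinal_iff.2 (.inr ⟨i, hi, rfl, rfl⟩), rfl⟩]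
  rw [mem_attackerMoves_iff, hfinal, hstep, Set.mem_union, Set.mem_range, or_assoc]

theorem exists_halt_cellAt_manyOneReducible [Finite C] [Primcodable C] (f : (SignType → C) → C)
    (halt : C → Prop) :
    (fun l : List C => ∃ (n : ℕ) (p : ℤ), |p| ≤ n ∧ halt (cellAt f l n p)) ≤₀ WordGameWon := by
  obtain ⟨φ, hφ⟩ := exists_injective_freeGroup_hom_F2 (Letter (DiagramState C) SignType)
  have hstep : ((diagramSystem f halt []).stepMoves φ).Finite :=
    stepMoves_finite ((Set.finite_Icc _ _).prod (Set.finite_Icc _ _)) fun _ _ _ _ _ h =>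
      DiagramRule.mem_prod_Icc h
  obtain ⟨moves, hmoves⟩ :=
    exists_list_decodeMove (hstep.union (Set.finite_range (finishMove φ .left (-1))))
  choose finish hfinish using fun c : Option C =>
    exists_list_decodeMove (Set.finite_range (finishMove φ (c.elim .right .cell) 0))
  obtain ⟨challenges, hchallenges⟩ :=
    exists_list_decodeChallenge (Set.finite_range fun o : Option SignType => φ (challenge o))
  let w : BWord := (φ counter)⁻¹.toWord
  refine ⟨inputInstance moves finish w challenges, (primrec_inputInstance _ _ _ _).to_comp,
    fun l => ?_⟩
  have hA : {u | u ∈ (inputInstance moves finish w challenges l).1.map decodeMove} =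
      (diagramSystem f halt l).attackerMoves φ := by
    ext u
    have hpad (i : ℕ) (c : Option C) :
        (∃ m ∈ (finish c).map decodeMove, m * (FreeGroup.mk w ^ i, 1) = u) ↔
          ∃ o, finishMove φ (c.elim .right .cell) i o = u := by
      simp only [hfinish, Set.exists_range_iff, finishMove_eq_mul, w, FreeGroup.mk_toWord]
    simp only [Set.mem_ofPred_eq, mem_map_decodeMove_inputInstance, hmoves, hpad,
      mem_attackerMoves_diagramSystem_iff]
  have hD : {d | d ∈ challenges.map decodeChallenge} = defenderMoves φ := by
    ext d
    simp [hchallenges, defenderMoves, config]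
  exact diagramSystem_accepts_iff.symm.trans
    (wgAttackerWins_one_iff (diagramSystem_rankedBy f halt l) hφ hA hD).symm

end Reduction

section TuringMachines

open Turing

theorem eval_dom_iff_exists_iterate {σ : Type*} {f : σ → Option σ} {a : σ} :
    (StateTransition.eval f a).Dom ↔ ∃ n, f ((fun c => (f c).getD c)^[n] a) = none := by
  rw [Part.dom_iff_mem]
  constructor
  · rintro ⟨b, hb⟩
    rw [StateTransition.mem_eval] at hb
    obtain ⟨hreach, hb⟩ := hb
    suffices ∃ n, (fun c => (f c).getD c)^[n] a = b by
      obtain ⟨n, rfl⟩ := this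
      exact ⟨n, hb⟩
    clear hb
    induction hreach with
    | refl => exact ⟨0, rfl⟩
    | @tail b _ _ hstep ih =>
      obtain ⟨n, hn⟩ := ih
      exact ⟨n + 1, by simp [Function.iterate_succ_apply', hn, Option.mem_def.1 hstep]⟩
  · rintro ⟨n, hn⟩
    refine ⟨_, StateTransition.mem_eval.2 ⟨?_, hn⟩⟩
    clear hn
    induction n with
    | zero => exact .refl
    | succ n ih =>
      rw [Function.iterate_succ_apply']
      cases hstep : f ((fun c => (f c).getD c)^[n] a) with
      | none => exact ih
      | some b => exact ih.tail hstep

variable {Γ Λ : Type*} [Inhabited Γ] [Inhabited Λ]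

/-- The new state, the new symbol and the displacement of the head when `M` reads `a` in state `q`;
a halted machine idles. -/
def headAction (M : TM0.Machine Γ Λ) (q : Λ) (a : Γ) : Λ × Γ × SignType :=
  match M q a with
  | none => (q, a, 0)
  | some (q', .write b) => (q', b, 0)
  | some (q', .move .left) => (q', a, -1)
  | some (q', .move .right) => (q', a, 1)

/-- The total step function of a Turing machine, idling once the machine has halted. -/
def idlingStep (M : TM0.Machine Γ Λ) (c : TM0.Cfg Γ Λ) : TM0.Cfg Γ Λ :=
  (TM0.step M c).getD c

theorem idlingStep_q (M : TM0.Machine Γ Λ) (c : TM0.Cfg Γ Λ) :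
    (idlingStep M c).q = (headAction M c.q c.Tape.head).1 := by
  obtain ⟨q, T⟩ := c
  rcases h : M q T.head with _ | ⟨q', (_ | _) | b⟩ <;>
    simp [idlingStep, TM0.step, headAction, h]

theorem idlingStep_tape_nth (M : TM0.Machine Γ Λ) (c : TM0.Cfg Γ Λ) (i : ℤ) :
    (idlingStep M c).Tape.nth (i - (headAction M c.q c.Tape.head).2.2) =
      if i = 0 then (headAction M c.q c.Tape.head).2.1 else c.Tape.nth i := by
  obtain ⟨q, T⟩ := c
  have hself (i : ℤ) : (if i = 0 then T.head else T.nth i) = T.nth i := by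
    split_ifs with hi
    · rw [hi, Tape.nth_zero]
    · rfl
  rcases h : M q T.head with _ | ⟨q', (_ | _) | b⟩ <;>
    simp [idlingStep, TM0.step, headAction, h, hself, Tape.write_nth]

/-- The row of cells representing the configuration `c` with its head at cell `h`: a cell consists
of a symbol, together with the state at the head. -/
def configRow (c : TM0.Cfg Γ Λ) (h p : ℤ) : Γ × Option Λ :=
  (c.Tape.nth (p - h), if p = h then some c.q else none)

/-- The state that the cell `c` sends to its neighbour in direction `e`. -/
def sentState (M : TM0.Machine Γ Λ) (c : Γ × Option Λ) (e : SignType) : Option Λ :=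
  c.2.bind fun q => if (headAction M q c.1).2.2 = e then some (headAction M q c.1).1 else none

/-- The local rule of the cellular automaton simulating a Turing machine. -/
def machineRule (M : TM0.Machine Γ Λ) (w : SignType → Γ × Option Λ) : Γ × Option Λ :=
  ((w 0).2.elim (w 0).1 fun q => (headAction M q (w 0).1).2.1,
    (sentState M (w (-1)) 1).or ((sentState M (w 0) 0).or (sentState M (w 1) (-1))))

/-- The cell of a halted machine at which the head is. -/
def HaltsAt (M : TM0.Machine Γ Λ) (c : Γ × Option Λ) : Prop :=
  ∃ q, c.2 = some q ∧ M q c.1 = none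

/-- The initial row of cells on input `l`. -/
def inputCells (Λ : Type*) [Inhabited Λ] (l : List Γ) : List (Γ × Option Λ) :=
  (l.headI, some default) :: l.tail.map fun a => (a, none)

theorem sentState_configRow (M : TM0.Machine Γ Λ) (c : TM0.Cfg Γ Λ) (h p : ℤ) (e : SignType) :
    sentState M (configRow c h p) e =
      if p = h ∧ (headAction M c.q c.Tape.head).2.2 = e then some (idlingStep M c).q else none := by
  by_cases hp : p = h <;> simp [sentState, configRow, idlingStep_q, hp]

theorem machineRule_configRow (M : TM0.Machine Γ Λ) (c : TM0.Cfg Γ Λ) (h p : ℤ) :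
    machineRule M (fun δ => configRow c h (p + δ)) =
      configRow (idlingStep M c) (h + (headAction M c.q c.Tape.head).2.2) p := by
  ext : 1
  · simp only [machineRule, configRow, SignType.coe_zero, add_zero, ← sub_sub,
      idlingStep_tape_nth, sub_eq_zero]
    split_ifs with hp <;> simp [hp]
  · simp only [machineRule, sentState_configRow]
    simp only [configRow]
    generalize (headAction M c.q c.Tape.head).2.2 = d
    have hsign : (-1 : SignType) ≠ 0 ∧ (-1 : SignType) ≠ 1 ∧ (0 : SignType) ≠ 1 := by decide
    obtain rfl | rfl | rfl := d.trichotomy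
    all_goals
      simp only [SignType.coe_neg_one, SignType.coe_zero, SignType.coe_one]
      grind

theorem haltsAt_configRow {M : TM0.Machine Γ Λ} {c : TM0.Cfg Γ Λ} {h p : ℤ} :
    HaltsAt M (configRow c h p) ↔ p = h ∧ TM0.step M c = none := by
  by_cases hp : p = h <;> simp [HaltsAt, configRow, TM0.step, hp]

theorem getI_inputCells (l : List Γ) (p : ℕ) :
    (inputCells Λ l).getI p = (l.getI p, if p = 0 then some default else none) := by
  cases p with
  | zero => cases l <;> simp [inputCells]
  | succ p =>
    have hmap : (l.tail.map fun a => (a, (none : Option Λ))).getI p = (l.tail.getI p, none) := by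
      rw [← List.getD_default_eq_getI, ← List.getD_default_eq_getI]
      exact List.getD_map (f := fun a => (a, (none : Option Λ))) ..
    cases l <;> simpa [inputCells] using hmap

theorem initialCell_inputCells (l : List Γ) :
    initialCell (inputCells Λ l) = configRow (TM0.init l) 0 := by
  funext p
  obtain hp | hp := lt_or_ge p 0
  · obtain ⟨n, rfl⟩ := Int.eq_negSucc_of_lt_zero hp
    rw [initialCell_of_neg hp]
    rfl
  · lift p to ℕ using hp
    have hnth : (Tape.mk₁ l).nth p = l.getI p := Tape.mk'_nth_nat _ _ p
    calc initialCell (inputCells Λ l) p = (inputCells Λ l).getI p := if_pos (by lia)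
      _ = (l.getI p, if p = 0 then some default else none) := getI_inputCells l p
      _ = configRow (TM0.init l) 0 p := by simp [configRow, TM0.init, hnth]

theorem exists_cellAt_eq_configRow (M : TM0.Machine Γ Λ) (l : List Γ) (n : ℕ) :
    ∃ h : ℤ, |h| ≤ n ∧ cellAt (machineRule M) (inputCells Λ l) n =
      configRow ((idlingStep M)^[n] (TM0.init l)) h := by
  induction n with
  | zero => exact ⟨0, by simp, initialCell_inputCells l⟩
  | succ n ih =>
    obtain ⟨h, hn, hrow⟩ := ih
    set c := (idlingStep M)^[n] (TM0.init l) with hc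
    have hd := signType_coe_bounds (headAction M c.q c.Tape.head).2.2
    refine ⟨h + (headAction M c.q c.Tape.head).2.2, ?_, funext fun p => ?_⟩
    · rw [abs_le] at hn ⊢
      lia
    · rw [cellAt, hrow, machineRule_configRow, Function.iterate_succ_apply', hc]

theorem exists_haltsAt_cellAt_iff {M : TM0.Machine Γ Λ} {l : List Γ} :
    (∃ (n : ℕ) (p : ℤ), |p| ≤ n ∧ HaltsAt M (cellAt (machineRule M) (inputCells Λ l) n p)) ↔
      (TM0.eval M l).Dom := by
  have hdom : (TM0.eval M l).Dom ↔ ∃ n, TM0.step M ((idlingStep M)^[n] (TM0.init l)) = none :=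
    eval_dom_iff_exists_iterate
  rw [hdom]
  refine exists_congr fun n => ?_
  obtain ⟨h, hn, hrow⟩ := exists_cellAt_eq_configRow M l n
  simp only [hrow, haltsAt_configRow]
  exact ⟨fun ⟨_, _, _, hstep⟩ => hstep, fun hstep => ⟨h, hn, rfl, hstep⟩⟩

theorem primrec_inputCells [Primcodable Γ] [Primcodable Λ] :
    Primrec (inputCells Λ : List Γ → List (Γ × Option Λ)) :=
  Primrec.list_cons.comp (.pair .list_headI (.const _))
    (Primrec.list_map .list_tail (Primrec.pair .snd (.const _)))

theorem tm0_eval_dom_manyOneReducible [Finite Γ] [Finite Λ] [Primcodable Γ]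
    (M : TM0.Machine Γ Λ) : (fun l : List Γ => (TM0.eval M l).Dom) ≤₀ WordGameWon := by
  obtain ⟨n, ⟨e⟩⟩ := Finite.exists_equiv_fin Λ
  let : Primcodable Λ := .ofEquiv (Fin n) e
  have hinput : (fun l : List Γ => (TM0.eval M l).Dom) ≤₀ fun l : List (Γ × Option Λ) =>
      ∃ (n : ℕ) (p : ℤ), |p| ≤ n ∧ HaltsAt M (cellAt (machineRule M) l n p) :=
    ⟨inputCells Λ, primrec_inputCells.to_comp, fun _ => exists_haltsAt_cellAt_iff.symm⟩
  exact hinput.trans (exists_halt_cellAt_manyOneReducible _ _)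

end TuringMachines

section Universality

open Turing

theorem exists_tm0_on_support {Γ Λ : Type*} [Inhabited Γ] [Inhabited Λ] {M : TM0.Machine Γ Λ}
    {S : Set Λ} (hM : TM0.Supports M S) :
    ∃ (_ : Inhabited S) (M' : TM0.Machine Γ S), ∀ l, (TM0.eval M' l).Dom ↔ (TM0.eval M l).Dom := by
  classical
  let : Inhabited S := ⟨⟨default, hM.1⟩⟩
  let symbol : PointedMap Γ Γ := ⟨id, rfl⟩
  let label : PointedMap Λ S := ⟨fun q => if hq : q ∈ S then ⟨q, hq⟩ else default, dif_pos hM.1⟩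
  have label_coe : ∀ q ∈ S, (label q : Λ) = q := fun q hq => congrArg Subtype.val (dif_pos hq)
  have hinit (l : List Γ) : (TM0.init l : TM0.Cfg Γ Λ).q ∈ S ∧
      TM0.Cfg.map symbol label (TM0.init l) = (TM0.init l : TM0.Cfg Γ S) :=
    ⟨hM.1, by rw [TM0.map_init]; exact congrArg TM0.init l.map_id⟩
  exact ⟨inferInstance, M.map symbol symbol label Subtype.val, fun l =>
    StateTransition.tr_eval_dom (TM0.Machine.map_respects M symbol symbol label Subtype.val hM
      (fun _ => rfl) label_coe) (hinit l)⟩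

theorem tm0_eval_dom_manyOneReducible_of_supports {Γ Λ : Type} [Inhabited Γ] [Inhabited Λ]
    [Finite Γ] [Primcodable Γ] {M : TM0.Machine Γ Λ} {S : Set Λ} (hS : S.Finite)
    (hM : TM0.Supports M S) : (fun l : List Γ => (TM0.eval M l).Dom) ≤₀ WordGameWon := by
  have : Finite S := hS
  obtain ⟨_, M', hM'⟩ := exists_tm0_on_support hM
  simpa only [hM'] using tm0_eval_dom_manyOneReducible M'

section StackMachines

variable {K : Type} [DecidableEq K] [Finite K] {Γ : K → Type} [∀ k, Finite (Γ k)]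

theorem primrec_trInit [Primcodable (TM2to1.Γ' K Γ)] (k : K) [Primcodable (Γ k)] :
    Primrec (TM2to1.trInit k : List (Γ k) → List (TM2to1.Γ' K Γ)) := by
  have : Finite (TM2to1.Γ' K Γ) := inferInstanceAs (Finite (Bool × ∀ k, Option (Γ k)))
  let cell (a : Γ k) : TM2to1.Γ' K Γ := (false, Function.update (fun _ => none) k (some a))
  let markBottom (c : TM2to1.Γ' K Γ) : TM2to1.Γ' K Γ := (true, c.2)
  have hcells : Primrec fun l : List (Γ k) => l.reverse.map cell :=
    Primrec.list_map .list_reverse ((Primrec.dom_finite cell).comp .snd).to₂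
  exact Primrec.list_cons.comp
    ((Primrec.dom_finite markBottom).comp (Primrec.list_headI.comp hcells))
    (Primrec.list_tail.comp hcells)

theorem tm2_eval_dom_manyOneReducible {Λ σ : Type} [Inhabited Λ] [Inhabited σ] [Finite σ]
    {M : Λ → TM2.Stmt Γ Λ σ} {S : Finset Λ} (hM : TM2.Supports M S) (k : K)
    [Primcodable (Γ k)] : (fun l : List (Γ k) => (TM2.eval M k l).Dom) ≤₀ WordGameWon := by
  have := Fintype.ofFinite K
  have (k : K) := Fintype.ofFinite (Γ k)
  have := Fintype.ofFinite σ
  obtain ⟨n, ⟨e⟩⟩ := Finite.exists_equiv_fin (TM2to1.Γ' K Γ)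
  let : Primcodable (TM2to1.Γ' K Γ) := .ofEquiv (Fin n) e
  have hTM0 := TM1to0.tr_supports (TM2to1.tr M) (TM2to1.tr_supports M hM)
  have hTM1 : (fun l => (TM1.eval (TM2to1.tr M) l).Dom) ≤₀ WordGameWon := by
    simpa only [TM1to0.tr_eval] using
      tm0_eval_dom_manyOneReducible_of_supports (Finset.finite_toSet _) hTM0
  exact .trans ⟨TM2to1.trInit k, (primrec_trInit k).to_comp,
    fun l => (TM2to1.tr_eval_dom M k l).symm⟩ hTM1

end StackMachines

section Codes

open PartrecToTM2

instance : Finite K' :=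
  .of_surjective ![K'.main, K'.rev, K'.aux, K'.stack] fun k => by
    cases k <;> simp [Fin.exists_fin_succ]

noncomputable instance : Primcodable Γ' := .ofEquiv _ (Fintype.equivFin Γ')

theorem trNum_bit0 {n : Num} (hn : n ≠ 0) : trNum n.bit0 = Γ'.bit0 :: trNum n := by
  cases n with
  | zero => exact absurd rfl hn
  | pos => rfl

theorem trNum_bit1 (n : Num) : trNum n.bit1 = Γ'.bit1 :: trNum n := by
  cases n <;> rfl

theorem trNat_of_ne_zero {n : ℕ} (hn : n ≠ 0) :
    trNat n = (bif n.bodd then Γ'.bit1 else Γ'.bit0) :: trNat (n / 2) := by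
  have hcast : (n : Num) = cond n.bodd Num.bit1 Num.bit0 ((n / 2 : ℕ) : Num) := by
    rw [← Num.ofNat'_eq, ← Num.ofNat'_eq, ← Nat.div2_val, ← Num.ofNat'_bit, Nat.bit_bodd_div2]
  unfold trNat
  rw [hcast]
  cases hb : n.bodd with
  | true => exact trNum_bit1 _
  | false =>
    have heven : n % 2 = 0 := by rw [Nat.mod_two_of_bodd, hb]; rfl
    exact trNum_bit0 (Nat.cast_ne_zero.2 (by lia))

theorem primrec_trNat : Primrec trNat := by
  have hrec : Primrec₂ fun (_ : Unit) n => trNat n := by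
    refine Primrec.nat_strong_rec _ (g := fun _ L => some (if L.length = 0 then [] else
      (bif L.length.bodd then Γ'.bit1 else Γ'.bit0) :: L.getI (L.length / 2))) ?_ ?_
    · have hlength : Primrec fun y : Unit × List (List Γ') => y.2.length :=
        Primrec.list_length.comp .snd
      refine Primrec.option_some.comp (.ite (Primrec.eq.comp hlength (.const 0)) (.const _) ?_)
      exact Primrec.list_cons.comp
        (Primrec.cond (Primrec.nat_bodd.comp hlength) (.const _) (.const _))
        (Primrec.list_getI.comp .snd (Primrec.nat_div.comp hlength (.const 2)))
    · intro _ n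
      rcases eq_or_ne n 0 with rfl | hn
      · simp
      · have hlt : n / 2 < n := by lia
        simp [trNat_of_ne_zero hn, hn, List.getI_eq_getElem, hlt]
  exact hrec.comp (.const ()) .id

theorem code_eval_dom_manyOneReducible (c : ToPartrec.Code) :
    (fun n => (c.eval [n]).Dom) ≤₀ WordGameWon := by
  let : Inhabited Λ' := ⟨trNormal c Cont'.halt⟩
  have hinput : Primrec fun n => trList [n] := Primrec.list_append.comp primrec_trNat (.const _)
  have hdom (n : ℕ) : (c.eval [n]).Dom ↔ (TM2.eval tr K'.main (trList [n])).Dom := by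
    have hinit : TM2.init K'.main (trList [n]) = init c [n] :=
      congrArg (TM2.Cfg.mk _ _) (funext fun k => by cases k <;> rfl)
    have heval := tr_eval c [n]
    rw [← hinit] at heval
    change _ ↔ (StateTransition.eval _ _).Dom
    rw [heval]
    rfl
  exact .trans ⟨_, hinput.to_comp, hdom⟩ (tm2_eval_dom_manyOneReducible (tr_supports c _) K'.main)

end Codes

theorem halting_manyOneReducible :
    (fun c : Nat.Partrec.Code => (c.eval 0).Dom) ≤₀ WordGameWon := by
  have huniversal : Partrec fun v : List.Vector ℕ 1 =>
      (Denumerable.ofNat Nat.Partrec.Code v.head).eval 0 :=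
    Nat.Partrec.Code.eval_part.comp ((Primrec.ofNat _).comp .vector_head).to_comp (.const 0)
  obtain ⟨u, hu⟩ := ToPartrec.Code.exists_code (Nat.Partrec'.part_iff.2 huniversal)
  have hdom (c : Nat.Partrec.Code) : (c.eval 0).Dom ↔ (u.eval [Encodable.encode c]).Dom := by
    have hc : u.eval [Encodable.encode c] = pure <$> c.eval 0 := by
      simpa [List.Vector.head] using hu ⟨[Encodable.encode c], rfl⟩
    rw [hc]
    rfl
  exact .trans ⟨Encodable.encode, Computable.encode, hdom⟩ (code_eval_dom_manyOneReducible u)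

end Universality

/-- It is undecidable whether Attacker has a winning strategy in the Word Game on pairs of
group words when the initial position is the pair of empty words `(1, 1)`. -/
theorem word_game_pairs_from_identity_undecidable :
    ¬ ComputablePred (fun inst : WGInstance =>
      WGAttackerWins (inst.1.map fun p => (FreeGroup.mk p.1, FreeGroup.mk p.2))
        (inst.2.map fun v => ((FreeGroup.mk v : F2), (1 : F1)))
        (1 : F2 × F1)) :=
  fun h => ComputablePred.halting_problem 0
    (ComputablePred.computable_of_manyOneReducible halting_manyOneReducible h)
end

section
/- It is undecidable whether Attacker has a winning strategy in the Matrix Game of dimension four: the predicate on encoded instances (Attacker's finite list of matrices MU₁, …, MU_r ∈ ℤ^{4×4}, Defender's finite list of matrices MV₁, …, MV_s ∈ ℤ^{4×4}, and an initial vector x₀ ∈ ℤ⁴) asserting that Attacker has a winning strategy is not a computable predicate. -/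
/-- An encoding of a `4 × 4` integer matrix as a function. -/
abbrev MCode : Type := Fin 4 → Fin 4 → ℤ

/-- An encoded instance of the Matrix Game of dimension four: Attacker's finite list of
matrices, Defender's finite list of matrices, and the initial vector `x₀ ∈ ℤ⁴`. -/
abbrev MGInstance : Type := List MCode × List MCode × (Fin 4 → ℤ)

/-- The configuration (a vector in `ℤ⁴`) after `k` rounds of the Matrix Game, starting from
`x0`, when Defender plays the sequence of matrices `δ` and Attacker follows the strategy
`st` (a function of the finite history of Defender's choices so far): in each round
Defender's matrix is applied first, then Attacker's. -/
def mgPos (x0 : Fin 4 → ℤ) (δ : ℕ → MCode) (st : List MCode → MCode) : ℕ → Fin 4 → ℤ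
  | 0 => x0
  | k + 1 =>
    (Matrix.of (st ((List.range (k + 1)).map δ))).mulVec
      ((Matrix.of (δ k)).mulVec (mgPos x0 δ st k))

/-- Attacker has a winning strategy in the Matrix Game with Attacker's matrix list `A`,
Defender's matrix list `D` and initial vector `x0`: there is a strategy, choosing a matrix
from `A` for every finite history of Defender's choices, such that every infinite play
consistent with it returns to the initial vector `x0` after some Attacker move. -/
def MGAttackerWins (A D : List MCode) (x0 : Fin 4 → ℤ) : Prop :=
  ∃ st : List MCode → MCode,
    (∀ hist, (∀ M ∈ hist, M ∈ D) → st hist ∈ A) ∧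
    ∀ δ : ℕ → MCode, (∀ i, δ i ∈ D) → ∃ n, mgPos x0 δ st (n + 1) = x0

/-!
Let Defender have only the identity matrix, so that Attacker plays alone. Two words over a finite
alphabet, read as numerals in base `b`, fit into one vector of `ℤ⁴`, and appending fixed words to
both of them is a linear map. A further matrix subtracts the two numerals, so that Attacker returns
to the initial vector exactly if he has built the same word twice, which is Post's correspondence
problem with a prescribed initial word.

Correspondences simulate a fixed Turing machine on cyclic words: the pairs `(x, x)` rotate the
word, the other pairs rewrite it near the head. The machine decodes its input `m` from the binary
expansion of `2 ^ m`, which on the tape is a block of `m` equal letters. Hence the initial word,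
and with it the only matrix that depends on `m`, is computed from `m` by a simple recursion.
-/

namespace MatrixGame

open Turing
open scoped List Matrix

/-! ### Post correspondences -/

section PostCorrespondence

variable {α : Type*} {R : List α → List α → Prop} {w w' w'' l r u : List α}

/-- The words `w` and `w'` correspond under the pairs `R` if `w r₁ ⋯ rₙ = l₁ ⋯ lₙ w'` for some
pairs `(l₁, r₁), …, (lₙ, rₙ)` in `R`. For `w' = []` this is a solution of Post's correspondence
problem with prescribed initial pair `([], w)`. -/
def PostCorresp (R : List α → List α → Prop) (w w' : List α) : Prop :=
  ∃ ps : List (List α × List α), (∀ p ∈ ps, R p.1 p.2) ∧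
    w ++ ps.flatMap Prod.snd = ps.flatMap Prod.fst ++ w'

namespace PostCorresp

theorem trans (h : PostCorresp R w w') (h' : PostCorresp R w' w'') : PostCorresp R w w'' := by
  obtain ⟨ps, hps, e⟩ := h
  obtain ⟨ps', hps', e'⟩ := h'
  refine ⟨ps ++ ps', List.forall_mem_append.2 ⟨hps, hps'⟩, ?_⟩
  rw [List.flatMap_append, List.flatMap_append, ← List.append_assoc, e, List.append_assoc, e',
    List.append_assoc]

theorem of_pair (h : R l r) (u : List α) : PostCorresp R (l ++ u) (u ++ r) :=
  ⟨[(l, r)], by simpa using h, by simp⟩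

theorem of_isRotated (hcopy : ∀ a, R [a] [a]) (h : w ~r w') : PostCorresp R w w' := by
  obtain ⟨n, rfl⟩ := h
  induction n generalizing w with
  | zero => exact ⟨[], by simp⟩
  | succ n ih =>
    cases w with
    | nil => exact ⟨[], by simp⟩
    | cons a w => simpa using (of_pair (hcopy a) w).trans ih

theorem of_pair_isRotated (hcopy : ∀ a, R [a] [a]) (hlr : R l r) (h : w ~r l ++ u)
    (h' : r ++ u ~r w') : PostCorresp R w w' :=
  ((of_isRotated hcopy h).trans (of_pair hlr u)).trans
    (of_isRotated hcopy (List.isRotated_append.trans h'))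

end PostCorresp

theorem eq_of_cons_isRotated_cons {a : α} {u v : List α} (h : a :: u ~r a :: v) (ha : a ∉ v) :
    u = v := by
  obtain ⟨n, hn, e⟩ := List.isRotated_iff_mod.1 h.symm
  rw [List.rotate_eq_drop_append_take hn] at e
  have hsplit := List.take_append_drop n (a :: v)
  rcases hs : (a :: v).take n with _ | ⟨b, s⟩ <;> rcases ht : (a :: v).drop n with _ | ⟨c, t⟩ <;>
    grind

end PostCorrespondence

/-! ### Turing machines as Post correspondences -/

section TuringMachine

/-- The letters of the cyclic words that encode configurations of a Turing machine with tape
alphabet `Γ` and states `Q`. The letter `edge` separates the two ends of the visited part of the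
tape, and `halted` appears once the machine has stopped. -/
inductive Letter (Γ Q : Type*)
  | cell (a : Γ)
  | state (q : Q)
  | edge
  | halted
  deriving Fintype

open Letter

variable {Γ Λ : Type*} {S : Set Λ}

/-- The cyclic word of a configuration in state `q` with `l` to the left of the head, nearest cell
first, and `r` under and to the right of the head. It is cut open in front of the state. -/
def configWord (q : S) (l r : List Γ) : List (Letter Γ S) :=
  state q :: (r.map cell ++ edge :: l.reverse.map cell)

theorem configWord_isRotated_edge (q : S) (l r : List Γ) :
    configWord q l r ~r edge :: (l.reverse.map cell ++ state q :: r.map cell) :=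
  List.isRotated_append (l := state q :: r.map cell)

theorem configWord_isRotated_left (q : S) (c : Γ) (l r : List Γ) :
    configWord q (c :: l) r ~r
      cell c :: state q :: (r.map cell ++ edge :: l.reverse.map cell) := by
  have hsplit : configWord q (c :: l) r =
      (state q :: (r.map cell ++ edge :: l.reverse.map cell)) ++ [cell c] := by simp [configWord]
  exact hsplit ▸ List.isRotated_append

theorem configWord_append_right_isRotated (q : S) (l r : List Γ) (c : Γ) :
    configWord q l (r ++ [c]) ~r
      cell c :: edge :: (l.reverse.map cell ++ state q :: r.map cell) := by
  simpa [configWord] using List.isRotated_append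
    (l := state q :: r.map cell) (l' := cell c :: edge :: l.reverse.map cell)

theorem configWord_append_left_isRotated (q : S) (l r : List Γ) (c : Γ) :
    configWord q (l ++ [c]) r ~r
      edge :: cell c :: (l.reverse.map cell ++ state q :: r.map cell) := by
  simpa using configWord_isRotated_edge q (l ++ [c]) r

theorem eq_of_edge_isRotated {q : S} {l r : List Γ} {u : List (Letter Γ S)}
    (h : edge :: u ~r configWord q l r) : u = l.reverse.map cell ++ state q :: r.map cell :=
  eq_of_cons_isRotated_cons (h.trans (configWord_isRotated_edge q l r)) (by simp)

theorem eq_of_state_cell_isRotated {q q' : S} {l r : List Γ} {a : Γ} {u : List (Letter Γ S)}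
    (h : state q' :: cell a :: u ~r configWord q l r) :
    q' = q ∧ ∃ r', r = a :: r' ∧ u = r'.map cell ++ edge :: l.reverse.map cell := by
  obtain rfl : q' = q := by simpa [configWord] using h.mem_iff.1 List.mem_cons_self
  have htail := eq_of_cons_isRotated_cons h (by simp)
  cases r <;> simp_all

theorem eq_of_cell_state_cell_isRotated {q q' : S} {l r : List Γ} {a c : Γ}
    {u : List (Letter Γ S)} (h : cell c :: state q' :: cell a :: u ~r configWord q l r) :
    q' = q ∧ ∃ l' r', l = c :: l' ∧ r = a :: r' ∧
      u = r'.map cell ++ edge :: l'.reverse.map cell := by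
  have hrot : state q' :: cell a :: (u ++ [cell c]) ~r configWord q l r :=
    (List.isRotated_append (l := state q' :: cell a :: u)).trans h
  obtain ⟨rfl, r', rfl, hu⟩ := eq_of_state_cell_isRotated hrot
  refine ⟨rfl, ?_⟩
  rcases l with _ | ⟨c', l'⟩
  · simpa using congrArg List.getLast? hu
  · have hu' : u ++ [cell c] = (r'.map cell ++ edge :: l'.reverse.map cell) ++ [cell c'] := by
      simpa using hu
    obtain ⟨rfl, hc⟩ := List.append_inj' hu' rfl
    obtain rfl : c = c' := by simpa using hc
    exact ⟨l', r', rfl, rfl, rfl⟩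

variable [Inhabited Γ]

/-- The configuration in state `q` with `l` to the left of the head, nearest cell first, and `r`
under and to the right of the head. -/
def config (q : Λ) (l r : List Γ) : TM0.Cfg Γ Λ :=
  ⟨q, Tape.mk' (ListBlank.mk l) (ListBlank.mk r)⟩

theorem config_append_default_right (q : Λ) (l r : List Γ) :
    config q l (r ++ [default]) = config q l r :=
  congrArg (fun R => (⟨q, Tape.mk' _ R⟩ : TM0.Cfg Γ Λ)) (Quotient.sound' (Or.inr ⟨1, rfl⟩))

theorem config_append_default_left (q : Λ) (l r : List Γ) :
    config q (l ++ [default]) r = config q l r :=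
  congrArg (fun L => (⟨q, Tape.mk' L _⟩ : TM0.Cfg Γ Λ)) (Quotient.sound' (Or.inr ⟨1, rfl⟩))

/-- The cyclic word `w` encodes the configuration `x`. The bound on the length ensures that the
left word of any pair that can be applied is a prefix of `w`. -/
def Encodes (w : List (Letter Γ S)) (x : TM0.Cfg Γ Λ) : Prop :=
  3 ≤ w.length ∧ ∃ (q : S) (l r : List Γ), x = config q.1 l r ∧ w ~r configWord q l r

theorem Encodes.of_isRotated {lhs rhs u : List (Letter Γ S)} {q : S} {l r : List Γ}
    (hlen : 3 ≤ (lhs ++ u).length) (hle : lhs.length ≤ rhs.length)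
    (h : rhs ++ u ~r configWord q l r) : Encodes (u ++ rhs) (config q.1 l r) :=
  ⟨by simp only [List.length_append] at hlen ⊢; lia, q, l, r, rfl, List.isRotated_append.trans h⟩

variable [Inhabited Λ] {M : TM0.Machine Γ Λ}

theorem step_config_eq_none {q : Λ} {a : Γ} (h : M q a = none) (l r : List Γ) :
    TM0.step M (config q l (a :: r)) = none := by
  simp [TM0.step, config, h]

theorem step_config_right {q q' : Λ} {a : Γ}
    (h : M q a = some (q', TM0.Stmt.move Dir.right)) (l r : List Γ) :
    TM0.step M (config q l (a :: r)) = some (config q' (a :: l) r) := by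
  simp [TM0.step, config, h]

theorem step_config_left {q q' : Λ} {a : Γ}
    (h : M q a = some (q', TM0.Stmt.move Dir.left)) (c : Γ) (l r : List Γ) :
    TM0.step M (config q (c :: l) (a :: r)) = some (config q' l (c :: a :: r)) := by
  simp [TM0.step, config, h]

theorem step_config_write {q q' : Λ} {a b : Γ} (h : M q a = some (q', TM0.Stmt.write b))
    (l r : List Γ) : TM0.step M (config q l (a :: r)) = some (config q' l (b :: r)) := by
  simp [TM0.step, config, h]

/-- The pairs simulating a Turing machine on cyclic words: besides copying letters, blank cells may
be inserted next to `edge`, transitions of the machine are performed, and once the machine has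
halted all letters are erased. -/
inductive MachinePair (M : TM0.Machine Γ Λ) (S : Set Λ) :
    List (Letter Γ S) → List (Letter Γ S) → Prop
  | copy (x) : MachinePair M S [x] [x]
  | padRight : MachinePair M S [edge] [cell default, edge]
  | padLeft : MachinePair M S [edge] [edge, cell default]
  | right {q q' : S} {a : Γ} (h : M q a = some (q'.1, TM0.Stmt.move Dir.right)) :
      MachinePair M S [state q, cell a] [cell a, state q']
  | left {q q' : S} {a : Γ} (c : Γ) (h : M q a = some (q'.1, TM0.Stmt.move Dir.left)) :
      MachinePair M S [cell c, state q, cell a] [state q', cell c, cell a]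
  | write {q q' : S} {a b : Γ} (h : M q a = some (q'.1, TM0.Stmt.write b)) :
      MachinePair M S [state q, cell a] [state q', cell b]
  | halt {q : S} {a : Γ} (h : M q a = none) : MachinePair M S [state q, cell a] [halted]
  | erase (x) : MachinePair M S [halted, x] [halted]
  | done : MachinePair M S [halted] []

theorem MachinePair.length_le {l r : List (Letter Γ S)} (h : MachinePair M S l r) :
    l.length ≤ 3 ∧ r.length ≤ 3 := by
  cases h <;> simp

theorem finite_machinePairs (M : TM0.Machine Γ Λ) (S : Set Λ) [Finite Γ] [Finite S] :
    {p : List (Letter Γ S) × List (Letter Γ S) | MachinePair M S p.1 p.2}.Finite := by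
  have := Fintype.ofFinite Γ
  have := Fintype.ofFinite S
  have hshort := List.finite_length_le (Letter Γ S) 3
  exact (hshort.prod hshort).subset fun _ hp => hp.length_le

/-! ### Halting computations yield correspondences -/

theorem postCorresp_halted_nil (u : List (Letter Γ S)) :
    PostCorresp (MachinePair M S) (halted :: u) [] := by
  induction u with
  | nil => exact PostCorresp.of_pair MachinePair.done []
  | cons x u ih => exact .trans (.of_pair_isRotated .copy (.erase x) (.refl _) (.refl _)) ih

theorem postCorresp_padRight (q : S) (l r : List Γ) :
    PostCorresp (MachinePair M S) (configWord q l r) (configWord q l (r ++ [default])) :=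
  .of_pair_isRotated .copy .padRight (configWord_isRotated_edge q l r)
    (configWord_append_right_isRotated q l r default).symm

theorem postCorresp_padLeft (q : S) (l r : List Γ) :
    PostCorresp (MachinePair M S) (configWord q l r) (configWord q (l ++ [default]) r) :=
  .of_pair_isRotated .copy .padLeft (configWord_isRotated_edge q l r)
    (configWord_append_left_isRotated q l r default).symm

theorem exists_cons_postCorresp (M : TM0.Machine Γ Λ) (q : S) (l r : List Γ) :
    ∃ c l' a r', config q.1 l r = config q.1 (c :: l') (a :: r') ∧
      PostCorresp (MachinePair M S) (configWord q l r) (configWord q (c :: l') (a :: r')) := by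
  obtain ⟨c, l', hl⟩ := List.exists_cons_of_ne_nil (show l ++ [default] ≠ [] by simp)
  obtain ⟨a, r', hr⟩ := List.exists_cons_of_ne_nil (show r ++ [default] ≠ [] by simp)
  refine ⟨c, l', a, r', ?_, ?_⟩ <;> rw [← hl, ← hr]
  · rw [config_append_default_left, config_append_default_right]
  · exact (postCorresp_padLeft q l r).trans (postCorresp_padRight q _ r)

theorem postCorresp_nil_of_step_eq_none {q : S} {l r : List Γ} {a : Γ}
    (h : TM0.step M (config q.1 l (a :: r)) = none) :
    PostCorresp (MachinePair M S) (configWord q l (a :: r)) [] := by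
  have hM : M q a = none := by simpa [TM0.step, config] using h
  exact .trans (.of_pair_isRotated .copy (.halt hM) (.refl _) (.refl _)) (postCorresp_halted_nil _)

theorem exists_postCorresp_of_step (hS : TM0.Supports M S) {q : S} {l r : List Γ} {a c : Γ}
    {x : TM0.Cfg Γ Λ} (hx : x ∈ TM0.step M (config q.1 (c :: l) (a :: r))) :
    ∃ (q' : S) (l' r' : List Γ), x = config q'.1 l' r' ∧
      PostCorresp (MachinePair M S) (configWord q (c :: l) (a :: r)) (configWord q' l' r') := by
  rcases hM : M q a with _ | ⟨q₁, s⟩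
  · simp [step_config_eq_none hM] at hx
  obtain ⟨q', rfl⟩ : ∃ q' : S, q'.1 = q₁ := ⟨⟨q₁, hS.2 hM q.2⟩, rfl⟩
  rcases s with (_ | _) | b
  · rw [step_config_left hM, Option.mem_some_iff] at hx
    exact ⟨q', l, c :: a :: r, hx.symm, .of_pair_isRotated .copy (.left c hM)
      (configWord_isRotated_left q c l (a :: r)) (.refl _)⟩
  · rw [step_config_right hM, Option.mem_some_iff] at hx
    exact ⟨q', a :: c :: l, r, hx.symm, .of_pair_isRotated .copy (.right hM) (.refl _)
      (configWord_isRotated_left q' a (c :: l) r).symm⟩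
  · rw [step_config_write hM, Option.mem_some_iff] at hx
    exact ⟨q', c :: l, b :: r, hx.symm,
      .of_pair_isRotated .copy (.write hM) (.refl _) (.refl _)⟩

theorem postCorresp_nil_of_reaches (hS : TM0.Supports M S) {x y : TM0.Cfg Γ Λ}
    (hxy : StateTransition.Reaches (TM0.step M) x y) (hy : TM0.step M y = none) {q : S}
    {l r : List Γ} (hx : x = config q.1 l r) :
    PostCorresp (MachinePair M S) (configWord q l r) [] := by
  induction hxy using Relation.ReflTransGen.head_induction_on generalizing q l r with
  | refl =>
    obtain ⟨c, l', a, r', hpad, hcorr⟩ := exists_cons_postCorresp M q l r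
    rw [hx, hpad] at hy
    exact hcorr.trans (postCorresp_nil_of_step_eq_none hy)
  | head hstep _ ih =>
    obtain ⟨c, l', a, r', hpad, hcorr⟩ := exists_cons_postCorresp M q l r
    rw [hx, hpad] at hstep
    obtain ⟨q', l'', r'', hx', hcorr'⟩ := exists_postCorresp_of_step hS hstep
    exact (hcorr.trans hcorr').trans (ih hx')

/-! ### Correspondences yield halting computations -/

theorem Encodes.machinePair {lhs rhs u : List (Letter Γ S)} {x : TM0.Cfg Γ Λ}
    (h : Encodes (lhs ++ u) x) (hp : MachinePair M S lhs rhs) :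
    TM0.step M x = none ∨
      ∃ y, StateTransition.Reaches (TM0.step M) x y ∧ Encodes (u ++ rhs) y := by
  obtain ⟨hlen, q, l, r, rfl, hrot⟩ := h
  cases hp with
  | copy => exact .inr ⟨_, .refl, .of_isRotated hlen (by simp) hrot⟩
  | padRight =>
    obtain rfl := eq_of_edge_isRotated hrot
    rw [← config_append_default_right]
    exact .inr ⟨_, .refl, .of_isRotated hlen (by simp)
      (configWord_append_right_isRotated q l r default).symm⟩
  | padLeft =>
    obtain rfl := eq_of_edge_isRotated hrot
    rw [← config_append_default_left]
    exact .inr ⟨_, .refl, .of_isRotated hlen (by simp)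
      (configWord_append_left_isRotated q l r default).symm⟩
  | right hM =>
    obtain ⟨rfl, r', rfl, rfl⟩ := eq_of_state_cell_isRotated hrot
    exact .inr ⟨_, .single (step_config_right hM _ _),
      .of_isRotated hlen le_rfl (configWord_isRotated_left _ _ l r').symm⟩
  | left c hM =>
    obtain ⟨rfl, l', r', rfl, rfl, rfl⟩ := eq_of_cell_state_cell_isRotated hrot
    exact .inr ⟨_, .single (step_config_left hM _ _ _), .of_isRotated hlen le_rfl (.refl _)⟩
  | write hM =>
    obtain ⟨rfl, r', rfl, rfl⟩ := eq_of_state_cell_isRotated hrot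
    exact .inr ⟨_, .single (step_config_write hM _ _), .of_isRotated hlen le_rfl (.refl _)⟩
  | halt hM =>
    obtain ⟨rfl, r', rfl, -⟩ := eq_of_state_cell_isRotated hrot
    exact .inl (step_config_eq_none hM _ _)
  | erase | done => simpa [configWord] using hrot.mem_iff.1 List.mem_cons_self

theorem Encodes.eval_dom {w : List (Letter Γ S)} {x : TM0.Cfg Γ Λ} (h : Encodes w x)
    (hw : PostCorresp (MachinePair M S) w []) : (StateTransition.eval (TM0.step M) x).Dom := by
  obtain ⟨ps, hps, e⟩ := hw
  rw [List.append_nil] at e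
  induction ps generalizing w x with
  | nil =>
    obtain rfl : w = [] := by simpa using e
    simp [Encodes] at h
  | cons p ps ih =>
    obtain ⟨hp, hps⟩ := List.forall_mem_cons.1 hps
    rw [List.flatMap_cons, List.flatMap_cons] at e
    obtain ⟨u, rfl⟩ : p.1 <+: w := List.prefix_of_prefix_length_le ⟨_, e.symm⟩
      (List.prefix_append w _) (hp.length_le.1.trans h.1)
    rcases h.machinePair hp with hnone | ⟨y, hxy, hy⟩
    · exact Part.dom_iff_mem.2 ⟨x, StateTransition.mem_eval.2 ⟨.refl, hnone⟩⟩
    · rw [StateTransition.reaches_eval hxy]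
      exact ih hy hps (by simpa using e)

theorem postCorresp_configWord_iff (hS : TM0.Supports M S) (q : S) {l r : List Γ}
    (hlr : 0 < l.length + r.length) :
    PostCorresp (MachinePair M S) (configWord q l r) [] ↔
      (StateTransition.eval (TM0.step M) (config q.1 l r)).Dom := by
  constructor
  · exact Encodes.eval_dom ⟨by simp [configWord]; lia, q, l, r, rfl, .refl _⟩
  · intro h
    obtain ⟨y, hy⟩ := Part.dom_iff_mem.1 h
    obtain ⟨hreach, hnone⟩ := StateTransition.mem_eval.1 hy
    exact postCorresp_nil_of_reaches hS hreach hnone rfl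

end TuringMachine

/-! ### A Turing machine with undecidable halting problem on inputs `a b c ⋯ c` -/

section UndecidableHalting

open Nat.Partrec (Code)
open PartrecToTM2 (K' Γ' trNat trNum trPosNum trList)

theorem primrec_log_two : Primrec (Nat.log 2) := by
  have hpow : PrimrecRel fun n m : ℕ => 2 ^ m ≤ n :=
    Primrec.nat_le.comp
      ((Primrec₂.unpaired'.1 Nat.Primrec.pow).comp (Primrec.const 2) Primrec.snd) Primrec.fst
  refine (Primrec.nat_findGreatest Primrec.id hpow).of_eq fun n => ?_
  refine Nat.findGreatest_eq_iff.2 ⟨Nat.log_le_self 2 n, fun h => ?_, fun k hk _ => ?_⟩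
  · exact Nat.pow_log_le_self 2 (by rintro rfl; simp at h)
  · exact not_le.2 (Nat.lt_pow_of_log_lt one_lt_two hk)

theorem exists_toPartrec_code : ∃ c : ToPartrec.Code, ∀ m : ℕ,
    (c.eval [2 ^ m]).Dom ↔ (Code.eval (Denumerable.ofNat Code m) 0).Dom := by
  have hpart : Partrec fun n : ℕ => Code.eval (Denumerable.ofNat Code (Nat.log 2 n)) 0 :=
    Code.eval_part.comp ((Computable.ofNat Code).comp primrec_log_two.to_comp) (Computable.const 0)
  obtain ⟨c, hc⟩ := ToPartrec.Code.exists_code (Nat.Partrec'.part_iff₁.2 hpart)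
  refine ⟨c, fun m => ?_⟩
  have heval : c.eval [2 ^ m] =
      pure <$> Code.eval (Denumerable.ofNat Code (Nat.log 2 (2 ^ m))) 0 := hc ⟨[2 ^ m], rfl⟩
  rw [heval, Nat.log_pow one_lt_two]
  rfl

theorem exists_trPosNum_eq_replicate (m : ℕ) : ∃ p : PosNum, (p : ℕ) = 2 ^ m ∧
    trPosNum p = List.replicate m Γ'.bit0 ++ [Γ'.bit1] := by
  induction m with
  | zero => exact ⟨1, rfl, rfl⟩
  | succ m ih =>
    obtain ⟨p, hp, hp'⟩ := ih
    refine ⟨p.bit0, ?_, ?_⟩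
    · rw [PosNum.cast_bit0, hp, pow_succ, mul_two]
    · rw [trPosNum, hp', List.replicate_succ, List.cons_append]

theorem trNat_two_pow (m : ℕ) : trNat (2 ^ m) = List.replicate m Γ'.bit0 ++ [Γ'.bit1] := by
  obtain ⟨p, hp, hp'⟩ := exists_trPosNum_eq_replicate m
  rw [trNat, ← hp, PosNum.of_to_nat, trNum, hp']

theorem trInit_trList_two_pow :
    ∃ a b c : TM2to1.Γ' K' fun _ => Γ', ∀ m : ℕ,
      TM2to1.trInit K'.main (trList [2 ^ m]) = a :: b :: List.replicate m c := by
  let symbol (a : Γ') : ∀ _ : K', Option Γ' := Function.update (fun _ => none) K'.main (some a)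
  refine ⟨(true, symbol .cons), (false, symbol .bit1), (false, symbol .bit0), fun m => ?_⟩
  have hrev : (trList [2 ^ m]).reverse = Γ'.cons :: Γ'.bit1 :: List.replicate m Γ'.bit0 := by
    simp [trList, trNat_two_pow]
  unfold TM2to1.trInit
  rw [hrev]
  change (true, symbol .cons) :: (false, symbol .bit1) ::
    (List.replicate m Γ'.bit0).map (fun a => (false, symbol a)) = _
  rw [List.map_replicate]
  rfl

theorem tm2_eval_dom_iff (c : ToPartrec.Code) (v : List ℕ) :
    letI : Inhabited PartrecToTM2.Λ' := ⟨PartrecToTM2.trNormal c .halt⟩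
    (TM2.eval PartrecToTM2.tr K'.main (trList v)).Dom ↔ (c.eval v).Dom := by
  let : Inhabited PartrecToTM2.Λ' := ⟨PartrecToTM2.trNormal c .halt⟩
  have hinit : TM2.init K'.main (trList v) = PartrecToTM2.init c v := by
    unfold PartrecToTM2.init TM2.init
    congr 1
    funext k
    cases k <;> rfl
  have heval := PartrecToTM2.tr_eval c v
  rw [← hinit] at heval
  change (StateTransition.eval _ _).Dom ↔ _
  rw [heval]
  rfl

theorem exists_tm0_eval_dom_iff (c : ToPartrec.Code) :
    ∃ (Λ : Type) (_ : Inhabited Λ) (M : TM0.Machine (TM2to1.Γ' K' fun _ => Γ') Λ) (S : Set Λ),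
      Finite S ∧ TM0.Supports M S ∧
        ∀ v, (TM0.eval M (TM2to1.trInit K'.main (trList v))).Dom ↔ (c.eval v).Dom := by
  let : Inhabited PartrecToTM2.Λ' := ⟨PartrecToTM2.trNormal c .halt⟩
  have hsupp : TM2.Supports PartrecToTM2.tr (PartrecToTM2.codeSupp c .halt) :=
    PartrecToTM2.tr_supports c _
  refine ⟨_, inferInstance, TM1to0.tr (TM2to1.tr PartrecToTM2.tr), _, Finset.finite_toSet _,
    TM1to0.tr_supports _ (TM2to1.tr_supports PartrecToTM2.tr hsupp), fun v => ?_⟩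
  rw [TM1to0.tr_eval]
  exact (TM2to1.tr_eval_dom _ _ _).trans (tm2_eval_dom_iff c v)

theorem exists_turingMachine_halting_undecidable :
    ∃ (Γ Λ : Type) (_ : Inhabited Γ) (_ : Inhabited Λ) (M : TM0.Machine Γ Λ) (S : Set Λ)
      (a b c : Γ), Finite Γ ∧ Finite S ∧ TM0.Supports M S ∧
        ¬ ComputablePred fun m : ℕ => (TM0.eval M (a :: b :: List.replicate m c)).Dom := by
  obtain ⟨code, hcode⟩ := exists_toPartrec_code
  obtain ⟨Λ, _, M, S, hfin, hsupp, hM⟩ := exists_tm0_eval_dom_iff code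
  obtain ⟨a, b, c, habc⟩ := trInit_trList_two_pow
  refine ⟨_, Λ, inferInstance, _, M, S, a, b, c, ?_, hfin, hsupp, fun hcomp => ?_⟩
  · have : Fintype K' := ⟨{.main, .rev, .aux, .stack}, fun k => by cases k <;> simp⟩
    exact inferInstanceAs (Finite (Bool × (K' → Option Γ')))
  · refine ComputablePred.halting_problem 0
      (ComputablePred.computable_of_manyOneReducible ⟨_, Computable.encode, fun d => ?_⟩ hcomp)
    rw [← habc, hM, hcode, Denumerable.ofNat_encode]

theorem exists_postCorresp_undecidable :
    ∃ (α : Type) (_ : Finite α) (P : List (List α × List α)) (u v : List α) (a : α),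
      ¬ ComputablePred fun m : ℕ =>
        PostCorresp (fun l r => (l, r) ∈ P) (u ++ List.replicate m a ++ v) [] := by
  obtain ⟨Γ, Λ, _, _, M, S, a, b, c, _, _, hS, hM⟩ := exists_turingMachine_halting_undecidable
  have := Fintype.ofFinite Γ
  have := Fintype.ofFinite S
  let q₀ : S := ⟨default, hS.1⟩
  refine ⟨Letter Γ S, inferInstance, (finite_machinePairs M S).toFinset.toList,
    [.state q₀, .cell a, .cell b], [.edge], .cell c, fun hcomp => hM (hcomp.of_eq fun m => ?_)⟩
  have hword : configWord q₀ [] (a :: b :: List.replicate m c) =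
      [.state q₀, .cell a, .cell b] ++ List.replicate m (.cell c) ++ [.edge] := by
    simp [configWord]
  simp only [Finset.mem_toList, Set.Finite.mem_toFinset, Set.mem_ofPred_eq, ← hword]
  exact postCorresp_configWord_iff hS q₀ (by simp)

end UndecidableHalting

/-! ### Post correspondences as matrix games -/

section Numerals

variable {α : Type*} {n : ℕ} (e : α ↪ Fin n)

/-- The number whose digits in base `n + 2` are the letters of `w`, most significant first. The
digit `0` is not used, so that different words have different codes. -/
def wordCode (w : List α) : ℕ :=
  Nat.ofDigits (n + 2) (w.map fun a => (e a : ℕ) + 1).reverse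

@[simp]
theorem wordCode_nil : wordCode e [] = 0 := rfl

theorem wordCode_append (w w' : List α) :
    wordCode e (w ++ w') = (n + 2) ^ w'.length * wordCode e w + wordCode e w' := by
  simp [wordCode, Nat.ofDigits_append, add_comm]

theorem wordCode_injective : Function.Injective (wordCode e) := by
  intro w w' h
  have hdigits (w : List α) : (n + 2).digits (wordCode e w) =
      (w.map fun a => (e a : ℕ) + 1).reverse := by
    refine Nat.digits_ofDigits _ (by lia) _ (fun d hd => ?_) fun hne => ?_
    · obtain ⟨a, -, rfl⟩ := List.mem_map.1 (List.mem_reverse.1 hd)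
      lia
    · obtain ⟨a, -, ha⟩ := List.mem_map.1 (List.mem_reverse.1 (List.getLast_mem hne))
      lia
  have hinj : Function.Injective fun a => (e a : ℕ) + 1 :=
    (add_left_injective 1).comp (Fin.val_injective.comp e.injective)
  have hreverse := congrArg (Nat.digits (n + 2)) h
  rw [hdigits, hdigits, List.reverse_inj] at hreverse
  exact hinj.list_map hreverse

theorem primrec_wordCode_replicate (u v : List α) (a : α) :
    Primrec fun m : ℕ => wordCode e (u ++ List.replicate m a ++ v) := by
  have haffine (c d : ℕ) : Primrec fun x : ℕ => c * x + d :=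
    Primrec.nat_add.comp (Primrec.nat_mul.comp (Primrec.const c) Primrec.id) (Primrec.const d)
  have hreplicate : Primrec fun m : ℕ => wordCode e (u ++ List.replicate m a) := by
    refine (Primrec.nat_rec₁ (wordCode e u)
      ((haffine (n + 2) (wordCode e [a])).comp Primrec.snd).to₂).of_eq fun m => ?_
    induction m with
    | zero => simp
    | succ m ih =>
      rw [List.replicate_succ', ← List.append_assoc, wordCode_append, ← ih]
      simp
  refine ((haffine ((n + 2) ^ v.length) (wordCode e v)).comp hreplicate).of_eq fun m => ?_
  rw [wordCode_append e _ v]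

end Numerals

section Game

/-- The identity matrix, the only matrix available to Defender. It is not written `1`, which in
`MCode` denotes the matrix with all entries `1`. -/
def identityMatrix : MCode := Matrix.of.symm 1

theorem identityMatrix_mulVec (x : Fin 4 → ℤ) : Matrix.of identityMatrix *ᵥ x = x :=
  Matrix.one_mulVec x

theorem mgPos_identityMatrix (x : Fin 4 → ℤ) (st : List MCode → MCode) (k : ℕ) :
    mgPos x (fun _ => identityMatrix) st k =
      ((List.range k).map fun i => st (List.replicate (i + 1) identityMatrix)).foldl
        (fun y m => Matrix.of m *ᵥ y) x := by
  induction k with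
  | zero => rfl
  | succ k ih =>
    rw [mgPos, identityMatrix_mulVec, ih, List.map_const', List.length_range, List.range_succ,
      List.map_append, List.foldl_append]
    rfl

theorem attackerWins_identityMatrix_iff {A : List MCode} {x : Fin 4 → ℤ} :
    MGAttackerWins A [identityMatrix] x ↔
      ∃ ms ≠ [], (∀ m ∈ ms, m ∈ A) ∧ ms.foldl (fun y m => Matrix.of m *ᵥ y) x = x := by
  constructor
  · rintro ⟨st, hst, hwin⟩
    obtain ⟨n, hn⟩ := hwin (fun _ => identityMatrix) (by simp)
    refine ⟨_, by simp, fun m hm => ?_, mgPos_identityMatrix x st (n + 1) ▸ hn⟩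
    obtain ⟨i, -, rfl⟩ := List.mem_map.1 hm
    exact hst _ fun _ h => List.mem_singleton.2 (List.eq_of_mem_replicate h)
  · rintro ⟨ms, hne, hms, hx⟩
    refine ⟨fun hist => ms.getD (hist.length - 1) (ms.head hne), fun hist _ => ?_,
      fun δ hδ => ⟨ms.length - 1, ?_⟩⟩
    · simp only [List.getD_eq_getElem?_getD]
      rcases hget : ms[hist.length - 1]? with _ | m
      · exact hms _ (List.head_mem hne)
      · exact hms m (List.mem_of_getElem? hget)
    · obtain rfl : δ = fun _ => identityMatrix := funext fun i => List.mem_singleton.1 (hδ i)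
      have hplayed : ((List.range ms.length).map fun i => ms.getD i (ms.head hne)) = ms :=
        List.ext_getElem (by simp) (by simp +contextual)
      rw [Nat.sub_add_cancel (List.length_pos_of_ne_nil hne), mgPos_identityMatrix]
      simp only [List.length_replicate, Nat.add_sub_cancel, hplayed, hx]

variable {α : Type*} {n : ℕ} {e : α ↪ Fin n} {P : List (List α × List α)} {w : List α}

/-- The initial vector of the game: its last coordinate allows Attacker to apply `startMatrix`. -/
def idleVector : Fin 4 → ℤ := ![0, 0, 0, 1]

variable (e) in
/-- The vector holding the codes of two words that Attacker is building; the third coordinate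
provides the constant `1` needed to append letters. -/
def wordsVector (w₁ w₂ : List α) : Fin 4 → ℤ := ![wordCode e w₁, wordCode e w₂, 1, 0]

/-- The matrix of the move that begins the construction with a first word of code `z` and an empty
second word. -/
def startMatrix (z : ℤ) : MCode :=
  ![![0, 0, 0, z], ![0, 0, 0, 0], ![0, 0, 0, 1], ![0, 0, 0, 0]]

variable (e) in
/-- The matrix of the move that appends `p.2` to the first word and `p.1` to the second. -/
def pairMatrix (p : List α × List α) : MCode :=
  ![![(n + 2) ^ p.2.length, 0, wordCode e p.2, 0], ![0, (n + 2) ^ p.1.length, wordCode e p.1, 0],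
    ![0, 0, 1, 0], ![0, 0, 0, 0]]

/-- The matrix of the move that stops the construction and leads back to `idleVector` if the two
words agree. -/
def finishMatrix : MCode := ![![1, -1, 0, 0], ![0, 0, 0, 0], ![0, 0, 0, 0], ![0, 0, 1, 0]]

theorem startMatrix_mulVec (z : ℤ) (x : Fin 4 → ℤ) :
    Matrix.of (startMatrix z) *ᵥ x = ![z * x 3, 0, x 3, 0] := by
  funext i
  fin_cases i <;> simp [startMatrix, Matrix.mulVec, dotProduct, Fin.sum_univ_four]

theorem pairMatrix_mulVec (p : List α × List α) (x : Fin 4 → ℤ) :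
    Matrix.of (pairMatrix e p) *ᵥ x =
      ![(n + 2) ^ p.2.length * x 0 + wordCode e p.2 * x 2,
        (n + 2) ^ p.1.length * x 1 + wordCode e p.1 * x 2, x 2, 0] := by
  funext i
  fin_cases i <;> simp [pairMatrix, Matrix.mulVec, dotProduct, Fin.sum_univ_four]

theorem finishMatrix_mulVec (x : Fin 4 → ℤ) :
    Matrix.of finishMatrix *ᵥ x = ![x 0 - x 1, 0, 0, x 2] := by
  funext i
  fin_cases i <;> simp [finishMatrix, Matrix.mulVec, dotProduct, Fin.sum_univ_four, sub_eq_add_neg]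

theorem startMatrix_mulVec_idleVector :
    Matrix.of (startMatrix (wordCode e w)) *ᵥ idleVector = wordsVector e w [] := by
  rw [startMatrix_mulVec]
  simp [idleVector, wordsVector]

theorem pairMatrix_mulVec_wordsVector (p : List α × List α) (w w' : List α) :
    Matrix.of (pairMatrix e p) *ᵥ wordsVector e w w' = wordsVector e (w ++ p.2) (w' ++ p.1) := by
  rw [pairMatrix_mulVec]
  simp [wordsVector, wordCode_append]

theorem foldl_pairMatrix_wordsVector (ps : List (List α × List α)) (w w' : List α) :
    (ps.map (pairMatrix e)).foldl (fun y m => Matrix.of m *ᵥ y) (wordsVector e w w') =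
      wordsVector e (w ++ ps.flatMap Prod.snd) (w' ++ ps.flatMap Prod.fst) := by
  induction ps generalizing w w' with
  | nil => simp
  | cons p ps ih => simp [pairMatrix_mulVec_wordsVector, ih]

theorem finishMatrix_mulVec_wordsVector_eq_idleVector_iff {w w' : List α} :
    Matrix.of finishMatrix *ᵥ wordsVector e w w' = idleVector ↔ w = w' := by
  rw [finishMatrix_mulVec]
  simp [wordsVector, idleVector, sub_eq_zero, (wordCode_injective e).eq_iff]

variable (e P w) in
/-- Attacker's matrices in the game that simulates correspondences of `w` under the pairs `P`. -/
def attackerMatrices : List MCode :=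
  startMatrix (wordCode e w) :: finishMatrix :: P.map (pairMatrix e)

variable (e P w) in
/-- The vectors that occur in the game: a construction can start in `idle` vectors, is under way in
`building` vectors, and can never be completed or restarted from `dead` vectors. -/
inductive Reachable : (Fin 4 → ℤ) → Prop
  | idle (z : ℤ) : Reachable ![z, 0, 0, 1]
  | building (ps : List (List α × List α)) (hps : ∀ p ∈ ps, p ∈ P) :
      Reachable (wordsVector e (w ++ ps.flatMap Prod.snd) (ps.flatMap Prod.fst))
  | dead {x : Fin 4 → ℤ} (h₂ : x 2 = 0) (h₃ : x 3 = 0) : Reachable x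

namespace Reachable

theorem startMatrix_mulVec {x : Fin 4 → ℤ} (hx : Reachable e P w x) :
    Reachable e P w (Matrix.of (startMatrix (wordCode e w)) *ᵥ x) := by
  rw [MatrixGame.startMatrix_mulVec]
  cases hx with
  | idle z => simpa [wordsVector] using building (e := e) (P := P) (w := w) [] (by simp)
  | building => exact dead rfl rfl
  | dead h₂ h₃ => exact dead h₃ rfl

theorem pairMatrix_mulVec {x : Fin 4 → ℤ} {p : List α × List α} (hx : Reachable e P w x)
    (hp : p ∈ P) : Reachable e P w (Matrix.of (pairMatrix e p) *ᵥ x) := by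
  cases hx with
  | building ps hps =>
    have hps' : ∀ p' ∈ ps ++ [p], p' ∈ P := List.forall_mem_append.2 ⟨hps, by simpa using hp⟩
    simpa [pairMatrix_mulVec_wordsVector] using building (e := e) (w := w) (ps ++ [p]) hps'
  | idle => rw [MatrixGame.pairMatrix_mulVec]; exact dead rfl rfl
  | dead h₂ => rw [MatrixGame.pairMatrix_mulVec]; exact dead h₂ rfl

theorem finishMatrix_mulVec {x : Fin 4 → ℤ} (hx : Reachable e P w x) :
    Reachable e P w (Matrix.of finishMatrix *ᵥ x) := by
  rw [MatrixGame.finishMatrix_mulVec]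
  cases hx with
  | idle => exact dead rfl rfl
  | building => exact idle _
  | dead h₂ h₃ => exact dead rfl h₂

theorem mulVec {x : Fin 4 → ℤ} {m : MCode} (hx : Reachable e P w x)
    (hm : m ∈ attackerMatrices e P w) : Reachable e P w (Matrix.of m *ᵥ x) := by
  simp only [attackerMatrices, List.mem_cons, List.mem_map] at hm
  obtain rfl | rfl | ⟨p, hp, rfl⟩ := hm
  exacts [hx.startMatrix_mulVec, hx.finishMatrix_mulVec, hx.pairMatrix_mulVec hp]

theorem foldl_mulVec {x : Fin 4 → ℤ} {ms : List MCode} (hx : Reachable e P w x)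
    (hms : ∀ m ∈ ms, m ∈ attackerMatrices e P w) :
    Reachable e P w (ms.foldl (fun y m => Matrix.of m *ᵥ y) x) := by
  induction ms generalizing x with
  | nil => exact hx
  | cons m ms ih =>
    obtain ⟨hm, hms⟩ := List.forall_mem_cons.1 hms
    exact ih (hx.mulVec hm) hms

theorem postCorresp {x : Fin 4 → ℤ} {m : MCode} (hx : Reachable e P w x)
    (hm : m ∈ attackerMatrices e P w) (h : Matrix.of m *ᵥ x = idleVector) :
    PostCorresp (fun l r => (l, r) ∈ P) w [] := by
  simp only [attackerMatrices, List.mem_cons, List.mem_map] at hm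
  obtain rfl | rfl | ⟨p, -, rfl⟩ := hm
  · rw [MatrixGame.startMatrix_mulVec] at h
    simp [idleVector] at h
  · cases hx with
    | idle =>
      rw [MatrixGame.finishMatrix_mulVec] at h
      simp [idleVector] at h
    | building ps hps =>
      exact ⟨ps, hps, by
        rw [List.append_nil, finishMatrix_mulVec_wordsVector_eq_idleVector_iff.1 h]⟩
    | dead h₂ =>
      rw [MatrixGame.finishMatrix_mulVec] at h
      simp [idleVector, h₂] at h
  · rw [MatrixGame.pairMatrix_mulVec] at h
    simp [idleVector] at h

end Reachable

theorem attackerWins_iff_postCorresp :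
    MGAttackerWins (attackerMatrices e P w) [identityMatrix] idleVector ↔
      PostCorresp (fun l r => (l, r) ∈ P) w [] := by
  rw [attackerWins_identityMatrix_iff]
  constructor
  · rintro ⟨ms, hne, hms, h⟩
    obtain ⟨ms, m, rfl⟩ := (List.eq_nil_or_concat' ms).resolve_left hne
    obtain ⟨hms, hm⟩ := List.forall_mem_append.1 hms
    rw [List.foldl_concat] at h
    exact ((Reachable.idle 0).foldl_mulVec hms).postCorresp (hm m (by simp)) h
  · rintro ⟨ps, hps, heq⟩
    refine ⟨startMatrix (wordCode e w) :: (ps.map (pairMatrix e) ++ [finishMatrix]), by simp,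
      ?_, ?_⟩
    · refine List.forall_mem_cons.2 ⟨List.mem_cons_self, List.forall_mem_append.2 ⟨?_, ?_⟩⟩
      · exact List.forall_mem_map.2 fun p hp =>
          .tail _ (.tail _ (List.mem_map_of_mem (hps p hp)))
      · simp [attackerMatrices]
    · rw [List.foldl_cons, startMatrix_mulVec_idleVector, List.foldl_concat,
        foldl_pairMatrix_wordsVector, finishMatrix_mulVec_wordsVector_eq_idleVector_iff]
      simpa using heq

theorem primrec_intCast : Primrec fun n : ℕ => (n : ℤ) :=
  Primrec.encode_iff.1 <|
    (Primrec.nat_mul.comp (Primrec.const 2) Primrec.id).of_eq fun _ => rfl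

theorem primrec_startMatrix : Primrec startMatrix := by
  have hentry : Primrec fun p : (ℤ × Fin 4) × Fin 4 =>
      if p.2 = 3 then if p.1.2 = 0 then p.1.1 else if p.1.2 = 2 then 1 else 0 else (0 : ℤ) :=
    .ite (Primrec.eq.comp .snd (.const 3))
      (.ite (Primrec.eq.comp (.comp .snd .fst) (.const 0)) (.comp .fst .fst)
        (.ite (Primrec.eq.comp (.comp .snd .fst) (.const 2)) (.const 1) (.const 0)))
      (.const 0)
  refine Primrec.fin_curry.2 (Primrec.fin_curry.2 (hentry.of_eq fun ⟨⟨z, i⟩, j⟩ => ?_))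
  fin_cases i <;> fin_cases j <;> rfl

theorem computable_cons_instance (A D : List MCode) (x : Fin 4 → ℤ) :
    Computable fun m : MCode => ((m :: A, D, x) : MGInstance) :=
  ((Primrec.list_cons.comp .id (.const A)).pair (.const (D, x))).to_comp

end Game

end MatrixGame

open MatrixGame in
theorem matrix_game_dim4_undecidable_general : ∃ R : List MCode, ¬ ComputablePred fun M : MCode =>
    MGAttackerWins (M :: R) [identityMatrix] idleVector := by
  obtain ⟨α, _, P, u, v, a, hundec⟩ := exists_postCorresp_undecidable
  let e : α ↪ Fin (Nat.card α) := (Finite.equivFin α).toEmbedding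
  have hstart : Primrec fun m : ℕ => startMatrix (wordCode e (u ++ List.replicate m a ++ v)) :=
    primrec_startMatrix.comp (primrec_intCast.comp (primrec_wordCode_replicate e u v a))
  exact ⟨finishMatrix :: P.map (pairMatrix e), fun hcomp => hundec <|
    ComputablePred.computable_of_manyOneReducible
      ⟨_, hstart.to_comp, fun _ => attackerWins_iff_postCorresp.symm⟩ hcomp⟩

/-- It is undecidable whether Attacker has a winning strategy in the Matrix Game of
dimension four. -/
theorem matrix_game_dim4_undecidable :
    ¬ ComputablePred (fun inst : MGInstance =>
      MGAttackerWins inst.1 inst.2.1 inst.2.2) := by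
  obtain ⟨R, hR⟩ := matrix_game_dim4_undecidable_general
  exact fun hcomp => hR (ComputablePred.computable_of_manyOneReducible
    ⟨_, MatrixGame.computable_cons_instance R _ _, fun _ => .rfl⟩ hcomp)
end
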